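/- arXiv:2308.13120 — 4 statements merged into one kernel-verified Lean document; each statement's English description precedes it below -/
import Mathlib

section
/- (Auslander, Swan) Every polycyclic-by-finite group is linear: if Γ is polycyclic-by-finite, then there exist a natural number n and an injective group homomorphism from Γ into GL(n, ℤ). -/
/-!
A representation of `G` on `ℤⁿ` is built by climbing a chain of subgroups with infinite cyclic
quotients, keeping track of a subgroup `U` that acts unipotently; `GoodRep G U` says that a faithful
such representation exists. Inducing representations (`GoodRep.of_finiteIndex`) allows replacing the
group by a subgroup of finite index at any time, so it is enough to treat polycyclic groups.

A polycyclic group has a subgroup of finite index with a finite chain from `⊥` in which all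
quotients are infinite cyclic (`exists_zchain`). It also has one whose commutator subgroup is
nilpotent (`exists_nilpotent_commutator`): by the theorem of Lie–Kolchin–Maltsev
(`exists_unip_of_finite`) the commutator subgroup of a suitable subgroup of finite index acts
unipotently on every factor of the derived series. Both facts rest on the induction principle
`exists_finiteIndex_of_step`.

The heart of the proof is the extension step `GoodRep.step`, from `H` to `G = H ⋊ ⟨t⟩`. Given a
faithful representation `ρ` of `H`, let `Q` be a left ideal of the group ring `ℤH` that is invariant
under conjugation by `G`, on which `ρ` vanishes, and for which `ℤH ⧸ Q` is finitely generated. Then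
`G` acts on the finitely generated free module of linear functionals on `ℤH ⧸ Q`, where `H` acts by
translations and `t` by conjugation. This module contains the matrix coefficients of `ρ`, so `H`
acts faithfully; adding a unipotent `2 × 2` representation of `G/H ≅ ℤ` makes it faithful for `G`.
Such a `Q` exists if `N` acts unipotently under `ρ` and `[G, H] ≤ N` (`exists_invariant_ideal`): take
a high power of `ker ρ + I`, where `I` is the ideal generated by the elements `u - 1`, `u ∈ N`. It has
finite corank because powers of two-sided ideals of finite corank in a finitely generated algebra
have finite corank (`Cofin.sq`).

Starting from the trivial group, one first climbs to the nilpotent commutator subgroup `N` of `G`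
with all of `N` acting unipotently (`GoodRep.step_nilpotent`), and then from `N` to a subgroup of
finite index of `G`, keeping `N` unipotent (`GoodRep.step_abelian`).
-/

/-- A group is polycyclic if it is solvable and every subgroup is finitely generated. -/
def IsPolycyclic (G : Type*) [Group G] : Prop :=
  IsSolvable G ∧ ∀ H : Subgroup G, H.FG

/-- A group is polycyclic-by-finite if it has a polycyclic normal subgroup
of finite index. -/
def IsPolycyclicByFinite (G : Type*) [Group G] : Prop :=
  ∃ N : Subgroup G, N.Normal ∧ IsPolycyclic N ∧ Finite (G ⧸ N)


/-! ### Unipotent actions and faithful integral representations -/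

/-- The subset `U` acts unipotently on the abelian group `M`: there is a finite ascending filtration
`F 0 = ⊥ ≤ … ≤ F k = ⊤` such that `u - 1` maps `F (w + 1)` into `F w` for every `u ∈ U`. The action
`ρ` is a plain function, so that the notion applies to linear maps over any coefficient ring. -/
def Unip {G M : Type*} [AddCommGroup M] (ρ : G → M → M) (U : Set G) : Prop :=
  ∃ (k : ℕ) (F : ℕ → AddSubgroup M), F 0 = ⊥ ∧ (∀ w ≥ k, F w = ⊤) ∧
    ∀ u ∈ U, ∀ w, ∀ m ∈ F (w + 1), ρ u m - m ∈ F w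

/-- `G` has a faithful representation on some `ℤⁿ` in which the subgroup `U` acts unipotently. Values
in the endomorphism ring suffice: the image of a group homomorphism consists of units. -/
def GoodRep (G : Type*) [Group G] (U : Subgroup G) : Prop :=
  ∃ (n : ℕ) (ρ : G →* Module.End ℤ (Fin n → ℤ)), Function.Injective ρ ∧
    Unip (fun g m => ρ g m) (U : Set G)

/-- Unipotency is inherited along a `U`-equivariant map `f` into a unipotent action as soon
as `U` acts trivially on the kernel of `f`: pull the filtration back and put `⊥` below it. -/
theorem Unip.ext {G G' M M' : Type*} [AddCommGroup M] [AddCommGroup M']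
    {ρ : G → M → M} {ρ' : G' → M' → M'} {U : Set G} {U' : Set G'} (h : Unip ρ' U')
    (i : G → G') (hi : ∀ u ∈ U, i u ∈ U') (f : M →+ M')
    (hf : ∀ u ∈ U, ∀ m, f (ρ u m) = ρ' (i u) (f m))
    (hker : ∀ u ∈ U, ∀ m, f m = 0 → ρ u m = m) : Unip ρ U := by
  obtain ⟨k, F, h0, hk, hu⟩ := h
  refine ⟨k + 1, fun w => if w = 0 then ⊥ else (F (w - 1)).comap f, by simp, ?_, ?_⟩
  · intro w hw
    have : w ≠ 0 := by omega
    simp only [this, if_false]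
    rw [hk _ (by omega)]; rfl
  · intro u hU w m hm
    beta_reduce at hm ⊢
    rw [if_neg (by omega)] at hm
    simp only [Nat.add_sub_cancel, AddSubgroup.mem_comap] at hm
    rcases Nat.eq_zero_or_pos w with rfl | hw
    · rw [h0, AddSubgroup.mem_bot] at hm
      simp [hker u hU m hm]
    · rw [if_neg (by omega)]
      obtain ⟨v, rfl⟩ := Nat.exists_eq_add_of_le' hw
      simp only [Nat.add_sub_cancel, AddSubgroup.mem_comap, map_sub, hf u hU]
      exact hu _ (hi u hU) v _ hm

theorem Unip.prod {G M M' : Type*} [AddCommGroup M] [AddCommGroup M']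
    {ρ : G → M → M} {ρ' : G → M' → M'} {U : Set G} (h : Unip ρ U) (h' : Unip ρ' U) :
    Unip (fun g (m : M × M') => (ρ g m.1, ρ' g m.2)) U := by
  obtain ⟨k, F, h0, hk, hu⟩ := h
  obtain ⟨k', F', h0', hk', hu'⟩ := h'
  refine ⟨max k k', fun w => (F w).prod (F' w), ?_, ?_, ?_⟩
  · simp [h0, h0']
  · intro w hw
    simp only [hk w (le_trans (le_max_left _ _) hw), hk' w (le_trans (le_max_right _ _) hw)]
    exact AddSubgroup.top_prod_top
  · intro u hU w m hm
    exact ⟨hu u hU w _ hm.1, hu' u hU w _ hm.2⟩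

theorem GoodRep.of_module {G M : Type*} [Group G] (U : Subgroup G) [AddCommGroup M]
    [Module.Finite ℤ M] [Module.Free ℤ M] (ρ : G →* Module.End ℤ M)
    (hρ : Function.Injective ρ) (hU : Unip (fun g m => ρ g m) (U : Set G)) : GoodRep G U := by
  let e := (Module.finBasis ℤ M).equivFun
  refine ⟨_, (e.conjRingEquiv.toMonoidHom).comp ρ, ?_, ?_⟩
  · exact e.conjRingEquiv.injective.comp hρ
  · refine hU.ext id (fun u hu => hu) e.symm.toAddMonoidHom ?_ ?_
    · intro u _ m
      simp
    · intro u _ m hm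
      have : m = 0 := by simpa using hm
      simp [this]

theorem GoodRep.comap {G G' : Type*} [Group G] [Group G'] {U : Subgroup G} (h : GoodRep G U)
    (f : G' →* G) (hf : Function.Injective f) {U' : Subgroup G'} (hU : ∀ u ∈ U', f u ∈ U) :
    GoodRep G' U' := by
  obtain ⟨n, ρ, hρ, hu⟩ := h
  exact ⟨n, ρ.comp f, hρ.comp hf, hu.ext f hU (AddMonoidHom.id _) (by simp) (by
    rintro u hu m h; simp at h; simp [h])⟩

theorem unip_bot {G M : Type*} [Group G] [AddCommGroup M] [Module ℤ M] (ρ : G →* Module.End ℤ M) :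
    Unip (fun g m => ρ g m) ((⊥ : Subgroup G) : Set G) := by
  refine ⟨1, fun w => if w = 0 then ⊥ else ⊤, by simp, ?_, ?_⟩
  · intro w hw; simp [show w ≠ 0 by omega]
  · intro u hu w m _
    have : u = 1 := by simpa using hu
    simp [this, zero_mem]

/-- A faithful representation of a subgroup of finite index induces a faithful representation of
the whole group. The induced module is the space `W` of `H`-equivariant functions on `G`; a trivial
summand `ℤ` is added to `ρ` beforehand, so that the induced representation also separates the
elements outside `H` from `1` when `n = 0`. -/
theorem GoodRep.of_finiteIndex {G : Type*} [Group G] (H : Subgroup G) [H.FiniteIndex]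
    {U : Subgroup H} (h : GoodRep H U) : GoodRep G ⊥ := by
  obtain ⟨n, ρ, hρ, -⟩ := h
  let σ : H →* Module.End ℤ ((Fin n → ℤ) × ℤ) :=
    { toFun := fun h => (ρ h).prodMap LinearMap.id
      map_one' := by ext <;> simp
      map_mul' := by intro a b; ext <;> simp }
  let W : Submodule ℤ (G → (Fin n → ℤ) × ℤ) :=
    { carrier := {f | ∀ (h : H) x, f (h * x) = σ h (f x)}
      add_mem' := by intro a b ha hb h x; simp [ha h x, hb h x]
      zero_mem' := by intro h x; simp
      smul_mem' := by intro c a ha h x; change c • a (h * x) = σ h (c • a x); rw [ha h x, map_zsmul] }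
  let τ : G →* Module.End ℤ W :=
    { toFun := fun g =>
        { toFun := fun f => ⟨fun x => f.1 (x * g), fun h x => by
            change f.1 (h * x * g) = _
            rw [mul_assoc]; exact f.2 h _⟩
          map_add' := fun a b => rfl
          map_smul' := fun a b => rfl }
      map_one' := by ext f : 2; funext x; simp
      map_mul' := by intro a b; ext f : 2; funext x; simp [mul_assoc] }
  -- a function in `W` is determined by its values on representatives of the right cosets
  let Q := Quotient (QuotientGroup.rightRel H)
  have : Finite Q := by
    have : Finite (G ⧸ H) := inferInstance
    exact Finite.of_equiv _ (QuotientGroup.quotientRightRelEquivQuotientLeftRel H).symm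
  let res : W →ₗ[ℤ] (Q → (Fin n → ℤ) × ℤ) :=
    { toFun := fun f q => f.1 q.out
      map_add' := fun a b => rfl
      map_smul' := fun a b => rfl }
  have hres : Function.Injective res := by
    intro f f' hff
    ext1; funext x
    let q : Q := Quotient.mk'' x
    have h1 : (QuotientGroup.rightRel H) q.out x := Quotient.exact (by simp [q])
    rw [QuotientGroup.rightRel_apply] at h1
    have h2 : x = (⟨_, h1⟩ : H) * q.out := by simp
    have h3 : f.1 q.out = f'.1 q.out := congrFun hff q
    rw [h2, f.2, f'.2, h3]
  have : Module.Finite ℤ W := Module.Finite.of_injective res hres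
  have : Module.Free ℤ W := inferInstance
  refine GoodRep.of_module ⊥ τ ?_ (unip_bot τ)
  rw [injective_iff_map_eq_one]
  intro g hg
  classical
  have key : ∀ m, ∃ f ∈ W, (∀ h : H, f h = σ h m) ∧ ∀ x ∉ H, f x = 0 := by
    intro m
    refine ⟨fun x => if hx : x ∈ H then σ ⟨x, hx⟩ m else 0, ?_, ?_, ?_⟩
    · intro h x
      by_cases hx : x ∈ H
      · have : (h : G) * x ∈ H := H.mul_mem h.2 hx
        simp only [hx, this, dif_pos]
        rw [← Module.End.mul_apply, ← map_mul]; rfl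
      · have : (h : G) * x ∉ H := fun h' => hx ((H.mul_mem_cancel_left h.2).1 h')
        simp [hx, this]
    · intro h; simp
    · intro x hx; simp [hx]
  have hfix : ∀ f ∈ W, f g = f 1 := by
    intro f hf
    have := congrArg (fun φ : Module.End ℤ W => (φ ⟨f, hf⟩).1 1) hg
    simpa [τ] using this
  have hgH : g ∈ H := by
    by_contra hgH
    obtain ⟨f, hf, hf1, hf2⟩ := key (0, 1)
    have := hfix f hf
    rw [hf2 g hgH, show (1 : G) = ((1 : H) : G) from rfl, hf1, map_one] at this
    simp [Prod.ext_iff] at this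
  have : (⟨g, hgH⟩ : H) = 1 := by
    apply hρ
    ext1 m
    ext1
    obtain ⟨f, hf, hf1, hf2⟩ := key (Pi.single m 1, 0)
    have := hfix f hf
    rw [show g = ((⟨g, hgH⟩ : H) : G) from rfl, hf1, show (1 : G) = ((1 : H) : G) from rfl, hf1] at this
    have := congrArg Prod.fst this
    simpa [σ] using this
  simpa using congrArg Subtype.val this

theorem GoodRep.linear {G : Type*} [Group G] {U : Subgroup G} (h : GoodRep G U) :
    ∃ (n : ℕ) (φ : G →* Matrix.GeneralLinearGroup (Fin n) ℤ), Function.Injective φ := by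
  obtain ⟨n, ρ, hρ, -⟩ := h
  let e : Module.End ℤ (Fin n → ℤ) →* Matrix (Fin n) (Fin n) ℤ :=
    (LinearMap.toMatrixAlgEquiv' (R := ℤ) (n := Fin n)).toMonoidHom
  have he : Function.Injective e := (LinearMap.toMatrixAlgEquiv' (R := ℤ) (n := Fin n)).injective
  refine ⟨n, (e.comp ρ).toHomUnits, fun a b hab => ?_⟩
  exact hρ (he (congrArg Units.val hab))

/-! ### Submodules of finite corank -/

/-- `P` has finite corank, i.e. the quotient `A ⧸ P` is finitely generated. This is stated by means
of a finitely generated `M` with `P + M = A`. -/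
def Cofin {R A : Type*} [CommRing R] [AddCommGroup A] [Module R A] (P : Submodule R A) : Prop :=
  ∃ M : Submodule R A, M.FG ∧ P ⊔ M = ⊤

theorem Cofin.mono {R A : Type*} [CommRing R] [AddCommGroup A] [Module R A] {P Q : Submodule R A}
    (h : Cofin P) (hPQ : P ≤ Q) : Cofin Q := by
  obtain ⟨M, hM, h⟩ := h
  exact ⟨M, hM, top_le_iff.1 (h ▸ sup_le_sup_right hPQ M)⟩

theorem cofin_ker {R A B : Type*} [CommRing R] [AddCommGroup A] [Module R A] [AddCommGroup B]
    [Module R B] [IsNoetherian R B] (f : A →ₗ[R] B) : Cofin (LinearMap.ker f) := by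
  obtain ⟨s, hs⟩ := IsNoetherian.noetherian (LinearMap.range f)
  have : ∀ b ∈ s, ∃ a, f a = b := by
    intro b hb
    have : b ∈ LinearMap.range f := hs ▸ Submodule.subset_span hb
    exact this
  choose! g hg using this
  classical
  refine ⟨Submodule.span R (s.image g), ⟨s.image g, rfl⟩, ?_⟩
  rw [sup_comm, ← Submodule.comap_map_eq, Submodule.map_span, Finset.coe_image, ← Set.image_comp,
    eq_top_iff]
  intro a _
  rw [Submodule.mem_comap]
  have : (⇑f ∘ g) '' (s : Set B) = s := by
    ext b; constructor
    · rintro ⟨c, hc, rfl⟩; simpa [hg c hc] using hc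
    · intro hb; exact ⟨b, hb, hg b hb⟩
  rw [this, hs]
  exact ⟨a, rfl⟩

section
variable {R A : Type*} [CommRing R] [Ring A] [Algebra R A]

/-- In a finitely generated algebra the square of a two-sided ideal `P` of finite corank has finite
corank. Choose a finitely generated `M` containing `1` and the algebra generators with `P + M = A`.
Multiplication in `M` is closed up to a finitely generated `E ≤ P`, whence `A = M + A E A`, and
`A E A = (P + M) E (P + M) ≤ P² + M E M`. -/
theorem Cofin.sq [hA : Algebra.FiniteType R A] {P : Submodule R A} (h : Cofin P)
    (hl : ⊤ * P ≤ P) (hr : P * ⊤ ≤ P) : Cofin (P ^ 2) := by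
  obtain ⟨M₀, hM₀, hPM₀⟩ := h
  obtain ⟨S, hS⟩ := hA.out
  let M : Submodule R A := M₀ ⊔ Submodule.span R S ⊔ Submodule.span R {1}
  have hM : M.FG := (hM₀.sup (Submodule.fg_span S.finite_toSet)).sup (Submodule.fg_span (by simp))
  have hPM : P ⊔ M = ⊤ := top_le_iff.1 (hPM₀ ▸ sup_le_sup_left
    (le_sup_left.trans le_sup_left) P)
  have h1M : (1 : A) ∈ M := Submodule.mem_sup_right (Submodule.subset_span rfl)
  have hSM : ∀ s ∈ S, s ∈ M := fun s hs =>
    Submodule.mem_sup_left (Submodule.mem_sup_right (Submodule.subset_span hs))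
  -- products of elements of `M` lie in `M + E` for a finitely generated `E ≤ P`
  obtain ⟨E, hE, hEP, hME⟩ : ∃ E : Submodule R A, E.FG ∧ E ≤ P ∧ M * M ≤ M ⊔ E := by
    obtain ⟨T, hT⟩ := hM.mul hM
    have : ∀ x ∈ T, ∃ p ∈ P, x - p ∈ M := by
      intro x _
      obtain ⟨p, hp, m, hm, rfl⟩ := Submodule.mem_sup.1 (show x ∈ P ⊔ M from hPM ▸ trivial)
      exact ⟨p, hp, by simpa using hm⟩
    choose! p hp hpM using this
    classical
    refine ⟨Submodule.span R (T.image p), ⟨_, rfl⟩, ?_, ?_⟩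
    · rw [Submodule.span_le]
      intro x hx
      obtain ⟨y, hy, rfl⟩ := Finset.mem_image.1 hx
      exact hp y hy
    · rw [← hT, Submodule.span_le]
      intro x hx
      have := Submodule.add_mem_sup (hpM x hx)
        (Submodule.subset_span (R := R) (Finset.mem_image_of_mem p hx))
      simpa using this
  have hW : M ⊔ ⊤ * E * ⊤ = ⊤ := by
    set W := M ⊔ ⊤ * E * ⊤ with hWdef
    have hsW : ∀ s ∈ S, ∀ w ∈ W, s * w ∈ W := by
      intro s hs w hw
      obtain ⟨m, hm, e, he, rfl⟩ := Submodule.mem_sup.1 hw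
      rw [mul_add]
      refine W.add_mem ?_ ?_
      · have h2 := hME (Submodule.mul_mem_mul (hSM s hs) hm)
        have hEW : M ⊔ E ≤ W := by
          refine sup_le_sup_left ?_ M
          intro e he
          have := Submodule.mul_mem_mul (Submodule.mul_mem_mul
            (Submodule.mem_top (x := (1 : A)) (R := R)) he) (Submodule.mem_top (x := (1 : A)) (R := R))
          simpa using this
        exact hEW h2
      · refine Submodule.mem_sup_right ?_
        have : s * e ∈ ⊤ * (⊤ * E * ⊤) := Submodule.mul_mem_mul (Submodule.mem_top (R := R)) he
        rw [← mul_assoc, ← mul_assoc] at this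
        have h3 : (⊤ : Submodule R A) * ⊤ * E * ⊤ ≤ ⊤ * E * ⊤ :=
          mul_le_mul' (mul_le_mul' le_top le_rfl) le_rfl
        exact h3 this
    let B : Subalgebra R A :=
      { carrier := {a | ∀ w ∈ W, a * w ∈ W}
        mul_mem' := by intro a b ha hb w hw; rw [mul_assoc]; exact ha _ (hb _ hw)
        add_mem' := by intro a b ha hb w hw; rw [add_mul]; exact W.add_mem (ha _ hw) (hb _ hw)
        algebraMap_mem' := by
          intro r w hw; rw [← Algebra.smul_def]; exact W.smul_mem r hw }
    have hB : Algebra.adjoin R (S : Set A) ≤ B := Algebra.adjoin_le hsW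
    rw [eq_top_iff]
    intro a _
    have : a ∈ B := hB (hS ▸ trivial)
    simpa using this 1 (Submodule.mem_sup_left h1M)
  refine ⟨M ⊔ M * E * M, hM.sup ((hM.mul hE).mul hM), ?_⟩
  rw [eq_top_iff]
  have hEE : ⊤ * E * ⊤ ≤ P ^ 2 ⊔ M * E * M := by
    have hPE : P * E ≤ P ^ 2 := by rw [pow_two]; exact mul_le_mul' le_rfl hEP
    have hPPT : P ^ 2 * ⊤ ≤ P ^ 2 := by
      rw [pow_two, mul_assoc]; exact mul_le_mul' le_rfl hr
    have hMEP : M * E * P ≤ P ^ 2 := by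
      rw [pow_two]
      refine mul_le_mul' ?_ le_rfl
      exact (mul_le_mul' le_top hEP).trans hl
    have h1 : (⊤ : Submodule R A) * E * ⊤ = P * E * ⊤ ⊔ (M * E * P ⊔ M * E * M) := by
      rw [← Submodule.mul_sup, hPM, ← Submodule.sup_mul, ← Submodule.sup_mul, hPM]
    rw [h1]
    refine sup_le ?_ (sup_le_sup_right hMEP _)
    exact le_trans ((mul_le_mul' hPE le_rfl).trans hPPT) le_sup_left
  rw [← hW]
  refine sup_le (le_sup_left.trans le_sup_right) (hEE.trans ?_)
  exact sup_le_sup_left le_sup_right _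

theorem ideal_pow {P : Submodule R A} (hl : ⊤ * P ≤ P) (hr : P * ⊤ ≤ P) {n : ℕ} (hn : n ≠ 0) :
    ⊤ * P ^ n ≤ P ^ n ∧ P ^ n * ⊤ ≤ P ^ n := by
  obtain ⟨m, rfl⟩ := Nat.exists_eq_succ_of_ne_zero hn
  constructor
  · rw [Nat.succ_eq_add_one, pow_succ', ← mul_assoc]; exact mul_le_mul' hl le_rfl
  · rw [Nat.succ_eq_add_one, pow_succ, mul_assoc]; exact mul_le_mul' le_rfl hr

theorem Cofin.pow [hA : Algebra.FiniteType R A] {P : Submodule R A} (h : Cofin P)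
    (hl : ⊤ * P ≤ P) (hr : P * ⊤ ≤ P) (j : ℕ) : Cofin (P ^ (2 ^ j)) := by
  induction j with
  | zero => simpa using h
  | succ j ih =>
    rw [pow_succ, pow_mul]
    have := ideal_pow hl hr (n := 2 ^ j) (by positivity)
    exact ih.sq this.1 this.2

theorem sup_pow_le {K X : Submodule R A} (hl : ⊤ * K ≤ K) (hr : K * ⊤ ≤ K) (n : ℕ) :
    (K ⊔ X) ^ n ≤ K ⊔ X ^ n := by
  induction n with
  | zero => simp
  | succ n ih =>
    rw [pow_succ, pow_succ]
    refine (mul_le_mul' ih le_rfl).trans ?_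
    rw [Submodule.sup_mul, Submodule.mul_sup (X ^ n)]
    refine sup_le ((mul_le_mul' le_rfl le_top).trans (hr.trans le_sup_left)) ?_
    refine sup_le_sup_right ((mul_le_mul' le_top le_rfl).trans hl) _

end

/-! ### Extending a representation by an infinite cyclic group -/

open MonoidAlgebra in
/-- The linear extension of a function on `H` to the group ring. -/
noncomputable def linExt {H : Type*} (f : H → ℤ) : MonoidAlgebra ℤ H →ₗ[ℤ] ℤ :=
  (Finsupp.linearCombination ℤ f).comp (MonoidAlgebra.coeffLinearEquiv ℤ).toLinearMap

theorem linExt_of {H : Type*} [Monoid H] (f : H → ℤ) (h : H) :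
    linExt f (MonoidAlgebra.of ℤ H h) = f h := by
  simp [linExt]

theorem monoidAlgebra_hom_ext {H N : Type*} [Monoid H] [AddCommGroup N]
    {f g : MonoidAlgebra ℤ H →ₗ[ℤ] N}
    (h : ∀ x, f (MonoidAlgebra.of ℤ H x) = g (MonoidAlgebra.of ℤ H x)) (a : MonoidAlgebra ℤ H) :
    f a = g a := by
  induction a using MonoidAlgebra.induction_on with
  | of m => exact h m
  | add x y hx hy => rw [map_add, map_add, hx, hy]
  | smul r x hx => rw [map_smul, map_smul, hx]

/-- The automorphism `h ↦ g h g⁻¹` of a normal subgroup, extended to its group ring. -/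
noncomputable def conjA {G : Type*} [Group G] {H : Subgroup G} [H.Normal] (g : G) :
    MonoidAlgebra ℤ H →ₐ[ℤ] MonoidAlgebra ℤ H :=
  MonoidAlgebra.mapDomainAlgHom ℤ ℤ (MulAut.conjNormal g : MulAut H).toMonoidHom

theorem conjA_of {G : Type*} [Group G] {H : Subgroup G} [H.Normal] (g : G) (h : H) :
    conjA g (MonoidAlgebra.of ℤ H h) = MonoidAlgebra.of ℤ H (MulAut.conjNormal g h) := by
  simp [conjA]

/-- The extension step. Let `G = H ⋊ ⟨t⟩` with `t` of infinite order, let `ρ` be a faithful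
representation of `H` on `ℤⁿ`, and let `Q` be a `G`-invariant left ideal of finite corank of `ℤH` on
which `ρ` vanishes. The module `V` of functions `f` on `G` that are invariant under right
translation by `t` and whose restriction to `H`, extended linearly, vanishes on `Q` is finitely
generated and free over `ℤ`, and `G` acts on it by left translation. It contains the matrix
coefficients of `ρ`, so `H` acts faithfully; the unipotent `2 × 2` representation `ω` of `G/H ≅ ℤ`
takes care of the remaining elements.

A descending filtration `J` of `ℤH` that reaches `Q` and is shifted by `u - 1` for every `u ∈ U`
(where `h t^k` acts on `ℤH` by `a ↦ h · (t^k a t^(-k))`) dualizes to a filtration of `V` that shows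
that `U` acts unipotently. -/
theorem GoodRep.step {G : Type*} [Group G] (H : Subgroup G) [H.Normal] (t : G)
    (hgen : ∀ g : G, ∃ (h : H) (k : ℤ), g = h * t ^ k) (hinf : ∀ k : ℤ, t ^ k ∈ H → k = 0)
    {n : ℕ} (ρ : H →* Module.End ℤ (Fin n → ℤ)) (hρ : Function.Injective ρ)
    (Q : Submodule ℤ (MonoidAlgebra ℤ H)) (hQfin : Cofin Q) (hQl : ⊤ * Q ≤ Q)
    (hQc : ∀ g : G, ∀ a ∈ Q, conjA g a ∈ Q)
    (hQK : ∀ a ∈ Q, MonoidAlgebra.lift ℤ _ H ρ a = 0)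
    (U : Subgroup G) (J : ℕ → Submodule ℤ (MonoidAlgebra ℤ H)) (hJ0 : J 0 = ⊤) (q : ℕ)
    (hJ : ∀ w ≥ q, J w ≤ Q)
    (hJU : ∀ (h : H) (k : ℤ), ↑h * t ^ k ∈ U → ∀ w, ∀ a ∈ J w,
      MonoidAlgebra.of ℤ H h * conjA (t ^ k) a - a ∈ J (w + 1)) : GoodRep G U := by
  choose r c hrc using hgen
  have huniq : ∀ (h h' : H) (k k' : ℤ), (h : G) * t ^ k = h' * t ^ k' → h = h' ∧ k = k' := by
    intro h h' k k' e
    have h1 : t ^ (k - k') ∈ H := by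
      have : t ^ (k - k') = ((h⁻¹ * h' : H) : G) := by
        rw [zpow_sub, mul_inv_eq_iff_eq_mul]
        simp [mul_assoc, ← e]
      rw [this]; exact Subtype.prop _
    have h2 : k = k' := by linarith [hinf _ h1]
    subst h2
    exact ⟨Subtype.ext (mul_right_cancel e), rfl⟩
  have hr : ∀ (h : H) (k : ℤ), r (h * t ^ k) = h := fun h k =>
    (huniq _ _ _ _ (hrc (h * t ^ k))).1.symm
  have hcc : ∀ (h : H) (k : ℤ), c (h * t ^ k) = k := fun h k =>
    (huniq _ _ _ _ (hrc (h * t ^ k))).2.symm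
  have hc_mul : ∀ g g', c (g * g') = c g + c g' := by
    intro g g'
    have : g * g' = ((r g * MulAut.conjNormal (t ^ c g) (r g') : H) : G) * t ^ (c g + c g') := by
      conv_lhs => rw [hrc g, hrc g']
      rw [Subgroup.coe_mul, MulAut.conjNormal_apply, zpow_add]
      group
    rw [this, hcc]
  have hc_one : c 1 = 0 := by simpa using hcc 1 0
  -- `r g ∈ H` and `c g ∈ ℤ` are the components of `g = r g * t ^ c g`
  let V : Submodule ℤ (G → ℤ) :=
    { carrier := {f | (∀ x, f (x * t) = f x) ∧ ∀ a ∈ Q, linExt (fun h : H => f h) a = 0}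
      add_mem' := by
        rintro f f' ⟨h1, h2⟩ ⟨h1', h2'⟩
        refine ⟨fun x => by simp [h1, h1'], fun a ha => ?_⟩
        have : ∀ a, linExt (fun h : H => (f + f') h) a =
            (linExt (fun h : H => f h) + linExt (fun h : H => f' h)) a :=
          monoidAlgebra_hom_ext (fun x => by simp [linExt])
        rw [this, LinearMap.add_apply, h2 a ha, h2' a ha, add_zero]
      zero_mem' := by
        refine ⟨fun x => rfl, fun a ha => ?_⟩
        have : ∀ a, linExt (fun h : H => (0 : G → ℤ) h) a =
            (0 : MonoidAlgebra ℤ H →ₗ[ℤ] ℤ) a :=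
          monoidAlgebra_hom_ext (fun x => by simp [linExt])
        rw [this]; rfl
      smul_mem' := by
        rintro z f ⟨h1, h2⟩
        refine ⟨fun x => by simp [h1], fun a ha => ?_⟩
        have : ∀ a, linExt (fun h : H => (z • f) h) a =
            (z • linExt (fun h : H => f h)) a :=
          monoidAlgebra_hom_ext (fun x => by simp [linExt])
        rw [this, LinearMap.smul_apply, h2 a ha, smul_zero] }
  have hVz : ∀ f ∈ V, ∀ x (k : ℤ), f (x * t ^ k) = f x := by
    intro f hf x k
    induction k using Int.induction_on generalizing x with
    | zero => simp
    | succ k ih => rw [zpow_add, zpow_one, ← mul_assoc, hf.1, ih]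
    | pred k ih =>
      rw [← hf.1, mul_assoc, ← zpow_add_one, sub_add_cancel, ih]
  -- for `x ∈ H` and `g = r(g) t^c`, `g x = r(g) (t^c x t^(-c)) t^c`, and `f` ignores the last factor
  have htr : ∀ f ∈ V, ∀ g a, linExt (fun h : H => f (g * h)) a =
      linExt (fun h : H => f h) (MonoidAlgebra.of ℤ H (r g) * conjA (t ^ c g) a) := by
    intro f hf g
    refine monoidAlgebra_hom_ext
      (g := (linExt (fun h : H => f h)).comp ((LinearMap.mulLeft ℤ (MonoidAlgebra.of ℤ H (r g))).comp
        (conjA (t ^ c g)).toLinearMap)) (fun x => ?_)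
    rw [LinearMap.comp_apply, LinearMap.comp_apply, AlgHom.toLinearMap_apply, conjA_of,
      LinearMap.mulLeft_apply, ← map_mul, linExt_of, linExt_of]
    conv_lhs => rw [hrc g]
    refine Eq.trans ?_ (hVz f hf _ (c g))
    rw [Subgroup.coe_mul, MulAut.conjNormal_apply]
    congr 1
    group
  let τ : G →* Module.End ℤ V :=
    { toFun := fun g =>
        { toFun := fun f => ⟨fun x => f.1 (g⁻¹ * x), fun x => by
            change f.1 (g⁻¹ * (x * t)) = _
            rw [← mul_assoc]; exact f.2.1 _, fun a ha => by
            change linExt (fun h : H => f.1 (g⁻¹ * h)) a = 0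
            rw [htr _ f.2]
            exact f.2.2 _ (hQl (Submodule.mul_mem_mul Submodule.mem_top (hQc _ _ ha)))⟩
          map_add' := fun a b => rfl
          map_smul' := fun a b => rfl }
      map_one' := by ext f : 2; funext x; simp
      map_mul' := by intro a b; ext f : 2; funext x; simp [mul_assoc] }
  have hVH : ∀ f ∈ V, (∀ h : H, f h = 0) → f = 0 := by
    intro f hf h0
    funext x
    rw [hrc x, hVz f hf, h0]; rfl
  have hVfin : Module.Finite ℤ V := by
    obtain ⟨M, ⟨S, hS⟩, hM⟩ := hQfin
    let res : V →ₗ[ℤ] (S → ℤ) :=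
      { toFun := fun f s => linExt (fun h : H => f.1 h) s
        map_add' := by
          intro f f'
          funext s
          exact monoidAlgebra_hom_ext (f := linExt (fun h : H => (f.1 + f'.1) h))
            (g := linExt (fun h : H => f.1 h) + linExt (fun h : H => f'.1 h))
            (fun x => by simp [linExt]) _
        map_smul' := by
          intro z f
          funext s
          exact monoidAlgebra_hom_ext (f := linExt (fun h : H => (z • f.1) h))
            (g := z • linExt (fun h : H => f.1 h))
            (fun x => by simp [linExt]) _ }
    refine Module.Finite.of_injective res ((injective_iff_map_eq_zero res).2 fun f hf => ?_)
    ext1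
    refine hVH _ f.2 fun h => ?_
    rw [← linExt_of (fun h : H => f.1 h)]
    have h1 : Q ⊔ M ≤ LinearMap.ker (linExt (fun h : H => f.1 h)) := by
      refine sup_le (fun a ha => f.2.2 a ha) ?_
      rw [← hS, Submodule.span_le]
      intro s hs
      exact congrFun hf ⟨s, hs⟩
    exact h1 (hM ▸ trivial)
  have hVfree : Module.Free ℤ V := inferInstance
  have hVunip : Unip (fun g f => τ g f) (U : Set G) := by
    refine ⟨q, fun w =>
      { carrier := {f | ∀ a ∈ J w, linExt (fun h : H => f.1 h) a = 0}
        add_mem' := ?_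
        zero_mem' := ?_
        neg_mem' := ?_ }, ?_, ?_, ?_⟩
    · intro f f' h h' a ha
      have : ∀ a, linExt (fun h : H => (f.1 + f'.1) h) a =
            (linExt (fun h : H => f.1 h) + linExt (fun h : H => f'.1 h)) a :=
          monoidAlgebra_hom_ext (fun x => by simp [linExt])
      exact (this a).trans (by rw [LinearMap.add_apply, h a ha, h' a ha, add_zero])
    · intro a ha
      exact monoidAlgebra_hom_ext (g := 0) (fun x => by simp [linExt]) a
    · intro f h a ha
      have : ∀ a, linExt (fun h : H => (-f.1) h) a = (-linExt (fun h : H => f.1 h)) a :=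
          monoidAlgebra_hom_ext (fun x => by simp [linExt])
      exact (this a).trans (by rw [LinearMap.neg_apply, h a ha, neg_zero])
    · rw [eq_bot_iff]
      intro f hf
      rw [AddSubgroup.mem_bot]
      ext1
      refine hVH _ f.2 fun h => ?_
      rw [← linExt_of (fun h : H => f.1 h)]
      exact hf _ (hJ0 ▸ trivial)
    · intro w hw
      rw [eq_top_iff]
      intro f _ a ha
      exact f.2.2 _ (hJ w hw ha)
    · intro u hu w f hf a ha
      have h1 : ∀ a, linExt (fun h : H => (τ u f - f).1 h) a =
          (linExt (fun h : H => f.1 (u⁻¹ * h)) - linExt (fun h : H => f.1 h)) a :=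
        monoidAlgebra_hom_ext (fun x => by
          rw [LinearMap.sub_apply, linExt_of, linExt_of, linExt_of]; rfl)
      rw [h1, LinearMap.sub_apply, htr _ f.2, ← map_sub]
      refine hf _ (hJU _ _ ?_ w a ha)
      rw [← hrc]; exact U.inv_mem hu
  let ω : G →* Module.End ℤ (ℤ × ℤ) :=
    { toFun := fun g =>
        { toFun := fun p => (p.1 + c g * p.2, p.2)
          map_add' := by intro a b; simp; ring
          map_smul' := by intro a b; simp; ring }
      map_one' := by ext <;> simp [hc_one]
      map_mul' := by intro a b; ext <;> simp [hc_mul]; ring }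
  have hωunip : Unip (fun g f => ω g f) (U : Set G) := by
    refine ⟨2, fun w => if w = 0 then ⊥ else if w = 1 then (AddMonoidHom.snd ℤ ℤ).ker else ⊤,
      by simp, ?_, ?_⟩
    · intro w hw
      simp [show w ≠ 0 by omega, show w ≠ 1 by omega]
    · intro u _ w m hm
      match w with
      | 0 =>
        have : m.2 = 0 := hm
        ext <;> simp [ω, this]
      | 1 =>
        change (ω u m - m).2 = 0
        simp [ω]
      | w + 2 => simp
  let σ : G →* Module.End ℤ (V × (ℤ × ℤ)) :=
    { toFun := fun g => (τ g).prodMap (ω g)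
      map_one' := by rw [map_one, map_one]; rfl
      map_mul' := by intro a b; rw [map_mul, map_mul]; rfl }
  refine GoodRep.of_module U σ ?_ (hVunip.prod hωunip)
  rw [injective_iff_map_eq_one]
  intro g hg
  have hcg : c g = 0 := by
    have := congrArg (fun φ : Module.End ℤ (V × (ℤ × ℤ)) => (φ (0, (0, 1))).2.1) hg
    simpa [σ, ω] using this
  have hgr : g = r g := by simpa [hcg] using hrc g
  have hVg : ∀ f ∈ V, f g⁻¹ = f 1 := by
    intro f hf
    have := congrArg (fun φ : Module.End ℤ (V × (ℤ × ℤ)) => (φ (⟨f, hf⟩, 0)).1.1 1) hg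
    simpa [σ, τ] using this
  -- apply `hVg` to the matrix coefficients of `ρ`, extended to `G` through `r`
  have hcoef : ∀ i j, ρ (r g)⁻¹ (Pi.single i 1) j = ρ 1 (Pi.single i 1) j := by
    intro i j
    have hf : (fun x => ρ (r x) (Pi.single i 1) j) ∈ V := by
      constructor
      · intro x
        have : x * t = r x * t ^ (c x + 1) := by
          conv_lhs => rw [hrc x]
          rw [zpow_add_one, mul_assoc]
        beta_reduce
        rw [this, hr]
      · intro a ha
        have h1 : ∀ a, linExt (fun h : H => ρ (r h) (Pi.single i 1) j) a =
            ((LinearMap.proj j).comp ((LinearMap.applyₗ (Pi.single i 1)).comp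
              (MonoidAlgebra.lift ℤ _ H ρ).toLinearMap)) a :=
          monoidAlgebra_hom_ext (fun x => by
            have : r (x : G) = x := by simpa using hr x 0
            simp [linExt, this])
        rw [h1]
        simp [hQK a ha]
    have h1 := hVg _ hf
    have h2 : r g⁻¹ = (r g)⁻¹ := by
      have := hr (r g)⁻¹ 0
      rwa [zpow_zero, mul_one, InvMemClass.coe_inv, ← hgr] at this
    have h3 : r 1 = 1 := by simpa using hr 1 0
    simpa [h2, h3] using h1
  have : ρ (r g)⁻¹ = ρ 1 := by
    refine LinearMap.pi_ext' fun i => ?_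
    ext j
    simpa using hcoef i j
  have h4 : (r g)⁻¹ = 1 := hρ this
  rw [hgr, inv_eq_one.1 h4]; rfl

/-! ### Invariant ideals of the group ring and the two extension steps -/

/-- The span of the elements `u - 1`, `u ∈ N`, in the group ring. -/
noncomputable def augSpan {H : Type*} [Group H] (N : Subgroup H) : Submodule ℤ (MonoidAlgebra ℤ H) :=
  Submodule.span ℤ ((fun u => MonoidAlgebra.of ℤ H u - 1) '' (N : Set H))

theorem top_eq_span_of (H : Type*) [Group H] :
    (⊤ : Submodule ℤ (MonoidAlgebra ℤ H)) = Submodule.span ℤ (Set.range (MonoidAlgebra.of ℤ H)) := by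
  symm
  rw [eq_top_iff]
  intro a _
  induction a using MonoidAlgebra.induction_on with
  | of m => exact Submodule.subset_span ⟨m, rfl⟩
  | add x y hx hy => exact Submodule.add_mem _ (hx trivial) (hy trivial)
  | smul r x hx => exact Submodule.smul_mem _ _ (hx trivial)

theorem augSpan_comm {H : Type*} [Group H] (N : Subgroup H) [hN : N.Normal] :
    augSpan N * ⊤ = ⊤ * augSpan N := by
  rw [top_eq_span_of, augSpan, Submodule.span_mul_span, Submodule.span_mul_span]
  congr 1
  ext a
  simp only [Set.mem_mul, Set.mem_image, Set.mem_range]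
  constructor
  · rintro ⟨_, ⟨u, hu, rfl⟩, _, ⟨h, rfl⟩, rfl⟩
    refine ⟨_, ⟨h, rfl⟩, _, ⟨h⁻¹ * u * h, ?_, rfl⟩, ?_⟩
    · simpa using hN.conj_mem u hu h⁻¹
    · rw [mul_sub, sub_mul, ← map_mul, ← map_mul, mul_one, one_mul]; congr 2; group
  · rintro ⟨_, ⟨h, rfl⟩, _, ⟨u, hu, rfl⟩, rfl⟩
    refine ⟨_, ⟨h * u * h⁻¹, hN.conj_mem u hu h, rfl⟩, _, ⟨h, rfl⟩, ?_⟩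
    rw [mul_sub, sub_mul, ← map_mul, ← map_mul, mul_one, one_mul]; congr 2; group

/-- A unipotent action of `N` makes some power of the span of the elements `u - 1`, `u ∈ N`, act as
zero. -/
theorem augSpan_pow_le_ker {H M : Type*} [Group H] [AddCommGroup M] (N : Subgroup H)
    (ρ : H →* Module.End ℤ M) (h : Unip (fun g m => ρ g m) (N : Set H)) :
    ∃ k, ∀ a ∈ augSpan N ^ k, MonoidAlgebra.lift ℤ _ H ρ a = 0 := by
  obtain ⟨k, F, h0, hk, hu⟩ := h
  have h1 : ∀ a ∈ augSpan N, ∀ w, ∀ m ∈ F (w + 1), MonoidAlgebra.lift ℤ _ H ρ a m ∈ F w := by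
    intro a ha w m hm
    induction ha using Submodule.span_induction with
    | mem x hx =>
      obtain ⟨u, huN, rfl⟩ := hx
      have := hu u huN w m hm
      rw [map_sub, map_one, MonoidAlgebra.lift_of]
      exact this
    | zero => rw [map_zero]; exact zero_mem _
    | add x y _ _ hx hy => rw [map_add]; exact add_mem hx hy
    | smul r x _ hx => rw [map_smul]; exact zsmul_mem hx r
  have h2 : ∀ i, ∀ a ∈ augSpan N ^ i, ∀ w, ∀ m ∈ F (w + i), MonoidAlgebra.lift ℤ _ H ρ a m ∈ F w := by
    intro i
    induction i with
    | zero =>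
      intro a ha w m hm
      rw [pow_zero, Submodule.mem_one] at ha
      obtain ⟨r, rfl⟩ := ha
      rw [AlgHom.commutes]
      exact zsmul_mem hm r
    | succ i ih =>
      intro a ha w m hm
      rw [pow_succ] at ha
      induction ha using Submodule.mul_induction_on' with
      | mem_mul_mem x hx y hy =>
        rw [map_mul]
        exact ih x hx w _ (h1 y hy _ m hm)
      | add x _ y _ hx hy => rw [map_add]; exact add_mem hx hy
  refine ⟨k, fun a ha => ?_⟩
  ext1 m
  have := h2 k a ha 0 m (by rw [hk _ (by omega)]; trivial)
  rw [h0] at this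
  exact this

/-- If `G` centralizes `H` modulo `N`, then `G` acts trivially on `ℤH` modulo the ideal generated by
the elements `u - 1`, `u ∈ N ∩ H`. -/
theorem conjA_sub_mem {G : Type*} [Group G] {H : Subgroup G} [H.Normal] (N : Subgroup G)
    (hcomm : ∀ (g : G), ∀ h ∈ H, g * h * g⁻¹ * h⁻¹ ∈ N) (g : G) (a : MonoidAlgebra ℤ H) :
    conjA g a - a ∈ augSpan (N.subgroupOf H) * ⊤ := by
  induction a using MonoidAlgebra.induction_on with
  | of h =>
    have : conjA g (MonoidAlgebra.of ℤ H h) - MonoidAlgebra.of ℤ H h =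
        (MonoidAlgebra.of ℤ H (MulAut.conjNormal g h * h⁻¹) - 1) * MonoidAlgebra.of ℤ H h := by
      rw [conjA_of, sub_mul, one_mul, ← map_mul, inv_mul_cancel_right]
    rw [this]
    refine Submodule.mul_mem_mul (Submodule.subset_span ⟨_, ?_, rfl⟩) trivial
    have := hcomm g h h.2
    simpa [Subgroup.mem_subgroupOf, MulAut.conjNormal_apply] using this
  | add x y hx hy =>
    rw [map_add, add_sub_add_comm]; exact add_mem hx hy
  | smul r x hx => rw [map_smul, ← smul_sub]; exact Submodule.smul_mem _ _ hx

/-- The ideal needed for `GoodRep.step`, when `N` acts unipotently and `[G, H] ≤ N`. Take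
`Q = P ^ (2 ^ j)` with `P = ker ρ + D · ℤH`, where `D` is spanned by the elements `u - 1`,
`u ∈ N ∩ H`. Since `G` acts trivially on `ℤH` modulo `D · ℤH`, the ideal `P` is `G`-invariant although
`ker ρ` need not be; since `D` acts nilpotently, a high power of `P` lies in `ker ρ`. -/
theorem exists_invariant_ideal {G : Type*} [Group G] (H : Subgroup G) [H.Normal]
    (hfg : H.FG) (N : Subgroup G) [N.Normal]
    (hcomm : ∀ (g : G), ∀ h ∈ H, g * h * g⁻¹ * h⁻¹ ∈ N)
    {n : ℕ} (ρ : H →* Module.End ℤ (Fin n → ℤ))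
    (hN : Unip (fun g m => ρ g m) (N.subgroupOf H : Set H)) :
    ∃ (Q : Submodule ℤ (MonoidAlgebra ℤ H)) (q : ℕ), Cofin Q ∧ ⊤ * Q ≤ Q ∧
      (∀ g : G, ∀ a ∈ Q, conjA g a ∈ Q) ∧ (∀ a ∈ Q, MonoidAlgebra.lift ℤ _ H ρ a = 0) ∧
      ∀ w ≥ q, augSpan (N.subgroupOf H) ^ w * ⊤ ≤ Q := by
  have : Group.FG H := (Group.fg_iff_subgroup_fg H).2 hfg
  obtain ⟨k, hk⟩ := augSpan_pow_le_ker _ ρ hN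
  set D := augSpan (N.subgroupOf H) with hD
  set K : Submodule ℤ (MonoidAlgebra ℤ H) :=
    LinearMap.ker (MonoidAlgebra.lift ℤ _ H ρ).toLinearMap with hK
  have htt : (⊤ : Submodule ℤ (MonoidAlgebra ℤ H)) * ⊤ ≤ ⊤ := le_top
  have hDc : D * ⊤ = ⊤ * D := augSpan_comm _
  have hKl : ⊤ * K ≤ K := Submodule.mul_le.2 fun a _ b hb => by
    have hb' : MonoidAlgebra.lift ℤ _ H ρ b = 0 := hb
    change MonoidAlgebra.lift ℤ _ H ρ (a * b) = 0
    rw [map_mul, hb', mul_zero]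
  have hKr : K * ⊤ ≤ K := Submodule.mul_le.2 fun a ha b _ => by
    have ha' : MonoidAlgebra.lift ℤ _ H ρ a = 0 := ha
    change MonoidAlgebra.lift ℤ _ H ρ (a * b) = 0
    rw [map_mul, ha', zero_mul]
  let P := K ⊔ D * ⊤
  have hPl : ⊤ * P ≤ P := by
    rw [Submodule.mul_sup]
    refine sup_le_sup hKl ?_
    rw [← mul_assoc, ← hDc, mul_assoc]
    exact mul_le_mul' le_rfl htt
  have hPr : P * ⊤ ≤ P := by
    rw [Submodule.sup_mul]
    refine sup_le_sup hKr ?_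
    rw [mul_assoc]
    exact mul_le_mul' le_rfl htt
  have hPfin : Cofin P := (cofin_ker _).mono le_sup_left
  have hPc : ∀ g : G, Submodule.map (conjA g).toLinearMap P ≤ P := by
    rintro g _ ⟨a, ha, rfl⟩
    have h1 : conjA g a - a ∈ P := Submodule.mem_sup_right (conjA_sub_mem N hcomm g a)
    have := add_mem h1 ha
    rwa [sub_add_cancel] at this
  obtain ⟨j, hj⟩ : ∃ j, k ≤ 2 ^ j := ⟨k, Nat.lt_two_pow_self.le⟩
  have hPmono : ∀ i, i ≠ 0 → ∀ l, P ^ (i + l) ≤ P ^ i := by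
    intro i hi l
    rw [pow_add]
    exact (mul_le_mul' le_rfl le_top).trans (ideal_pow hPl hPr hi).2
  have hQi := ideal_pow hPl hPr (n := 2 ^ j) (by positivity)
  refine ⟨P ^ (2 ^ j), 2 ^ j, hPfin.pow hPl hPr j, hQi.1, ?_, ?_, ?_⟩
  · intro g a ha
    have h1 : Submodule.map (conjA g).toLinearMap (P ^ (2 ^ j)) ≤ P ^ (2 ^ j) := by
      rw [Submodule.map_pow]
      exact pow_le_pow_left' (hPc g) _
    exact h1 ⟨a, ha, rfl⟩
  · intro a ha
    have h1 : P ^ (2 ^ j) ≤ K := by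
      refine (sup_pow_le hKl hKr _).trans (sup_le le_rfl ?_)
      rw [Commute.mul_pow (show Commute D ⊤ from hDc)]
      obtain ⟨l, hl⟩ := Nat.exists_eq_add_of_le hj
      rw [hl, pow_add, mul_assoc]
      have hDK : D ^ k ≤ K := fun a ha => hk a ha
      exact (mul_le_mul' hDK le_top).trans hKr
    exact h1 ha
  · intro w hw
    have hDP : D ≤ P := by
      refine le_trans ?_ le_sup_right
      intro d hd
      simpa using Submodule.mul_mem_mul hd (Submodule.mem_top (x := (1 : MonoidAlgebra ℤ H)) (R := ℤ))
    obtain ⟨l, hl⟩ := Nat.exists_eq_add_of_le hw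
    refine (mul_le_mul' (pow_le_pow_left' hDP w) le_rfl).trans ?_
    rw [hl]
    exact (mul_le_mul' (hPmono _ (by positivity) l) le_rfl).trans hQi.2

/-- The extension step over a normal subgroup `N` that acts unipotently, when `[G, H] ≤ N`; `N` still
acts unipotently in the new representation. The filtration is given by the powers of the ideal
generated by the elements `u - 1`, `u ∈ N`. -/
theorem GoodRep.step_abelian {G : Type*} [Group G] (H : Subgroup G) [H.Normal] (t : G)
    (hgen : ∀ g : G, ∃ (h : H) (k : ℤ), g = h * t ^ k) (hinf : ∀ k : ℤ, t ^ k ∈ H → k = 0)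
    (hfg : H.FG) (N : Subgroup G) [N.Normal] (hNH : N ≤ H)
    (hcomm : ∀ (g : G), ∀ h ∈ H, g * h * g⁻¹ * h⁻¹ ∈ N)
    (hH : GoodRep H (N.subgroupOf H)) : GoodRep G N := by
  obtain ⟨n, ρ, hρ, hU⟩ := hH
  obtain ⟨Q, q, hQfin, hQl, hQc, hQK, hQ⟩ := exists_invariant_ideal H hfg N hcomm ρ hU
  refine GoodRep.step H t hgen hinf ρ hρ Q hQfin hQl hQc hQK N
    (fun w => augSpan (N.subgroupOf H) ^ w * ⊤) (by simp) q hQ ?_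
  intro h k hu w a ha
  have hk : k = 0 := hinf k ((H.mul_mem_cancel_left h.2).1 (hNH hu))
  subst hk
  rw [zpow_zero, mul_one] at hu
  have h1 : conjA (t ^ (0 : ℤ)) a = a := by
    refine monoidAlgebra_hom_ext (f := (conjA (t ^ (0 : ℤ))).toLinearMap) (g := LinearMap.id) ?_ a
    intro x
    rw [AlgHom.toLinearMap_apply, conjA_of]
    simp
  rw [h1, ← sub_one_mul, pow_succ', mul_assoc]
  exact Submodule.mul_mem_mul (Submodule.subset_span ⟨h, hu, rfl⟩) ha

/-- `WeightGE H w a`: the element `a` of `ℤH` is a sum of products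
`(u₁ - 1) ⋯ (uₘ - 1) b` of weight at least `w`, where a factor `u - 1` with `u` in the term with
index `i` of the lower central series of `G` (`G` itself having index `0`) weighs `i + 1`. -/
inductive WeightGE {G : Type*} [Group G] (H : Subgroup G) : ℕ → MonoidAlgebra ℤ H → Prop
  | base (a) : WeightGE H 0 a
  | zero (w) : WeightGE H w 0
  | add {w a b} : WeightGE H w a → WeightGE H w b → WeightGE H w (a + b)
  | mul {i w a} (u : H) : (u : G) ∈ (⊤ : Subgroup G).lowerCentralSeries i → WeightGE H w a →
      WeightGE H (w + i + 1) ((MonoidAlgebra.of ℤ H u - 1) * a)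

namespace WeightGE

variable {G : Type*} [Group G] {H : Subgroup G} {w : ℕ} {a : MonoidAlgebra ℤ H}

theorem smul (r : ℤ) (h : WeightGE H w a) : WeightGE H w (r • a) := by
  induction h with
  | base a => exact .base _
  | zero w => rw [smul_zero]; exact .zero _
  | add _ _ h1 h2 => rw [smul_add]; exact .add h1 h2
  | mul u hu _ h => rw [← mul_smul_comm]; exact .mul u hu h

theorem of_mul (x : H) (h : WeightGE H w a) : WeightGE H w (MonoidAlgebra.of ℤ H x * a) := by
  induction h with
  | base a => exact .base _
  | zero w => rw [mul_zero]; exact .zero _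
  | add _ _ h1 h2 => rw [mul_add]; exact .add h1 h2
  | @mul i w a u hu _ h =>
    have : MonoidAlgebra.of ℤ H x * ((MonoidAlgebra.of ℤ H u - 1) * a) =
        (MonoidAlgebra.of ℤ H (x * u * x⁻¹) - 1) * (MonoidAlgebra.of ℤ H x * a) := by
      rw [← mul_assoc, ← mul_assoc, mul_sub, sub_mul (MonoidAlgebra.of ℤ H (x * u * x⁻¹)),
        ← map_mul, ← map_mul, mul_one, one_mul, inv_mul_cancel_right]
    rw [this]
    refine .mul _ ?_ h
    simpa using (inferInstance : ((⊤ : Subgroup G).lowerCentralSeries i).Normal).conj_mem _ hu x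

theorem conj [H.Normal] (g : G) (h : WeightGE H w a) : WeightGE H w (conjA g a) := by
  induction h with
  | base a => exact .base _
  | zero w => rw [map_zero]; exact .zero _
  | add _ _ h1 h2 => rw [map_add]; exact .add h1 h2
  | @mul i w a u hu _ h =>
    rw [map_mul, map_sub, map_one, conjA_of]
    refine .mul _ ?_ h
    rw [MulAut.conjNormal_apply]
    exact (inferInstance : ((⊤ : Subgroup G).lowerCentralSeries i).Normal).conj_mem _ hu g

/-- Conjugation acts unipotently with respect to the weight filtration, because
`g u g⁻¹ u⁻¹` lies one step deeper in the lower central series than `u`. -/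
theorem conj_sub [H.Normal] (g : G) (h : WeightGE H w a) : WeightGE H (w + 1) (conjA g a - a) := by
  have key : ∀ (i : ℕ) (u : H), (u : G) ∈ (⊤ : Subgroup G).lowerCentralSeries i →
      ((MulAut.conjNormal g u * u⁻¹ : H) : G) ∈ (⊤ : Subgroup G).lowerCentralSeries (i + 1) := by
    intro i u hu
    rw [Subgroup.coe_mul, MulAut.conjNormal_apply]
    rw [Subgroup.lowerCentralSeries_succ, Subgroup.commutator_comm]
    exact Subgroup.commutator_mem_commutator (Subgroup.mem_top g) hu
  have key2 : ∀ u : H, MonoidAlgebra.of ℤ H (MulAut.conjNormal g u) - MonoidAlgebra.of ℤ H u =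
      (MonoidAlgebra.of ℤ H (MulAut.conjNormal g u * u⁻¹) - 1) * MonoidAlgebra.of ℤ H u := by
    intro u
    rw [sub_mul, one_mul, ← map_mul, inv_mul_cancel_right]
  induction h with
  | base a =>
    induction a using MonoidAlgebra.induction_on with
    | of x =>
      rw [conjA_of, key2]
      exact .mul (i := 0) (w := 0) _ (by simp) (.base _)
    | add x y hx hy => rw [map_add, add_sub_add_comm]; exact .add hx hy
    | smul r x hx => rw [map_smul, ← smul_sub]; exact hx.smul r
  | zero w => rw [map_zero, sub_zero]; exact .zero _
  | add _ _ h1 h2 => rw [map_add, add_sub_add_comm]; exact .add h1 h2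
  | @mul i w a u hu ha h =>
    have : conjA g ((MonoidAlgebra.of ℤ H u - 1) * a) - (MonoidAlgebra.of ℤ H u - 1) * a =
        (MonoidAlgebra.of ℤ H (MulAut.conjNormal g u * u⁻¹) - 1) *
          (MonoidAlgebra.of ℤ H u * conjA g a) +
        (MonoidAlgebra.of ℤ H u - 1) * (conjA g a - a) := by
      rw [← mul_assoc, ← key2, map_mul, map_sub, map_one, conjA_of]
      noncomm_ring
    rw [this]
    refine .add (.mul (i := i + 1) (w := w) _ (key i u hu) ((ha.conj g).of_mul u)) ?_
    have h3 := WeightGE.mul u hu h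
    rwa [show w + 1 + i + 1 = w + i + 1 + 1 by omega] at h3

/-- For `G` of class at most `c` a nontrivial factor weighs at most `c`, so a large weight forces
many factors. -/
theorem mem_pow {c : ℕ} (hc : (⊤ : Subgroup G).lowerCentralSeries c = ⊥) (h : WeightGE H w a) :
    ∀ m, (c + 1) * m ≤ w → a ∈ augSpan (⊤ : Subgroup H) ^ m * ⊤ := by
  induction h with
  | base a =>
    intro m hm
    have : m = 0 := by
      rcases Nat.eq_zero_or_pos m with h | h
      · exact h
      · nlinarith
    subst this
    rw [pow_zero, one_mul]; trivial
  | zero w => intro m _; exact zero_mem _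
  | add _ _ h1 h2 => intro m hm; exact add_mem (h1 m hm) (h2 m hm)
  | @mul i w a u hu _ h =>
    intro m hm
    by_cases hi : c ≤ i
    · have : u = 1 := by
        have h1 := Subgroup.lowerCentralSeries_antitone _ hi hu
        rw [hc, Subgroup.mem_bot] at h1
        exact Subtype.ext h1
      rw [this, map_one, sub_self, zero_mul]; exact zero_mem _
    · cases m with
      | zero => rw [pow_zero, one_mul]; trivial
      | succ m =>
        rw [pow_succ', mul_assoc]
        refine Submodule.mul_mem_mul (Submodule.subset_span ⟨u, trivial, rfl⟩) (h m ?_)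
        rw [mul_add] at hm
        omega

end WeightGE

/-- The extension step inside a nilpotent group: if the whole of `H` acts unipotently, then so does
the whole of `G`. The filtration is the one by `WeightGE`. -/
theorem GoodRep.step_nilpotent {G : Type*} [Group G] [hG : Group.IsNilpotent G] (H : Subgroup G)
    [H.Normal] (t : G)
    (hgen : ∀ g : G, ∃ (h : H) (k : ℤ), g = h * t ^ k) (hinf : ∀ k : ℤ, t ^ k ∈ H → k = 0)
    (hfg : H.FG) (hH : GoodRep H ⊤) : GoodRep G ⊤ := by
  obtain ⟨n, ρ, hρ, hU⟩ := hH
  rw [← Subgroup.subgroupOf_self] at hU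
  obtain ⟨Q, q, hQfin, hQl, hQc, hQK, hQ⟩ := exists_invariant_ideal H hfg H (fun g h hh =>
    H.mul_mem ((inferInstance : H.Normal).conj_mem h hh g) (H.inv_mem hh)) ρ hU
  rw [Subgroup.subgroupOf_self] at hQ
  obtain ⟨c, hc⟩ := (Group.isNilpotent_top.symm.trans (Subgroup.isNilpotent_iff_lowerCentralSeries ⊤)).1 hG
  refine GoodRep.step H t hgen hinf ρ hρ Q hQfin hQl hQc hQK ⊤
    (fun w =>
      { carrier := {a | WeightGE H w a}
        add_mem' := fun h h' => h.add h'
        zero_mem' := .zero w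
        smul_mem' := fun r _ h => h.smul r }) ?_ ((c + 1) * q) ?_ ?_
  · rw [eq_top_iff]
    intro a _
    exact .base a
  · intro w hw a ha
    exact hQ q le_rfl (WeightGE.mem_pow hc ha q hw)
  · intro h k _ w a ha
    have h1 : MonoidAlgebra.of ℤ H h * conjA (t ^ k) a - a =
        (MonoidAlgebra.of ℤ H h - 1) * conjA (t ^ k) a + (conjA (t ^ k) a - a) := by
      noncomm_ring
    rw [h1]
    exact .add (.mul (i := 0) h (by simp) (ha.conj _)) (ha.conj_sub _)

/-! ### Chains with infinite cyclic quotients and subgroups of finite index -/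

theorem IsPolycyclic.of_injective {G G' : Type*} [Group G] [Group G'] (h : IsPolycyclic G)
    (f : G' →* G) (hf : Function.Injective f) : IsPolycyclic G' := by
  obtain ⟨h1, h2⟩ := h
  have : Group.IsSolvable G := h1
  refine ⟨Group.isSolvable_of_isSolvable_injective hf, fun H => ?_⟩
  rw [Subgroup.fg_iff_submonoid_fg]
  exact Submonoid.FG.map_injective f hf ((Subgroup.fg_iff_submonoid_fg _).1 (h2 (H.map f)))

theorem IsPolycyclic.of_surjective {G G' : Type*} [Group G] [Group G'] (h : IsPolycyclic G)
    (f : G →* G') (hf : Function.Surjective f) : IsPolycyclic G' := by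
  obtain ⟨h1, h2⟩ := h
  have : Group.IsSolvable G := h1
  refine ⟨Group.isSolvable_of_surjective hf, fun H => ?_⟩
  rw [← Subgroup.map_comap_eq_self_of_surjective hf H, Subgroup.fg_iff_submonoid_fg]
  exact Submonoid.FG.map ((Subgroup.fg_iff_submonoid_fg _).1 (h2 (H.comap f))) f

section ZStep

variable {G G' : Type*} [Group G] [Group G']

/-- `H` is the kernel of a homomorphism `K → ℤ`, given as a function on `G` that is additive on `K`.
The zero homomorphism is allowed, so that `K/H` is trivial or infinite cyclic. -/
def ZStep (H K : Subgroup G) : Prop :=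
  H ≤ K ∧ ∃ φ : G → ℤ, (∀ x ∈ K, ∀ y ∈ K, φ (x * y) = φ x + φ y) ∧ ∀ x ∈ K, x ∈ H ↔ φ x = 0

/-- A finite ascending chain of subgroups from one subgroup to another in which every step is a
`ZStep`. -/
def ZChain : Subgroup G → Subgroup G → Prop := Relation.ReflTransGen ZStep

theorem ZStep.comap {H K : Subgroup G} (h : ZStep H K) (f : G' →* G) :
    ZStep (H.comap f) (K.comap f) := by
  obtain ⟨h1, φ, h2, h3⟩ := h
  refine ⟨Subgroup.comap_mono h1, fun x => φ (f x), ?_, ?_⟩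
  · intro x hx y hy
    simpa using h2 _ hx _ hy
  · intro x hx
    exact h3 _ hx

theorem ZChain.comap {H K : Subgroup G} (h : ZChain H K) (f : G' →* G) :
    ZChain (H.comap f) (K.comap f) :=
  Relation.ReflTransGen.lift (Subgroup.comap f) (fun _ _ h => ZStep.comap h f) _ _ h

theorem ZStep.inf {H K : Subgroup G} (h : ZStep H K) (L : Subgroup G) :
    ZStep (H ⊓ L) (K ⊓ L) := by
  obtain ⟨h1, φ, h2, h3⟩ := h
  refine ⟨inf_le_inf_right _ h1, φ, fun x hx y hy => h2 _ hx.1 _ hy.1, fun x hx => ?_⟩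
  rw [← h3 x hx.1]
  exact ⟨fun h => h.1, fun h => ⟨h, hx.2⟩⟩

theorem ZChain.inf {H K : Subgroup G} (h : ZChain H K) (L : Subgroup G) :
    ZChain (H ⊓ L) (K ⊓ L) :=
  Relation.ReflTransGen.lift (· ⊓ L) (fun _ _ h => ZStep.inf h L) _ _ h

theorem ZChain.le {H K : Subgroup G} (h : ZChain H K) : H ≤ K := by
  induction h with
  | refl => exact le_rfl
  | tail _ h ih => exact ih.trans h.1

/-- A nontrivial step splits: `K = H ⋊ ⟨t⟩` with `t` of infinite order modulo `H`. -/
theorem ZStep.exists_gen {H K : Subgroup G} (h : ZStep H K) :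
    H = K ∨ (∀ g ∈ K, ∀ h ∈ H, g * h * g⁻¹ ∈ H) ∧ ∃ t ∈ K,
      (∀ g ∈ K, ∃ h ∈ H, ∃ k : ℤ, g = h * t ^ k) ∧ ∀ k : ℤ, t ^ k ∈ H → k = 0 := by
  obtain ⟨hle, φ, hmul, hker⟩ := h
  have h1 : φ 1 = 0 := (hker 1 K.one_mem).1 H.one_mem
  have hinv : ∀ x ∈ K, φ x⁻¹ = - φ x := by
    intro x hx
    have := hmul x hx x⁻¹ (K.inv_mem hx)
    rw [mul_inv_cancel, h1] at this
    linarith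
  let ψ : K →* Multiplicative ℤ :=
    { toFun := fun x => Multiplicative.ofAdd (φ x)
      map_one' := by simp [h1]
      map_mul' := fun x y => by simp [hmul x x.2 y y.2] }
  have hψ : ∀ x : K, (ψ x).toAdd = φ x := fun x => rfl
  obtain ⟨⟨d, hd⟩, hgen⟩ := (inferInstance : IsCyclic ψ.range).exists_generator
  obtain ⟨t, ht⟩ := hd
  have hpow : ∀ k : ℤ, φ ((t : G) ^ k) = k * φ t := by
    intro k
    rw [← hψ, ← Subgroup.coe_zpow, ← hψ, map_zpow, toAdd_zpow, smul_eq_mul]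
  have hk : ∀ g ∈ K, ∃ k : ℤ, φ g = k * φ t := by
    intro g hg
    obtain ⟨k, hk⟩ := hgen ⟨ψ ⟨g, hg⟩, ⟨_, rfl⟩⟩
    refine ⟨k, ?_⟩
    have h2 : d ^ k = ψ ⟨g, hg⟩ := congrArg Subtype.val hk
    rw [← ht, ← map_zpow] at h2
    have h3 := congrArg Multiplicative.toAdd h2
    rw [hψ, hψ] at h3
    rw [← hpow]
    simpa using h3.symm
  by_cases hz : φ t = 0
  · left
    refine le_antisymm hle fun x hx => ?_
    obtain ⟨k, hk⟩ := hk x hx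
    rw [hker x hx, hk, hz, mul_zero]
  · right
    refine ⟨?_, t, t.2, ?_, ?_⟩
    · intro g hg h hh
      have := hle hh
      rw [hker _ (K.mul_mem (K.mul_mem hg this) (K.inv_mem hg)),
        hmul _ (K.mul_mem hg this) _ (K.inv_mem hg), hmul _ hg _ this, hinv _ hg,
        (hker h this).1 hh]
      ring
    · intro g hg
      obtain ⟨k, hk⟩ := hk g hg
      refine ⟨g * (t : G) ^ (-k), ?_, k, by simp⟩
      have h5 := K.zpow_mem t.2 (-k)
      rw [hker _ (K.mul_mem hg h5), hmul _ hg _ h5, hk, hpow]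
      ring
    · intro k hk
      rw [hker _ (K.zpow_mem t.2 k), hpow] at hk
      simpa [hz] using hk

theorem mem_sup_zpowers {H : Subgroup G} {t : G} (ht : t ∈ Subgroup.normalizer (H : Set G)) {g : G}
    (hg : g ∈ H ⊔ Subgroup.zpowers t) : ∃ h ∈ H, ∃ k : ℤ, g = h * t ^ k := by
  have h1 : Subgroup.zpowers t ≤ Subgroup.normalizer (H : Set G) := by simpa using ht
  have h2 : (g : G) ∈ ((H ⊔ Subgroup.zpowers t : Subgroup G) : Set G) := hg
  rw [Subgroup.coe_mul_of_right_le_normalizer_left _ _ h1] at h2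
  obtain ⟨h, hh, _, ⟨k, rfl⟩, rfl⟩ := h2
  exact ⟨h, hh, k, rfl⟩

theorem ZStep.of_sup {H : Subgroup G} {t : G} (ht : t ∈ Subgroup.normalizer (H : Set G))
    (hinf : ∀ k : ℤ, t ^ k ∈ H → k = 0) : ZStep H (H ⊔ Subgroup.zpowers t) := by
  classical
  have huniq : ∀ h ∈ H, ∀ h' ∈ H, ∀ (k k' : ℤ), h * t ^ k = h' * t ^ k' → k = k' := by
    intro h hh h' hh' k k' e
    have h1 : t ^ (k - k') ∈ H := by
      have : t ^ (k - k') = h⁻¹ * h' := by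
        rw [zpow_sub, mul_inv_eq_iff_eq_mul]
        simp [mul_assoc, ← e]
      rw [this]; exact H.mul_mem (H.inv_mem hh) hh'
    linarith [hinf _ h1]
  refine ⟨le_sup_left, fun g => if h : ∃ h ∈ H, ∃ k : ℤ, g = h * t ^ k then
    h.choose_spec.2.choose else 0, ?_⟩
  set φ : G → ℤ := fun g => if h : ∃ h ∈ H, ∃ k : ℤ, g = h * t ^ k then
    h.choose_spec.2.choose else 0 with hφ
  have key : ∀ h ∈ H, ∀ k : ℤ, φ (h * t ^ k) = k := by
    intro h hh k
    have h1 : ∃ h' ∈ H, ∃ k' : ℤ, h * t ^ k = h' * t ^ k' := ⟨h, hh, k, rfl⟩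
    simp only [hφ]
    rw [dif_pos h1]
    exact (huniq _ hh _ h1.choose_spec.1 _ _ h1.choose_spec.2.choose_spec).symm
  refine ⟨?_, ?_⟩
  · intro x hx y hy
    obtain ⟨h, hh, k, rfl⟩ := mem_sup_zpowers ht hx
    obtain ⟨h', hh', k', rfl⟩ := mem_sup_zpowers ht hy
    have h2 : t ^ k ∈ Subgroup.normalizer (H : Set G) := Subgroup.zpow_mem _ ht k
    have h3 : h * t ^ k * (h' * t ^ k') = (h * (t ^ k * h' * (t ^ k)⁻¹)) * t ^ (k + k') := by
      rw [zpow_add]; group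
    rw [key _ hh, key _ hh', h3, key _ (H.mul_mem hh ((h2 h').1 hh'))]
  · intro x hx
    obtain ⟨h, hh, k, rfl⟩ := mem_sup_zpowers ht hx
    rw [key _ hh, H.mul_mem_cancel_left hh]
    exact ⟨hinf k, by rintro rfl; simp⟩

end ZStep

section FiniteIndex

variable {G : Type*} [Group G]

/-- `M ∩ K` has finite index in `K` if and only if finitely many left translates of `M` by elements
of `K` cover `K`. -/
theorem relIndex_ne_zero_iff {M K : Subgroup G} :
    M.relIndex K ≠ 0 ↔ ∃ S : Set G, S.Finite ∧ S ⊆ K ∧ ∀ g ∈ K, ∃ s ∈ S, s⁻¹ * g ∈ M := by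
  constructor
  · intro h
    have : (M.subgroupOf K).FiniteIndex := ⟨h⟩
    refine ⟨Set.range fun q : K ⧸ M.subgroupOf K => (q.out : G), Set.finite_range _, ?_, ?_⟩
    · rintro _ ⟨q, rfl⟩; exact q.out.2
    · intro g hg
      refine ⟨_, ⟨QuotientGroup.mk ⟨g, hg⟩, rfl⟩, ?_⟩
      have := QuotientGroup.eq.1 (QuotientGroup.out_eq' (QuotientGroup.mk (s := M.subgroupOf K) ⟨g, hg⟩))
      exact this
  · rintro ⟨S, hS, hSK, h⟩
    have := hS.to_subtype
    have : Finite (K ⧸ M.subgroupOf K) := by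
      refine Finite.of_surjective (fun s : S => QuotientGroup.mk ⟨s.1, hSK s.2⟩) ?_
      intro q
      induction q using QuotientGroup.induction_on with
      | H g =>
        obtain ⟨s, hs, hg⟩ := h g g.2
        exact ⟨⟨s, hs⟩, QuotientGroup.eq.2 hg⟩
    exact (Subgroup.finiteIndex_of_finite_quotient (H := M.subgroupOf K)).index_ne_zero

theorem finite_hom {H P : Type*} [Group H] [Group P] [Finite P] (hH : Group.FG H) :
    Finite (H →* P) := by
  obtain ⟨S, hS⟩ := hH
  refine Finite.of_injective (fun (f : H →* P) (s : S) => f s) ?_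
  intro f g hfg
  refine MonoidHom.eq_of_eqOn_dense (s := (S : Set H)) hS ?_
  intro s hs
  exact congrFun hfg ⟨s, hs⟩

/-- A subgroup `L` of finite index in a finitely generated group contains a characteristic subgroup
of finite index: the intersection of the kernels of the finitely many homomorphisms to the symmetric
group on `|H/L|` letters. -/
theorem exists_characteristic_le {H : Type*} [Group H] (hH : Group.FG H) (L : Subgroup H)
    [L.FiniteIndex] : ∃ X : Subgroup H, X ≤ L ∧ X.FiniteIndex ∧ X.Characteristic := by
  let P := Equiv.Perm (Fin (Nat.card (H ⧸ L)))
  have : Finite (H →* P) := finite_hom hH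
  refine ⟨⨅ φ : H →* P, φ.ker, ?_, Subgroup.finiteIndex_iInf fun φ => inferInstance, ?_⟩
  · intro x hx
    rw [Subgroup.mem_iInf] at hx
    let e : H ⧸ L ≃ Fin (Nat.card (H ⧸ L)) := Finite.equivFin _
    have h1 := hx (e.permCongrHom.toMonoidHom.comp (MulAction.toPermHom H (H ⧸ L)))
    have h2 : MulAction.toPermHom H (H ⧸ L) x = 1 := e.permCongrHom.injective (by simpa using h1)
    have h3 : x • (QuotientGroup.mk 1 : H ⧸ L) = QuotientGroup.mk 1 :=
      congrArg (fun σ : Equiv.Perm (H ⧸ L) => σ (QuotientGroup.mk 1)) h2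
    have h4 : (QuotientGroup.mk 1 : H ⧸ L) = QuotientGroup.mk (x * 1) := h3.symm
    simpa using QuotientGroup.eq.1 h4
  · rw [Subgroup.characteristic_iff_le_comap]
    intro α x hx
    rw [Subgroup.mem_comap, Subgroup.mem_iInf]
    intro φ
    rw [Subgroup.mem_iInf] at hx
    exact hx (φ.comp α.toMonoidHom)

/-- A subgroup of finite index in a finitely generated `H` contains a subgroup of finite index in
`H` that is normalized by the normalizer of `H`. -/
theorem exists_normalized_le {H L : Subgroup G} (hfg : H.FG)
    (h : L.relIndex H ≠ 0) : ∃ X ≤ L, X ≤ H ∧ X.relIndex H ≠ 0 ∧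
      Subgroup.normalizer (H : Set G) ≤ Subgroup.normalizer (X : Set G) := by
  have : (L.subgroupOf H).FiniteIndex := ⟨h⟩
  obtain ⟨X, hXL, hX, hXc⟩ := exists_characteristic_le ((Group.fg_iff_subgroup_fg H).2 hfg) (L.subgroupOf H)
  refine ⟨X.map H.subtype, ?_, Subgroup.map_subtype_le X, ?_, ?_⟩
  · rintro _ ⟨x, hx, rfl⟩
    exact hXL hx
  · rw [Subgroup.relIndex, Subgroup.subgroupOf, Subgroup.comap_map_eq_self_of_injective H.subtype_injective]
    exact hX.index_ne_zero
  · rw [Subgroup.le_normalizer_iff]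
    rintro g hg _ ⟨x, hx, rfl⟩
    let α : MulAut H := Subgroup.normalizerMonoidHom H ⟨g, hg⟩
    have h1 := Subgroup.characteristic_iff_le_comap.1 hXc α hx
    exact ⟨α x, h1, rfl⟩

theorem relIndex_sup_zpowers {A H M : Subgroup G} (hA : A.relIndex H ≠ 0) (hAM : A ≤ M) {t : G}
    (ht : t ∈ Subgroup.normalizer (H : Set G)) {j : ℤ} (hj : j ≠ 0) (htj : t ^ j ∈ M) :
    M.relIndex (H ⊔ Subgroup.zpowers t) ≠ 0 := by
  obtain ⟨S, hS, hSH, hcov⟩ := relIndex_ne_zero_iff.1 hA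
  refine relIndex_ne_zero_iff.2 ⟨Set.image2 (fun (r : ℤ) s => t ^ r * s) (Set.Ico 0 |j|) S,
    (Set.finite_Ico _ _).image2 _ hS, ?_, ?_⟩
  · rintro _ ⟨r, _, s, hs, rfl⟩
    exact Subgroup.mul_mem _ (Subgroup.mem_sup_right ⟨r, rfl⟩) (Subgroup.mem_sup_left (hSH hs))
  · intro g hg
    obtain ⟨h, hh, k, rfl⟩ := mem_sup_zpowers ht hg
    have h2 : (t ^ (k % j))⁻¹ ∈ Subgroup.normalizer (H : Set G) :=
      Subgroup.inv_mem _ (Subgroup.zpow_mem _ ht _)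
    have h3 := (h2 h).1 hh
    rw [inv_inv] at h3
    obtain ⟨s, hs, hsm⟩ := hcov _ h3
    refine ⟨_, ⟨k % j, ⟨Int.emod_nonneg _ hj, Int.emod_lt_abs _ hj⟩, s, hs, rfl⟩, ?_⟩
    have h4 : (t ^ (k % j) * s)⁻¹ * (h * t ^ k) =
        s⁻¹ * ((t ^ (k % j))⁻¹ * h * t ^ (k % j)) * (t ^ j) ^ (k / j) := by
      conv_lhs => rw [← Int.emod_add_mul_ediv k j]
      rw [zpow_add, zpow_mul, Int.add_mul_emod_self_left, Int.emod_emod]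
      group
    beta_reduce
    rw [h4]
    exact M.mul_mem (hAM hsm) (M.zpow_mem htj _)

/-- An induction principle for polycyclic groups: a property `P` of subgroups that holds for `⊥`,
passes to smaller subgroups and can be extended from `L` to `L ⋊ ⟨t ^ j⟩` for some `j ≠ 0`,
whenever `t` normalizes `L` and has infinite order modulo `L`, holds for a subgroup of finite index.
One climbs the derived series, adjoining the generators of each term one at a time, and replaces
`L` by a subgroup of finite index normalized by the next generator. -/
theorem exists_finiteIndex_of_step (hG : IsPolycyclic G) (P : Subgroup G → Prop) (h0 : P ⊥)
    (hanti : ∀ L L' : Subgroup G, L' ≤ L → P L → P L')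
    (hstep : ∀ (L : Subgroup G) (t : G), P L → t ∈ Subgroup.normalizer (L : Set G) →
      (∀ k : ℤ, t ^ k ∈ L → k = 0) → ∃ j : ℤ, j ≠ 0 ∧ P (L ⊔ Subgroup.zpowers (t ^ j))) :
    ∃ L : Subgroup G, L.FiniteIndex ∧ P L := by
  obtain ⟨hsol, hfg⟩ := hG
  let Good : Subgroup G → Prop := fun K => ∃ L ≤ K, L.relIndex K ≠ 0 ∧ P L
  have good_step : ∀ (H : Subgroup G) (t : G), Good H → t ∈ Subgroup.normalizer (H : Set G) →
      Good (H ⊔ Subgroup.zpowers t) := by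
    rintro H t ⟨L, hLH, hL, hPL⟩ ht
    by_cases hinf : ∀ k : ℤ, t ^ k ∈ L → k = 0
    · obtain ⟨X, hXL, hXH, hX, hn⟩ := exists_normalized_le (hfg H) hL
      obtain ⟨j, hj, hP⟩ := hstep X t (hanti _ _ hXL hPL) (hn ht) (fun k hk => hinf k (hXL hk))
      refine ⟨_, ?_, ?_, hP⟩
      · refine sup_le_sup hXH ?_
        rw [Subgroup.zpowers_le]
        exact ⟨j, rfl⟩
      · exact relIndex_sup_zpowers hX le_sup_left ht hj
          (Subgroup.mem_sup_right (Subgroup.mem_zpowers _))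
    · push Not at hinf
      obtain ⟨k, hk, hk0⟩ := hinf
      exact ⟨L, hLH.trans le_sup_left, relIndex_sup_zpowers hL le_rfl ht hk0 hk, hPL⟩
  have good_derived : ∀ i, Good (derivedSeries G (i + 1)) → Good (derivedSeries G i) := by
    intro i hi
    obtain ⟨S, hS⟩ := hfg (derivedSeries G i)
    have hle : derivedSeries G (i + 1) ≤ derivedSeries G i := derivedSeries_antitone _ (Nat.le_succ i)
    have key : ∀ T : Finset G, T ⊆ S → Good (derivedSeries G (i + 1) ⊔ Subgroup.closure (T : Set G)) := by
      classical
      intro T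
      induction T using Finset.induction_on with
      | empty => intro _; simpa using hi
      | insert x T _ ih =>
        intro hT
        have hx : x ∈ derivedSeries G i := hS ▸ Subgroup.subset_closure (hT (Finset.mem_insert_self x T))
        have hT' : T ⊆ S := (Finset.subset_insert x T).trans hT
        have hD : derivedSeries G (i + 1) ⊔ Subgroup.closure (T : Set G) ≤ derivedSeries G i := by
          refine sup_le hle ?_
          rw [← hS]
          exact Subgroup.closure_mono hT'
        have h1 := good_step _ x (ih hT') ?_
        · rwa [sup_assoc, Subgroup.zpowers_eq_closure, ← Subgroup.closure_union, Set.union_comm,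
            ← Set.insert_eq, ← Finset.coe_insert] at h1
        · have : Subgroup.zpowers x ≤ Subgroup.normalizer
            ((derivedSeries G (i + 1) ⊔ Subgroup.closure (T : Set G) : Subgroup G) : Set G) := by
            rw [Subgroup.le_normalizer_iff]
            rintro _ ⟨k, rfl⟩ h hh
            have h2 : x ^ k * h * (x ^ k)⁻¹ * h⁻¹ ∈ derivedSeries G (i + 1) :=
              Subgroup.commutator_mem_commutator (Subgroup.zpow_mem _ hx k) (hD hh)
            have h3 : x ^ k * h * (x ^ k)⁻¹ =
                x ^ k * h * (x ^ k)⁻¹ * h⁻¹ * h := by group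
            beta_reduce
            rw [h3]
            exact Subgroup.mul_mem _ (Subgroup.mem_sup_left h2) hh
          exact this (Subgroup.mem_zpowers x)
    have := key S subset_rfl
    rwa [hS, sup_eq_right.2 hle] at this
  have hSol : Group.IsSolvable G := hsol
  obtain ⟨n, hn⟩ := hSol.solvable
  have good_n : Good (derivedSeries G n) := by
    rw [hn]
    exact ⟨⊥, le_rfl, by simp, h0⟩
  have good_0 : ∀ m, Good (derivedSeries G m) → Good (derivedSeries G 0) := by
    intro m
    induction m with
    | zero => exact id
    | succ m ih => exact fun h => ih (good_derived m h)
  obtain ⟨L, _, hL, hP⟩ := good_0 n good_n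
  refine ⟨L, ⟨?_⟩, hP⟩
  simpa using hL

/-- A polycyclic group has a subgroup of finite index that is poly-(infinite cyclic). -/
theorem exists_zchain (hG : IsPolycyclic G) : ∃ L : Subgroup G, L.FiniteIndex ∧ ZChain ⊥ L := by
  refine exists_finiteIndex_of_step hG (fun L => ZChain ⊥ L) .refl ?_ ?_
  · intro L L' h hL
    have := hL.inf L'
    rwa [bot_inf_eq, inf_eq_right.2 h] at this
  · intro L t hL ht hinf
    refine ⟨1, one_ne_zero, hL.tail ?_⟩
    rw [zpow_one]
    exact ZStep.of_sup ht hinf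

end FiniteIndex

/-! ### The theorem of Lie–Kolchin–Maltsev -/

section LieKolchin

universe u v

variable {G : Type*} [Group G] {V : Type*} [AddCommGroup V] [Module ℂ V]

theorem rho_mul_apply (ρ : G →* Module.End ℂ V) (g h : G) (v : V) :
    ρ (g * h) v = ρ g (ρ h v) := by rw [map_mul]; rfl

theorem rho_inv_apply (ρ : G →* Module.End ℂ V) (g : G) (v : V) :
    ρ g⁻¹ (ρ g v) = v := by rw [← rho_mul_apply]; simp

/-- The subgroup of the elements that have both `v` and `w` as eigenvectors, with the same
eigenvalue. -/
def eigSub (ρ : G →* Module.End ℂ V) (v w : V) : Subgroup G where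
  carrier := {g | ∃ c : ℂ, ρ g v = c • v ∧ ρ g w = c • w}
  one_mem' := ⟨1, by simp, by simp⟩
  mul_mem' := by
    rintro g h ⟨c, h1, h2⟩ ⟨d, h3, h4⟩
    refine ⟨d * c, ?_, ?_⟩
    · rw [rho_mul_apply, h3, map_smul, h1, smul_smul]
    · rw [rho_mul_apply, h4, map_smul, h2, smul_smul]
  inv_mem' := by
    rintro g ⟨c, h1, h2⟩
    have key : ∀ x : V, ρ g x = c • x → ρ g⁻¹ x = c⁻¹ • x := by
      intro x hx
      have h3 : c • ρ g⁻¹ x = x := by rw [← map_smul, ← hx, rho_inv_apply]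
      by_cases hc : c = 0
      · rw [hc, zero_smul] at h3
        rw [← h3]; simp
      · rw [eq_inv_smul_iff₀ hc, h3]
    exact ⟨c⁻¹, key v h1, key w h2⟩

/-- Let `t` normalize a finitely generated `L` with a common eigenvector `v` of character `χ`. The
characters of the eigenvectors `t^j v` are the conjugates of `χ`; there are only finitely many of
them, as the generators of `L` have finitely many eigenvalues. Hence some `t^j`, `j ≠ 0`, preserves
one of the weight spaces `W` of `L`, and it has an eigenvector there. -/
theorem exists_eigenvector_step [FiniteDimensional ℂ V] (ρ : G →* Module.End ℂ V)
    {L : Subgroup G} (hfg : L.FG) {t : G} (ht : t ∈ Subgroup.normalizer (L : Set G))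
    {v : V} (hv : v ≠ 0) (hL : ∀ g ∈ L, ∃ c : ℂ, ρ g v = c • v) :
    ∃ j : ℤ, j ≠ 0 ∧ ∃ w : V, w ≠ 0 ∧ ∀ g ∈ L ⊔ Subgroup.zpowers (t ^ j), ∃ c : ℂ, ρ g w = c • w := by
  classical
  obtain ⟨S, hS⟩ := hfg
  choose! χ hχ using hL
  have hconj : ∀ (j : ℤ), ∀ g ∈ L, (t ^ j)⁻¹ * g * t ^ j ∈ L := by
    intro j g hg
    have h2 : (t ^ j)⁻¹ ∈ Subgroup.normalizer (L : Set G) :=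
      Subgroup.inv_mem _ (Subgroup.zpow_mem _ ht _)
    simpa using (h2 g).1 hg
  have hv0 : ∀ j : ℤ, ρ (t ^ j) v ≠ 0 := by
    intro j h
    apply hv
    rw [← rho_inv_apply ρ (t ^ j) v, h, map_zero]
  let χ' : ℤ → G → ℂ := fun j g => χ ((t ^ j)⁻¹ * g * t ^ j)
  have hχ' : ∀ (j : ℤ), ∀ g ∈ L, ρ g (ρ (t ^ j) v) = χ' j g • ρ (t ^ j) v := by
    intro j g hg
    rw [← map_smul, ← hχ _ (hconj j g hg), ← rho_mul_apply, ← rho_mul_apply]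
    congr 2
    group
  have hSL : ∀ s ∈ S, s ∈ L := fun s hs => hS ▸ Subgroup.subset_closure hs
  -- pigeonhole on the finitely many eigenvalues of the generators
  let f : ℤ → (∀ s : S, Module.End.Eigenvalues (ρ (s : G))) := fun j s =>
    ⟨χ' j s, Module.End.hasEigenvalue_of_hasEigenvector (Module.End.hasEigenvector_iff.2
      ⟨Module.End.mem_eigenspace_iff.2 (hχ' j s (hSL s s.2)), hv0 j⟩)⟩
  obtain ⟨i, j, hij, heq⟩ := Finite.exists_ne_map_eq_of_infinite f
  have heqL : ∀ g ∈ L, χ' i g = χ' j g := by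
    have h1 : L ≤ eigSub ρ (ρ (t ^ i) v) (ρ (t ^ j) v) := by
      rw [← hS, Subgroup.closure_le]
      intro s hs
      have h2 : χ' i s = χ' j s := congrArg Subtype.val (congrFun heq ⟨s, hs⟩)
      exact ⟨χ' i s, hχ' i s (hSL s hs), h2 ▸ hχ' j s (hSL s hs)⟩
    intro g hg
    obtain ⟨c, hc1, hc2⟩ := h1 hg
    rw [hχ' i g hg] at hc1
    rw [hχ' j g hg] at hc2
    rw [smul_left_injective ℂ (hv0 i) hc1, smul_left_injective ℂ (hv0 j) hc2]
  let W : Submodule ℂ V :=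
    { carrier := {w | ∀ g ∈ L, ρ g w = χ' i g • w}
      add_mem' := fun ha hb g hg => by rw [map_add, ha g hg, hb g hg, smul_add]
      zero_mem' := fun g _ => by simp
      smul_mem' := fun c a ha g hg => by rw [map_smul, ha g hg, smul_comm] }
  have hW : ∀ w ∈ W, ρ (t ^ (j - i)) w ∈ W := by
    intro w hw g hg
    have h1 : ρ g (ρ (t ^ (j - i)) w) =
        ρ (t ^ (j - i)) (ρ ((t ^ (j - i))⁻¹ * g * t ^ (j - i)) w) := by
      rw [← rho_mul_apply, ← rho_mul_apply]
      congr 2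
      group
    rw [h1, hw _ (hconj _ g hg), map_smul, heqL g hg]
    congr 1
    simp only [χ']
    congr 1
    rw [zpow_sub]
    group
  have : Nontrivial W := ⟨⟨⟨_, hχ' i⟩, 0, fun h => hv0 i (congrArg Subtype.val h)⟩⟩
  obtain ⟨c, hc⟩ := Module.End.exists_eigenvalue ((ρ (t ^ (j - i))).restrict hW)
  obtain ⟨w, hw⟩ := hc.exists_hasEigenvector
  refine ⟨j - i, sub_ne_zero.2 hij.symm, w, fun h => hw.2 (Subtype.ext h), ?_⟩
  have h1 : L ⊔ Subgroup.zpowers (t ^ (j - i)) ≤ eigSub ρ (w : V) w := by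
    refine sup_le ?_ ?_
    · intro g hg
      exact ⟨_, w.2 g hg, w.2 g hg⟩
    · rw [Subgroup.zpowers_le]
      have := congrArg Subtype.val hw.apply_eq_smul
      exact ⟨c, this, this⟩
  intro g hg
  obtain ⟨c, hc, _⟩ := h1 hg
  exact ⟨c, hc⟩

/-- Every complex representation of a polycyclic group has a common eigenvector for a subgroup of
finite index. -/
theorem exists_eigenvector (hG : IsPolycyclic G) [FiniteDimensional ℂ V] [Nontrivial V]
    (ρ : G →* Module.End ℂ V) : ∃ L : Subgroup G, L.FiniteIndex ∧
      ∃ v : V, v ≠ 0 ∧ ∀ g ∈ L, ∃ c : ℂ, ρ g v = c • v := by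
  refine exists_finiteIndex_of_step hG
    (fun L => ∃ v : V, v ≠ 0 ∧ ∀ g ∈ L, ∃ c : ℂ, ρ g v = c • v) ?_ ?_ ?_
  · obtain ⟨v, hv⟩ := exists_ne (0 : V)
    refine ⟨v, hv, fun g hg => ⟨1, ?_⟩⟩
    rw [Subgroup.mem_bot.1 hg]; simp
  · rintro L L' h ⟨v, hv, hL⟩
    exact ⟨v, hv, fun g hg => hL g (h hg)⟩
  · rintro L t ⟨v, hv, hL⟩ ht -
    exact exists_eigenvector_step ρ (hG.2 L) ht hv hL

theorem commutator_fix (ρ : G →* Module.End ℂ V) {L : Subgroup G} {v : V}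
    (hL : ∀ g ∈ L, ∃ c : ℂ, ρ g v = c • v) : ∀ g ∈ ⁅L, L⁆, ρ g v = v := by
  let Fx : Subgroup G :=
    { carrier := {g | ρ g v = v}
      one_mem' := by simp
      mul_mem' := fun {a b} ha hb => by
        change ρ (a * b) v = v
        rw [rho_mul_apply, hb, ha]
      inv_mem' := fun {a} ha => by
        change ρ a⁻¹ v = v
        conv_lhs => rw [← (ha : ρ a v = v), rho_inv_apply] }
  have : ⁅L, L⁆ ≤ Fx := by
    rw [Subgroup.commutator_le]
    intro g hg h hh
    change ρ (g * h * g⁻¹ * h⁻¹) v = v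
    obtain ⟨c, hc⟩ := hL g hg
    obtain ⟨d, hd⟩ := hL h hh
    obtain ⟨e, he⟩ := hL _ (L.inv_mem (L.mul_mem hh hg))
    have h1 : ρ (g * h) v = ρ (h * g) v := by
      rw [rho_mul_apply, rho_mul_apply, hc, hd, map_smul, map_smul, hc, hd, smul_comm]
    have h2 : g * h * g⁻¹ * h⁻¹ = (g * h) * (h * g)⁻¹ := by group
    rw [h2, rho_mul_apply, he, map_smul, h1, ← map_smul, ← he, ← rho_mul_apply]
    simp
  exact fun g hg => this hg

theorem Unip.mono {G M : Type*} [AddCommGroup M] {ρ : G → M → M} {U U' : Set G} (h : Unip ρ U)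
    (hU : U' ⊆ U) : Unip ρ U' := by
  obtain ⟨k, F, h0, h1, h2⟩ := h
  exact ⟨k, F, h0, h1, fun u hu => h2 u (hU hu)⟩

/-- The theorem of Lie–Kolchin–Maltsev: in a finite-dimensional complex representation of a
polycyclic group, the commutator subgroup of some subgroup of finite index acts unipotently. -/
theorem lieKolchin (n : ℕ) : ∀ {G : Type u} [Group G] {V : Type v} [AddCommGroup V] [Module ℂ V]
    [FiniteDimensional ℂ V] (_ : IsPolycyclic G) (_ : Module.finrank ℂ V = n)
    (ρ : G →* Module.End ℂ V), ∃ L : Subgroup G, L.FiniteIndex ∧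
      Unip (fun g m => ρ g m) ((⁅L, L⁆ : Subgroup G) : Set G) := by
  classical
  induction n with
  | zero =>
    intro G _ V _ _ _ hG hV ρ
    have := Module.finrank_zero_iff.1 hV
    refine ⟨⊤, inferInstance, 0, fun _ => ⊥, rfl, ?_, ?_⟩
    · intro w _; exact Subsingleton.elim _ _
    · intro u _ w m _
      exact Subsingleton.elim _ _
  | succ n ih =>
    intro G _ V _ _ _ hG hV ρ
    have : Nontrivial V := Module.nontrivial_of_finrank_eq_succ hV
    obtain ⟨L, hL, v, hv, hLv⟩ := exists_eigenvector hG ρ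
    let W : Submodule ℂ V := Submodule.span ℂ {v}
    have hW : ∀ g : L, W ≤ W.comap (ρ g) := by
      intro g
      rw [Submodule.span_singleton_le_iff_mem, Submodule.mem_comap]
      obtain ⟨c, hc⟩ := hLv g g.2
      rw [hc]
      exact W.smul_mem c (Submodule.mem_span_singleton_self v)
    let ρ' : L →* Module.End ℂ (V ⧸ W) :=
      { toFun := fun g => W.mapQ W (ρ g) (hW g)
        map_one' := by ext x; simp
        map_mul' := fun g h => by ext x; simp }
    have hrank : Module.finrank ℂ (V ⧸ W) = n := by
      have h1 := Submodule.finrank_quotient_add_finrank W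
      rw [finrank_span_singleton hv] at h1
      omega
    obtain ⟨L', hL', hU⟩ := ih (hG.of_injective L.subtype L.subtype_injective) hrank ρ'
    have hle : L'.map L.subtype ≤ L := Subgroup.map_subtype_le L'
    refine ⟨L'.map L.subtype, ⟨?_⟩, ?_⟩
    · rw [Subgroup.index_map_subtype]
      exact mul_ne_zero hL'.index_ne_zero hL.index_ne_zero
    · have hmem : ∀ u ∈ ⁅L'.map L.subtype, L'.map L.subtype⁆, ∃ u' : L, u' ∈ ⁅L', L'⁆ ∧ (u' : G) = u := by
        intro u hu
        rw [← Subgroup.map_commutator] at hu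
        exact hu
      refine hU.ext (fun g => if h : g ∈ L then ⟨g, h⟩ else 1) ?_ W.mkQ.toAddMonoidHom ?_ ?_
      · intro u hu
        obtain ⟨u', hu', rfl⟩ := hmem u hu
        simpa using hu'
      · intro u hu m
        obtain ⟨u', hu', rfl⟩ := hmem u hu
        simp [ρ']
      · intro u hu m hm
        have h1 : m ∈ W := by simpa using hm
        obtain ⟨c, rfl⟩ := Submodule.mem_span_singleton.1 h1
        rw [map_smul, commutator_fix ρ hLv u (Subgroup.commutator_mono hle hle hu)]

open scoped TensorProduct in
/-- Lie–Kolchin–Maltsev for a finitely generated abelian group `A`: modulo its torsion subgroup `T`, `A`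
embeds into a complex representation, and a subgroup of finite index acts trivially on the finite
group `T`. -/
theorem exists_unip_of_finite {G A : Type*} [Group G] (hG : IsPolycyclic G) [AddCommGroup A]
    [Module.Finite ℤ A] (ρ : G →* Module.End ℤ A) : ∃ L : Subgroup G, L.FiniteIndex ∧
      Unip (fun g m => ρ g m) ((⁅L, L⁆ : Subgroup G) : Set G) := by
  let T := Submodule.torsion ℤ A
  have hTfin : Finite T := Module.finite_of_fg_torsion _ (Submodule.torsion_isTorsion)
  have hT : ∀ g, T ≤ T.comap (ρ g) := by
    rintro g x ⟨a, ha⟩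
    refine ⟨a, ?_⟩
    have h1 : (a : ℤ) • x = 0 := ha
    change (a : ℤ) • ρ g x = 0
    rw [← map_smul, h1, map_zero]
  let σ : G →* Module.End ℤ (A ⧸ T) :=
    { toFun := fun g => T.mapQ T (ρ g) (hT g)
      map_one' := by ext x; simp
      map_mul' := fun g h => by ext x; simp }
  let τ : G →* Module.End ℤ T :=
    { toFun := fun g => (ρ g).restrict (hT g)
      map_one' := by ext x; simp
      map_mul' := fun g h => by ext x; simp }
  have : Finite (Module.End ℤ T) := Finite.of_injective (fun f : Module.End ℤ T => (f : T → T))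
    DFunLike.coe_injective
  have hτ : τ.ker.FiniteIndex := by
    rw [← MonoidHom.ker_toHomUnits]
    infer_instance
  have : Module.Free ℤ (A ⧸ T) := inferInstance
  let σ' : G →* Module.End ℂ (ℂ ⊗[ℤ] (A ⧸ T)) :=
    (Module.End.baseChangeHom ℤ ℂ (A ⧸ T)).toMonoidHom.comp σ
  obtain ⟨L, hL, hU⟩ := lieKolchin _ hG rfl σ'
  refine ⟨L ⊓ τ.ker, inferInstance, ?_⟩
  have hinj : Function.Injective (TensorProduct.mk ℤ ℂ (A ⧸ T) 1) :=
    Module.Flat.tensorProduct_mk_injective ℤ (A ⧸ T) ℂ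
  refine hU.ext id ?_ ((TensorProduct.mk ℤ ℂ (A ⧸ T) 1).comp T.mkQ).toAddMonoidHom ?_ ?_
  · intro u hu
    exact Subgroup.commutator_mono inf_le_left inf_le_left hu
  · intro u _ m
    change (1 : ℂ) ⊗ₜ[ℤ] T.mkQ (ρ u m) = (LinearMap.baseChange ℂ (σ u)) (1 ⊗ₜ[ℤ] T.mkQ m)
    rw [LinearMap.baseChange_tmul]
    rfl
  · intro u hu m hm
    have h1 : T.mkQ m = 0 := hinj (by simpa using hm)
    have h2 : m ∈ T := by simpa using h1
    have h3 : ⁅L ⊓ τ.ker, L ⊓ τ.ker⁆ ≤ τ.ker :=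
      (Subgroup.commutator_mono inf_le_right inf_le_right).trans (Subgroup.commutator_le_left _ _)
    have h4 : τ u = 1 := h3 hu
    exact congrArg (fun f : Module.End ℤ T => ((f ⟨m, h2⟩ : T) : A)) h4

end LieKolchin

/-! ### Nilpotency of the commutator subgroup up to finite index -/

section Nilpotent

variable {G : Type*} [Group G]

/-- The action of `G` by conjugation on the abelianization of a normal subgroup `D`, written
additively. -/
noncomputable def abConj (D : Subgroup G) [D.Normal] :
    G →* Module.End ℤ (Additive (Abelianization D)) where
  toFun g := (MonoidHom.toAdditive
    (Abelianization.map (MulAut.conjNormal g : MulAut D).toMonoidHom)).toIntLinearMap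
  map_one' := by
    refine LinearMap.ext fun x => ?_
    obtain ⟨d, hd⟩ := QuotientGroup.mk_surjective x.toMul
    have hx : x = Additive.ofMul (Abelianization.of d) := hd.symm
    rw [hx]
    change Additive.ofMul (Abelianization.of (MulAut.conjNormal (1 : G) d)) = _
    rw [map_one]
    rfl
  map_mul' g h := by
    refine LinearMap.ext fun x => ?_
    obtain ⟨d, hd⟩ := QuotientGroup.mk_surjective x.toMul
    have hx : x = Additive.ofMul (Abelianization.of d) := hd.symm
    rw [hx]
    change Additive.ofMul (Abelianization.of (MulAut.conjNormal (g * h) d)) = _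
    rw [map_mul]
    rfl

theorem abConj_of (D : Subgroup G) [D.Normal] (g : G) (d : D) :
    abConj D g (Additive.ofMul (Abelianization.of d)) =
      Additive.ofMul (Abelianization.of (MulAut.conjNormal g d)) := rfl

theorem finite_ab (D : Subgroup G) (hD : D.FG) : Module.Finite ℤ (Additive (Abelianization D)) := by
  rw [Module.Finite.iff_addGroup_fg]
  have : Group.FG D := (Group.fg_iff_subgroup_fg D).2 hD
  have : Group.FG (Abelianization D) := Group.fg_of_surjective (f := Abelianization.of)
    QuotientGroup.mk_surjective
  infer_instance

/-- If `C` acts unipotently on the abelianization of `D` and its lower central series reaches `D`,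
then it reaches `[D, D]`: every further commutator with `C` descends one step in the filtration. -/
theorem lowerCentralSeries_le_of_unip (D C : Subgroup G) [D.Normal]
    (hU : Unip (fun g m => abConj D g m) (C : Set G)) (j : ℕ) (hj : C.lowerCentralSeries j ≤ D) :
    ∃ j', C.lowerCentralSeries j' ≤ ⁅D, D⁆ := by
  obtain ⟨k, F, h0, hk, hu⟩ := hU
  have key : ∀ m ≤ k, ∀ x ∈ C.lowerCentralSeries (j + m),
      ∃ hx : x ∈ D, Additive.ofMul (Abelianization.of (⟨x, hx⟩ : D)) ∈ F (k - m) := by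
    intro m
    induction m with
    | zero =>
      intro _ x hx
      refine ⟨hj hx, ?_⟩
      rw [Nat.sub_zero, hk _ le_rfl]; trivial
    | succ m ih =>
      intro hm
      let E : Subgroup G := ((AddSubgroup.toSubgroup' (F (k - (m + 1)))).comap
        (Abelianization.of : D →* _)).map D.subtype
      have hE : C.lowerCentralSeries (j + m + 1) ≤ E := by
        rw [Subgroup.lowerCentralSeries_succ, Subgroup.commutator_le]
        intro x hx c hc
        obtain ⟨hxD, hxF⟩ := ih (by omega) x hx
        rw [show k - m = k - (m + 1) + 1 by omega] at hxF
        have h1 := hu c hc _ _ hxF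
        beta_reduce at h1
        rw [abConj_of] at h1
        refine ⟨⟨x, hxD⟩ * (MulAut.conjNormal c ⟨x, hxD⟩)⁻¹, ?_, ?_⟩
        · change Additive.ofMul (Abelianization.of (⟨x, hxD⟩ * (MulAut.conjNormal c ⟨x, hxD⟩)⁻¹)) ∈ F (k - (m + 1))
          rw [map_mul, map_inv, ofMul_mul, ofMul_inv, ← sub_eq_add_neg, ← neg_sub]
          exact neg_mem h1
        · change x * ((MulAut.conjNormal c ⟨x, hxD⟩ : D) : G)⁻¹ = x * c * x⁻¹ * c⁻¹
          rw [MulAut.conjNormal_apply]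
          group
      intro x hx
      obtain ⟨d, hd, rfl⟩ := hE hx
      exact ⟨d.2, hd⟩
  refine ⟨j + k, fun x hx => ?_⟩
  obtain ⟨hxD, hx0⟩ := key k le_rfl x hx
  rw [Nat.sub_self, h0, AddSubgroup.mem_bot] at hx0
  have h1 : (⟨x, hxD⟩ : D) ∈ (Abelianization.of : D →* _).ker := hx0
  rw [Abelianization.ker_of] at h1
  rw [← Subgroup.map_subtype_commutator]
  exact ⟨_, h1, rfl⟩

/-- A polycyclic group has a subgroup of finite index whose commutator subgroup is nilpotent: let that
commutator subgroup act unipotently on all factors of the derived series. -/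
theorem exists_nilpotent_commutator (hG : IsPolycyclic G) :
    ∃ L : Subgroup G, L.FiniteIndex ∧ Group.IsNilpotent (commutator L) := by
  obtain ⟨n, hn⟩ := hG.1.solvable
  have h1 : ∀ i : Fin n, ∃ L : Subgroup G, L.FiniteIndex ∧
      Unip (fun g m => abConj (derivedSeries G i) g m) ((⁅L, L⁆ : Subgroup G) : Set G) := by
    intro i
    have := finite_ab _ (hG.2 (derivedSeries G i))
    exact exists_unip_of_finite hG _
  choose L hL hU using h1
  refine ⟨⨅ i, L i, Subgroup.finiteIndex_iInf hL, ?_⟩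
  set K := ⨅ i, L i with hK
  have h2 : ∀ i ≤ n, ∃ j, (⁅K, K⁆ : Subgroup G).lowerCentralSeries j ≤ derivedSeries G i := by
    intro i
    induction i with
    | zero => intro _; exact ⟨0, by simp⟩
    | succ i ih =>
      intro hi
      obtain ⟨j, hj⟩ := ih (by omega)
      refine lowerCentralSeries_le_of_unip (derivedSeries G i) _ ((hU ⟨i, hi⟩).mono ?_) j hj
      exact Subgroup.commutator_mono (iInf_le _ _) (iInf_le _ _)
  obtain ⟨j, hj⟩ := h2 n le_rfl
  rw [hn, le_bot_iff] at hj
  have h3 : Group.IsNilpotent (⁅K, K⁆ : Subgroup G) :=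
    (Subgroup.isNilpotent_iff_lowerCentralSeries _).2 ⟨j, hj⟩
  rw [← Subgroup.map_subtype_commutator] at h3
  rw [Subgroup.isNilpotent_iff_lowerCentralSeries] at h3 ⊢
  obtain ⟨j, hj⟩ := h3
  refine ⟨j, ?_⟩
  rw [← Subgroup.map_lowerCentralSeries] at hj
  exact (Subgroup.map_eq_bot_iff_of_injective _ K.subtype_injective).1 hj

end Nilpotent

/-! ### Faithful representations of polycyclic groups -/

section Assembly

variable {G : Type*} [Group G]

/-- Climbing a chain from `⊥` inside a nilpotent group. -/
theorem goodRep_of_zchain_nilpotent [Group.IsNilpotent G] (hG : IsPolycyclic G) {K : Subgroup G}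
    (h : ZChain ⊥ K) : GoodRep K ⊤ := by
  induction h with
  | refl =>
    refine ⟨0, 1, fun a b _ => Subsingleton.elim a b, 0, fun _ => ⊥, rfl, ?_, ?_⟩
    · intro w _; exact Subsingleton.elim _ _
    · intro u _ w m _; exact Subsingleton.elim _ _
  | @tail H K hH hHK ih =>
    obtain rfl | ⟨hn, t, htK, hgen, hinf⟩ := hHK.exists_gen
    · exact ih
    have hnorm : (H.subgroupOf K).Normal := ⟨fun h hh g => hn g g.2 h hh⟩
    refine GoodRep.step_nilpotent (H.subgroupOf K) ⟨t, htK⟩ ?_ ?_ ?_ ?_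
    · intro g
      obtain ⟨h, hh, k, e⟩ := hgen g g.2
      exact ⟨⟨⟨h, hHK.1 hh⟩, hh⟩, k, Subtype.ext e⟩
    · intro k hk
      exact hinf k hk
    · exact (hG.of_injective K.subtype K.subtype_injective).2 _
    · exact ih.comap (Subgroup.subgroupOfEquivOfLe hHK.1).toMonoidHom
        (Subgroup.subgroupOfEquivOfLe hHK.1).injective (fun _ _ => trivial)

/-- Climbing a chain that starts from the commutator subgroup, which acts unipotently throughout. -/
theorem goodRep_of_zchain_commutator (hG : IsPolycyclic G)
    (h0 : GoodRep (commutator G) ⊤) {K : Subgroup G} (h : ZChain (commutator G) K) :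
    GoodRep K ((commutator G).subgroupOf K) := by
  induction h with
  | refl => rwa [Subgroup.subgroupOf_self]
  | @tail H K hH hHK ih =>
    obtain rfl | ⟨hn, t, htK, hgen, hinf⟩ := hHK.exists_gen
    · exact ih
    have hnorm : (H.subgroupOf K).Normal := ⟨fun h hh g => hn g g.2 h hh⟩
    refine GoodRep.step_abelian (H.subgroupOf K) ⟨t, htK⟩ ?_ ?_ ?_ _ ?_ ?_ ?_
    · intro g
      obtain ⟨h, hh, k, e⟩ := hgen g g.2
      exact ⟨⟨⟨h, hHK.1 hh⟩, hh⟩, k, Subtype.ext e⟩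
    · intro k hk
      exact hinf k hk
    · exact (hG.of_injective K.subtype K.subtype_injective).2 _
    · exact Subgroup.comap_mono (ZChain.le hH)
    · intro g h _
      exact Subgroup.commutator_mem_commutator (Subgroup.mem_top (g : G)) (Subgroup.mem_top (h : G))
    · exact ih.comap (Subgroup.subgroupOfEquivOfLe hHK.1).toMonoidHom
        (Subgroup.subgroupOfEquivOfLe hHK.1).injective (fun _ h => h)

/-- A poly-(infinite cyclic) group with nilpotent commutator subgroup `N` is linear over `ℤ`: first
climb to `N`, then along a chain in the abelianization to a subgroup of finite index. -/
theorem goodRep_of_nilpotent_commutator (hG : IsPolycyclic G) (hZ : ZChain (⊥ : Subgroup G) ⊤)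
    (hN : Group.IsNilpotent (commutator G)) : GoodRep G ⊥ := by
  have h1 : GoodRep (commutator G) ⊤ := by
    have hZN := hZ.comap (commutator G).subtype
    rw [MonoidHom.comap_bot, Subgroup.ker_subtype, Subgroup.comap_top] at hZN
    have h2 := goodRep_of_zchain_nilpotent
      (hG.of_injective _ (commutator G).subtype_injective) hZN
    let e : commutator G ≃* (⊤ : Subgroup (commutator G)) := Subgroup.topEquiv.symm
    exact h2.comap e.toMonoidHom e.injective (fun _ _ => trivial)
  obtain ⟨L, hL, hZL⟩ := exists_zchain
    (hG.of_surjective (Abelianization.of : G →* _) QuotientGroup.mk_surjective)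
  have h2 := hZL.comap (Abelianization.of : G →* _)
  rw [MonoidHom.comap_bot, Abelianization.ker_of] at h2
  have h3 := goodRep_of_zchain_commutator hG h1 h2
  have : (L.comap (Abelianization.of : G →* _)).FiniteIndex := ⟨by
    rw [Subgroup.index_comap_of_surjective L (f := Abelianization.of) QuotientGroup.mk_surjective]
    exact hL.index_ne_zero⟩
  exact GoodRep.of_finiteIndex _ h3

theorem IsPolycyclic.goodRep (hG : IsPolycyclic G) : GoodRep G ⊥ := by
  obtain ⟨L, hL, hZ⟩ := exists_zchain hG
  have hLp := hG.of_injective L.subtype L.subtype_injective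
  have hZL := hZ.comap L.subtype
  rw [MonoidHom.comap_bot, Subgroup.ker_subtype,
    show L.comap L.subtype = ⊤ from Subgroup.subgroupOf_self L] at hZL
  obtain ⟨M, hM, hN⟩ := exists_nilpotent_commutator hLp
  have hZM := hZL.comap M.subtype
  rw [MonoidHom.comap_bot, Subgroup.ker_subtype, Subgroup.comap_top] at hZM
  exact GoodRep.of_finiteIndex L (GoodRep.of_finiteIndex M
    (goodRep_of_nilpotent_commutator (hLp.of_injective _ M.subtype_injective) hZM hN))

end Assembly

/-- (Auslander, Swan) Every polycyclic-by-finite group embeds into `GL(n, ℤ)`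
for some `n`. -/
theorem polycyclicByFinite_linear (Γ : Type*) [Group Γ] (hΓ : IsPolycyclicByFinite Γ) :
    ∃ (n : ℕ) (φ : Γ →* Matrix.GeneralLinearGroup (Fin n) ℤ), Function.Injective φ := by
  obtain ⟨N, -, hN, hfin⟩ := hΓ
  have : N.FiniteIndex := Subgroup.finiteIndex_of_finite_quotient
  exact (GoodRep.of_finiteIndex N hN.goodRep).linear
end

section
/- Let H be a Hopf algebra over a field k. If H is Artinian as a ring (i.e., satisfies the descending chain condition on left ideals), then H is finite-dimensional over k. -/
/-!
The proof has two halves.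

*A nonzero finite-dimensional right ideal exists.*  Let `J` be the Jacobson radical of the Artinian
algebra `H`; it is nilpotent, and `H ⧸ J` is semisimple.  The counit `ε` factors through `H ⧸ J`, so
the corresponding one-dimensional block of `H ⧸ J` provides `f : H` with `ε f = 1` and
`f * h ≡ ε h • f` modulo `J` (`exists_integral_mod_jacobson`).  By Hopkins–Levitzki every power
`J ^ i` is a finitely generated left ideal, hence left multiplication by `f` sends `J ^ i` into a
finite-dimensional space plus `J ^ (i + 1)`.  If `J ^ n = 0`, then `f ^ n * H` is finite-dimensional,
and it is nonzero because `ε (f ^ n) = 1`.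

*A Hopf algebra with a nonzero finite-dimensional right ideal `V` is finite-dimensional* (Sweedler).
The coefficient space `W`, spanned by the elements `∑ v₁ g(v₂)` with `v ∈ V` and `g` a linear
functional, is finite-dimensional; it is again a right ideal, and `∑ v₁ S(v₂) g(v₃) = g(v)` shows
that it contains `1`.  Hence `W = H`.
-/

open TensorProduct Coalgebra

/-! ### A finite-dimensional right ideal in an augmented Artinian algebra -/

/-- In a semisimple ring, the kernel of a ring homomorphism to a field is annihilated from the
left by some element on which the homomorphism takes the value `1`. -/
lemma exists_mul_eq_zero_of_isSemisimpleRing {k R : Type*} [Field k] [Ring R] [IsSemisimpleRing R]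
    (ε : R →+* k) : ∃ c : R, ε c = 1 ∧ ∀ x, ε x = 0 → c * x = 0 := by
  obtain ⟨C, hC⟩ := exists_isCompl (RingHom.ker ε)
  obtain ⟨e, he, c, hc, hec⟩ : ∃ e ∈ RingHom.ker ε, ∃ c ∈ C, e + c = 1 :=
    Submodule.mem_sup.1 (hC.sup_eq_top ▸ Submodule.mem_top)
  have hxc : ∀ x, ε x = 0 → x * c = 0 := fun x hx ↦ by
    have : x * c ∈ RingHom.ker ε ⊓ C :=
      ⟨by simp [RingHom.mem_ker, hx], C.mul_mem_left x hc⟩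
    simpa [hC.inf_eq_bot] using this
  refine ⟨c, by simpa [(RingHom.mem_ker).1 he] using congrArg ε hec, fun x hx ↦ ?_⟩
  -- `y = c * x` satisfies `y * r * y = 0` for all `r`, while semisimple rings are von Neumann regular
  obtain ⟨D, hD⟩ := exists_isCompl (Ideal.span {c * x})
  obtain ⟨s, hs, d, hd, hsd⟩ : ∃ s ∈ Ideal.span {c * x}, ∃ d ∈ D, s + d = 1 :=
    Submodule.mem_sup.1 (hD.sup_eq_top ▸ Submodule.mem_top)
  obtain ⟨r, rfl⟩ := Ideal.mem_span_singleton'.1 hs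
  have h0 : c * x * (r * (c * x)) = 0 := by
    have := hxc (x * r) (by simp [hx])
    calc c * x * (r * (c * x)) = c * (x * r * c) * x := by noncomm_ring
      _ = 0 := by simp [this]
  have h1 : c * x = c * x * d := by
    conv_lhs => rw [← mul_one (c * x), ← hsd, mul_add, h0, zero_add]
  have : c * x ∈ Ideal.span {c * x} ⊓ D :=
    ⟨Ideal.mem_span_singleton_self _, h1 ▸ D.mul_mem_left _ hd⟩
  simpa [hD.inf_eq_bot] using this

/-- An augmented Artinian algebra has an element that behaves like a normalized right integral
modulo the Jacobson radical. -/
lemma exists_integral_mod_jacobson {k H : Type*} [Field k] [Ring H] [Algebra k H]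
    [IsArtinianRing H] (ε : H →ₐ[k] k) :
    ∃ f : H, ε f = 1 ∧ ∀ h, f * h - ε h • f ∈ Ring.jacobson H := by
  have hJ : ∀ a ∈ Ring.jacobson H, (ε : H →+* k) a = 0 := fun a ha ↦ by
    obtain ⟨n, hn⟩ := IsSemiprimaryRing.isNilpotent (R := H)
    have : a ^ n = 0 := by
      have := Ideal.pow_mem_pow ha n
      rwa [hn] at this
    exact eq_zero_of_pow_eq_zero (n := n) (by rw [← map_pow, this, map_zero])
  obtain ⟨c, hc, hcx⟩ :=
    exists_mul_eq_zero_of_isSemisimpleRing (Ideal.Quotient.lift (Ring.jacobson H) (ε : H →+* k) hJ)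
  obtain ⟨f, rfl⟩ := Ideal.Quotient.mk_surjective c
  refine ⟨f, by simpa using hc, fun h ↦ ?_⟩
  have := hcx (Ideal.Quotient.mk _ (h - algebraMap k H (ε h)))
    (by rw [Ideal.Quotient.lift_mk]; simp)
  rw [← map_mul, Ideal.Quotient.eq_zero_iff_mem] at this
  rwa [mul_sub, ← Algebra.commutes, ← Algebra.smul_def] at this

lemma exists_finiteDimensional_mul_jacobson_pow {k H : Type*} [Field k] [Ring H] [Algebra k H]
    [IsArtinianRing H] {ε : H →ₐ[k] k} {f : H}
    (hf : ∀ h, f * h - ε h • f ∈ Ring.jacobson H) (i : ℕ) :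
    ∃ F : Submodule k H, FiniteDimensional k F ∧
      ∀ x ∈ Ring.jacobson H ^ i, ∃ y ∈ F, f * x - y ∈ Ring.jacobson H ^ (i + 1) := by
  classical
  obtain ⟨s, hs⟩ : (Ring.jacobson H ^ i).FG := IsNoetherian.noetherian _
  refine ⟨Submodule.span k ((s.image (f * ·) : Finset H) : Set H), inferInstance, fun x hx ↦ ?_⟩
  rw [← hs] at hx
  induction hx using Submodule.span_induction with
  | zero => exact ⟨0, zero_mem _, by simp⟩
  | add x y _ _ hx hy =>
    obtain ⟨a, ha, hax⟩ := hx
    obtain ⟨b, hb, hby⟩ := hy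
    exact ⟨a + b, add_mem ha hb, by convert add_mem hax hby using 1; noncomm_ring⟩
  | mem x hx =>
    exact ⟨f * x, Submodule.subset_span (by simpa using ⟨x, hx, rfl⟩), by simp⟩
  | smul a x hx ih =>
    obtain ⟨y, hy, hxy⟩ := ih
    refine ⟨ε a • y, Submodule.smul_mem _ _ hy, ?_⟩
    have h1 : (f * a - ε a • f) * x ∈ Ring.jacobson H ^ (i + 1) := by
      rw [Ideal.IsTwoSided.pow_succ]
      exact Ideal.mul_mem_mul (hf a) (hs ▸ hx)
    have h2 : ε a • (f * x - y) ∈ Ring.jacobson H ^ (i + 1) := by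
      rw [Algebra.smul_def]
      exact Ideal.mul_mem_left _ _ hxy
    convert add_mem h1 h2 using 1
    rw [sub_mul, smul_mul_assoc, smul_sub, smul_eq_mul, mul_assoc]
    abel

/-- An augmented Artinian algebra has a nonzero finite-dimensional right ideal. -/
lemma exists_finiteDimensional_mul {k H : Type*} [Field k] [Ring H] [Algebra k H]
    [IsArtinianRing H] (ε : H →ₐ[k] k) :
    ∃ g : H, g ≠ 0 ∧ FiniteDimensional k (LinearMap.mulLeft k g).range := by
  obtain ⟨f, hf1, hf⟩ := exists_integral_mod_jacobson ε
  have key : ∀ n : ℕ, ∃ F : Submodule k H, FiniteDimensional k F ∧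
      ∀ x, ∃ y ∈ F, f ^ n * x - y ∈ Ring.jacobson H ^ n := by
    intro n
    induction n with
    | zero => exact ⟨⊥, inferInstance, fun x ↦ ⟨0, zero_mem _, by simp [Submodule.pow_zero]⟩⟩
    | succ n ih =>
      obtain ⟨F, hF, h⟩ := ih
      obtain ⟨G, hG, h'⟩ := exists_finiteDimensional_mul_jacobson_pow hf n
      refine ⟨F.map (LinearMap.mulLeft k f) ⊔ G, inferInstance, fun x ↦ ?_⟩
      obtain ⟨y, hy, hxy⟩ := h x
      obtain ⟨z, hz, hyz⟩ := h' _ hxy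
      refine ⟨f * y + z, Submodule.add_mem_sup ⟨y, hy, rfl⟩ hz, ?_⟩
      convert hyz using 1
      rw [pow_succ']
      noncomm_ring
  obtain ⟨n, hn⟩ := IsSemiprimaryRing.isNilpotent (R := H)
  obtain ⟨F, hF, h⟩ := key n
  refine ⟨f ^ n, fun h0 ↦ ?_, Submodule.finiteDimensional_of_le (S₂ := F) ?_⟩
  · simpa [hf1] using congrArg ε h0
  · rintro _ ⟨x, rfl⟩
    obtain ⟨y, hy, hxy⟩ := h x
    rw [hn, Submodule.zero_eq_bot, Submodule.mem_bot, sub_eq_zero] at hxy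
    simpa [hxy] using hy

/-! ### Finite-dimensional right ideals of Hopf algebras -/

/-- The contraction `x ⊗ y ↦ g y • x` of the second tensor factor by a functional `g`. -/
noncomputable def contractSnd {k H : Type*} [Field k] [Ring H] [Algebra k H] :
    Module.Dual k H →ₗ[k] H ⊗[k] H →ₗ[k] H :=
  LinearMap.compr₂ (LinearMap.lTensorHom H) (TensorProduct.rid k H).toLinearMap

@[simp]
lemma contractSnd_tmul {k H : Type*} [Field k] [Ring H] [Algebra k H] (g : Module.Dual k H)
    (x y : H) : contractSnd g (x ⊗ₜ[k] y) = g y • x := by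
  simp [contractSnd]

lemma finiteDimensional_range_contractSnd {k H : Type*} [Field k] [Ring H] [Algebra k H]
    (z : H ⊗[k] H) : FiniteDimensional k (contractSnd.flip z).range := by
  induction z with
  | zero =>
    rw [map_zero, LinearMap.range_zero]
    infer_instance
  | tmul x y =>
    refine Submodule.finiteDimensional_of_le (S₂ := Submodule.span k {x}) ?_
    rintro _ ⟨g, rfl⟩
    exact Submodule.mem_span_singleton.2 ⟨g y, by simp⟩
  | add a b ha hb =>
    refine Submodule.finiteDimensional_of_le
      (S₂ := (contractSnd.flip a).range ⊔ (contractSnd.flip b).range) ?_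
    rintro _ ⟨g, rfl⟩
    exact Submodule.mem_sup.2 ⟨_, ⟨g, rfl⟩, _, ⟨g, rfl⟩, by simp⟩

/-- If all contractions of `z` lie in a right ideal `W`, then so does the image of
`z` under `x ⊗ y ↦ x * L y`. -/
lemma mul_lTensor_mem {k H : Type*} [Field k] [Ring H] [Algebra k H] (W : Submodule k H)
    (hW : ∀ w ∈ W, ∀ h, w * h ∈ W) (z : H ⊗[k] H) (hz : ∀ g, contractSnd g z ∈ W)
    (L : H →ₗ[k] H) : LinearMap.mul' k H (L.lTensor H z) ∈ W := by
  classical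
  let b := Module.Basis.ofVectorSpace k H
  have : z = (TensorProduct.equivFinsuppOfBasisRight b z).sum fun i m ↦ m ⊗ₜ b i := by
    rw [← TensorProduct.equivFinsuppOfBasisRight_symm_apply, LinearEquiv.symm_apply_apply]
  rw [this, Finsupp.sum, map_sum, map_sum]
  refine sum_mem fun i _ ↦ ?_
  rw [LinearMap.lTensor_tmul, LinearMap.mul'_apply, TensorProduct.equivFinsuppOfBasisRight_apply]
  exact hW _ (hz (b.coord i)) _

/-- `∑ Δ(h₁) (1 ⊗ S(h₂)) = h ⊗ 1`. -/
lemma sum_comul_mul_antipode {k H : Type*} [Field k] [Ring H] [HopfAlgebra k H] (h : H) :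
    ∑ i ∈ (ℛ k h).index,
      comul (R := k) ((ℛ k h).left i) * (1 ⊗ₜ[k] HopfAlgebra.antipode k ((ℛ k h).right i)) =
    h ⊗ₜ[k] (1 : H) := by
  let Ψ : H ⊗[k] (H ⊗[k] H) →ₗ[k] H ⊗[k] H :=
    (LinearMap.mul' k H ∘ₗ (HopfAlgebra.antipode k).lTensor H).lTensor H
  have hΨ : ∀ (z : H ⊗[k] H) (r : H), Ψ (TensorProduct.assoc k H H H (z ⊗ₜ r)) =
      z * (1 ⊗ₜ[k] HopfAlgebra.antipode k r) := by
    intro z r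
    induction z with
    | zero => simp
    | tmul x y => simp [Ψ]
    | add x y hx hy => simp only [add_tmul, map_add, hx, hy, add_mul]
  have h1 := congrArg Ψ (coassoc_apply (R := k) h)
  rw [← (ℛ k h).eq] at h1
  simp only [map_sum, LinearMap.rTensor_tmul, LinearMap.lTensor_tmul, hΨ] at h1
  rw [h1]
  simp only [Ψ, LinearMap.lTensor_tmul, LinearMap.comp_apply,
    HopfAlgebra.mul_antipode_lTensor_comul_apply]
  have h2 := congrArg ((Algebra.linearMap k H).lTensor H) (sum_tmul_counit_eq (ℛ k h))
  simpa only [map_sum, LinearMap.lTensor_tmul, Algebra.linearMap_apply, map_one] using h2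

/-- `∑ v₁ S(v₂) g(v₃) = g(v)`. -/
lemma mul_antipode_contract {k H : Type*} [Field k] [Ring H] [HopfAlgebra k H]
    (g : Module.Dual k H) (v : H) :
    LinearMap.mul' k H ((contractSnd g ∘ₗ (HopfAlgebra.antipode k).rTensor H ∘ₗ comul).lTensor H
      (comul (R := k) v)) = algebraMap k H (g v) := by
  let Φ : H ⊗[k] (H ⊗[k] H) →ₗ[k] H := LinearMap.mul' k H ∘ₗ
    (contractSnd g ∘ₗ (HopfAlgebra.antipode k).rTensor H).lTensor H
  have hΦ : ∀ (z : H ⊗[k] H) (r : H), Φ (TensorProduct.assoc k H H H (z ⊗ₜ r)) =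
      g r • LinearMap.mul' k H ((HopfAlgebra.antipode k).lTensor H z) := by
    intro z r
    induction z with
    | zero => simp
    | tmul x y => simp [Φ]
    | add x y hx hy => simp only [add_tmul, map_add, hx, hy, smul_add]
  have h1 := congrArg Φ (coassoc_apply (R := k) v)
  rw [← LinearMap.comp_assoc, LinearMap.lTensor_comp, LinearMap.comp_apply]
  refine h1.symm.trans ?_
  rw [← (ℛ k v).eq]
  simp only [map_sum, LinearMap.rTensor_tmul, hΦ, HopfAlgebra.mul_antipode_lTensor_comul_apply]
  conv_rhs => rw [← sum_counit_smul (ℛ k v)]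
  simp only [map_sum, map_smul, smul_eq_mul, map_mul]
  exact Finset.sum_congr rfl fun i _ ↦ by rw [Algebra.smul_def, Algebra.commutes]

/-- A Hopf algebra with a nonzero finite-dimensional right ideal is finite-dimensional. -/
lemma finiteDimensional_of_rightIdeal {k H : Type*} [Field k] [Ring H] [HopfAlgebra k H]
    (V : Submodule k H) [FiniteDimensional k V] (hV : ∀ v ∈ V, ∀ h, v * h ∈ V)
    {v : H} (hv : v ∈ V) (hv0 : v ≠ 0) : FiniteDimensional k H := by
  classical
  -- the coefficient space of `V`
  let W : Submodule k H := ⨆ u : V, (contractSnd.flip (comul (R := k) (u : H))).range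
  have hcW : ∀ u ∈ V, ∀ g, contractSnd g (comul (R := k) u) ∈ W := fun u hu g ↦
    Submodule.mem_iSup_of_mem (⟨u, hu⟩ : V) ⟨g, rfl⟩
  have hWfin : FiniteDimensional k W := by
    obtain ⟨s, hs⟩ : V.FG := Submodule.fg_iff_finiteDimensional V |>.2 inferInstance
    have := fun u : H ↦ finiteDimensional_range_contractSnd (comul (R := k) u)
    refine Submodule.finiteDimensional_of_le
      (S₂ := ⨆ u : s, (contractSnd.flip (comul (R := k) (u : H))).range) (iSup_le ?_)
    rintro ⟨u, hu⟩ _ ⟨g, rfl⟩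
    change contractSnd.flip (comul (R := k) u) g ∈ _
    rw [← hs] at hu
    clear hv hv0
    induction hu using Submodule.span_induction with
    | zero => simp
    | add x y _ _ hx hy => simpa using add_mem hx hy
    | smul a x _ hx => simpa using Submodule.smul_mem _ a hx
    | mem x hx => exact Submodule.mem_iSup_of_mem (⟨x, hx⟩ : s) ⟨g, rfl⟩
  have hWmul : ∀ w ∈ W, ∀ h, w * h ∈ W := by
    intro w hw h
    induction hw using Submodule.iSup_induction' with
    | zero => simp
    | add x y _ _ hx hy => simpa [add_mul] using add_mem hx hy
    | mem u x hx =>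
      obtain ⟨g, rfl⟩ := hx
      -- `(∑ u₁ g(u₂)) h = ∑ (u h₁)₁ g((u h₁)₂ S(h₂))`
      have h1 : ∀ z : H ⊗[k] H, contractSnd g z * h = contractSnd g (z * (h ⊗ₜ 1)) := by
        intro z
        induction z with
        | zero => simp
        | tmul x y => simp
        | add x y hx hy => simp [add_mul, hx, hy]
      have h2 : ∀ (t : H) (z : H ⊗[k] H),
          contractSnd g (z * (1 ⊗ₜ t)) = contractSnd (g ∘ₗ LinearMap.mulRight k t) z := by
        intro t z
        induction z with
        | zero => simp
        | tmul x y => simp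
        | add x y hx hy => simp [add_mul, hx, hy]
      rw [LinearMap.flip_apply, h1, ← sum_comul_mul_antipode, Finset.mul_sum, map_sum]
      refine sum_mem fun i _ ↦ ?_
      rw [← mul_assoc, ← Bialgebra.comul_mul, h2]
      exact hcW _ (hV _ u.2 _) _
  obtain ⟨g, hg⟩ : ∃ g : Module.Dual k H, g v = 1 := by
    obtain ⟨g, hg⟩ := Module.Projective.exists_dual_ne_zero k hv0
    exact ⟨(g v)⁻¹ • g, by simp [hg]⟩
  have h1W : (1 : H) ∈ W := by
    have := mul_lTensor_mem W hWmul _ (hcW v hv) (contractSnd g ∘ₗ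
      (HopfAlgebra.antipode k).rTensor H ∘ₗ comul)
    rwa [mul_antipode_contract, hg, map_one] at this
  have hWtop : W = ⊤ := eq_top_iff.2 fun h _ ↦ by simpa using hWmul 1 h1W h
  rw [hWtop] at hWfin
  exact Module.finite_def.2 (Module.Finite.iff_fg.1 hWfin)

/-- (Liu–Zhang) An Artinian Hopf algebra over a field is finite-dimensional. -/
theorem hopfAlgebra_finiteDimensional_of_artinian (k : Type*) [Field k]
    (H : Type*) [Ring H] [HopfAlgebra k H] [IsArtinianRing H] :
    FiniteDimensional k H := by
  obtain ⟨g, hg, hfin⟩ := exists_finiteDimensional_mul (Bialgebra.counitAlgHom k H)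
  refine finiteDimensional_of_rightIdeal (LinearMap.mulLeft k g).range ?_
    (v := g) ⟨1, by simp⟩ hg
  rintro _ ⟨x, rfl⟩ h
  exact ⟨x * h, by simp [mul_assoc]⟩
end

section
/- (Molnar) Let H be a commutative Hopf algebra over a field k of characteristic 0. Then H is a Noetherian ring if and only if H is affine, i.e., finitely generated as a k-algebra. -/
/-!
A finitely generated algebra over a field is Noetherian by Hilbert's basis theorem. The content is
the converse, and the argument given works in every characteristic.

Let `H` be Noetherian. Its augmentation ideal `ker ε` is finitely generated, and every element of
`H` lies in a finitely generated Hopf subalgebra (`exists_isHopfSub`): take the matrix `c` of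
coefficients of a finite-dimensional subcomodule and adjoin the entries of `c` and `S c = c⁻¹`.
So there is a finitely generated Hopf subalgebra `K` whose augmentation ideal generates that of `H`,
and it remains to see that `K = H` (`surjective_of_augmentation`). Write `G = Spec H`, `Q = Spec K`
and regard algebra homomorphisms as points, multiplied by convolution.

* `K → H` is a ring epimorphism: if two points of `G` have the same image in `Q`, their quotient
  kills the augmentation ideal of `K`, hence that of `H` (`algHom_ext_of_augmentation`).
* Consequently, with `p` a minimal prime of `K` and `F` the localization of `K` at `p`, the map
  `F → F ⊗[K] H` is surjective (`surjective_of_isEpi`), because `F` is local with nilpotent maximal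
  ideal.
* Let `β : K → H ⊗ F` be the product of the universal point of `G` and the point `v : K → F`
  of `Q`. It is faithfully flat (`faithfullyFlat_conv`). Flatness holds because translations are
  automorphisms. For a closed point `g` of `Q`, the point `g v⁻¹` is flat for the same reason, so it
  lifts to `G` over a nonzero ring, as `K → H` is injective; therefore `g = (g v⁻¹) v` is in the
  image of `Spec β`.
* After base change along `β`, translating back by the point of `G` turns `K → H` into a base change
  of `F → F ⊗[K] H`, which is surjective. By faithfully flat descent `K → H` is surjective
  (`surjective_of_faithfullyFlat`).
-/

namespace MolnarHopf

open TensorProduct Coalgebra Bialgebra HopfAlgebra WithConv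

/-! ### Convolution of algebra homomorphisms -/

section Conv

variable {k : Type*} [Field k]

/-- The convolution product of two algebra homomorphisms `K → B` out of a bialgebra into a
commutative algebra: the product of the two `B`-points of the monoid scheme `Spec K`. -/
noncomputable def conv {K B : Type*} [CommRing K] [Bialgebra k K] [CommRing B] [Algebra k B]
    (f g : K →ₐ[k] B) : K →ₐ[k] B :=
  (toConv f * toConv g).ofConv

/-- The neutral element for convolution. -/
noncomputable def convUnit (k K B : Type*) [Field k] [CommRing K] [Bialgebra k K] [CommRing B]
    [Algebra k B] : K →ₐ[k] B :=
  (1 : WithConv (K →ₐ[k] B)).ofConv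

section Bialg

variable {K B D : Type*} [CommRing K] [Bialgebra k K] [CommRing B] [Algebra k B]
  [CommRing D] [Algebra k D]

lemma conv_apply (f g : K →ₐ[k] B) (x : K) :
    conv f g x = Algebra.TensorProduct.lift f g (fun _ _ ↦ .all ..) (comul (R := k) x) :=
  AlgHom.convMul_apply (toConv f) (toConv g) x

lemma convUnit_apply (x : K) : convUnit k K B x = algebraMap k B (counit x) := rfl

lemma conv_assoc (f g h : K →ₐ[k] B) : conv (conv f g) h = conv f (conv g h) := by
  simp [conv, mul_assoc]

lemma convUnit_conv (f : K →ₐ[k] B) : conv (convUnit k K B) f = f := by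
  simp [conv, convUnit]

lemma conv_convUnit (f : K →ₐ[k] B) : conv f (convUnit k K B) = f := by
  simp [conv, convUnit]

lemma comp_conv (h : B →ₐ[k] D) (f g : K →ₐ[k] B) :
    h.comp (conv f g) = conv (h.comp f) (h.comp g) :=
  AlgHom.comp_convMul_distrib h (toConv f) (toConv g)

lemma comp_convUnit (h : B →ₐ[k] D) : h.comp (convUnit k K B) = convUnit k K D := by
  ext x; simp [convUnit_apply]

lemma conv_comp {H : Type*} [CommRing H] [Bialgebra k H] (f g : H →ₐ[k] B) (i : K →ₐc[k] H) :
    (conv f g).comp (i : K →ₐ[k] H) = conv (f.comp (i : K →ₐ[k] H)) (g.comp (i : K →ₐ[k] H)) :=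
  AlgHom.convMul_comp_bialgHom_distrib (toConv f) (toConv g) i

lemma convUnit_comp {H : Type*} [CommRing H] [Bialgebra k H] (i : K →ₐc[k] H) :
    (convUnit k H B).comp (i : K →ₐ[k] H) = convUnit k K B := by
  ext x
  simp [convUnit_apply]

end Bialg

variable {K B : Type*} [CommRing K] [HopfAlgebra k K] [CommRing B] [Algebra k B]

lemma inv_conv (f : K →ₐ[k] B) : conv (f.comp (antipodeAlgHom k K)) f = convUnit k K B := by
  have h : conv (antipodeAlgHom k K) (AlgHom.id k K) = convUnit k K K :=
    congrArg WithConv.ofConv AlgHom.antipode_id_cancel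
  simpa [comp_conv, comp_convUnit] using congrArg f.comp h

lemma conv_inv (f : K →ₐ[k] B) : conv f (f.comp (antipodeAlgHom k K)) = convUnit k K B := by
  have h : conv (AlgHom.id k K) (antipodeAlgHom k K) = convUnit k K K := by
    apply AlgHom.toLinearMap_injective
    exact congrArg WithConv.ofConv (LinearMap.id_mul_antipode (R := k) (C := K))
  simpa [comp_conv, comp_convUnit] using congrArg f.comp h

/-- The antipode of a commutative Hopf algebra is an involution: `S ∘ S` and `id` are both
convolution inverse to `S`. -/
lemma antipode_comp_antipode :
    (antipodeAlgHom k K).comp (antipodeAlgHom k K) = AlgHom.id k K := by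
  have h1 := inv_conv (antipodeAlgHom k K)
  have h2 := inv_conv (AlgHom.id k K)
  rw [AlgHom.id_comp] at h2
  rw [← conv_convUnit ((antipodeAlgHom k K).comp _), ← h2, ← conv_assoc, h1, convUnit_conv]

lemma antipode_bijective : Function.Bijective (antipodeAlgHom k K) :=
  Function.Involutive.bijective fun x ↦ DFunLike.congr_fun antipode_comp_antipode x

/-! ### Flatness of translations -/

/-- The translation by the point `u` on `Spec (P ⊗ K)`. -/
noncomputable def translate {P : Type*} [CommRing P] [Algebra k P] (u : K →ₐ[k] P) :
    P ⊗[k] K →ₐ[k] P ⊗[k] K :=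
  Algebra.TensorProduct.lift Algebra.TensorProduct.includeLeft
    (conv (Algebra.TensorProduct.includeLeft.comp u) Algebra.TensorProduct.includeRight)
    (fun _ _ ↦ .all ..)

variable {P : Type*} [CommRing P] [Algebra k P]

lemma translate_comp_left (u : K →ₐ[k] P) :
    (translate u).comp Algebra.TensorProduct.includeLeft = Algebra.TensorProduct.includeLeft := by
  ext; simp [translate]

lemma translate_comp_right (u : K →ₐ[k] P) :
    (translate u).comp Algebra.TensorProduct.includeRight =
      conv (Algebra.TensorProduct.includeLeft.comp u) Algebra.TensorProduct.includeRight := by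
  ext; simp [translate]

lemma translate_comp_translate (u u' : K →ₐ[k] P) (h : conv u' u = convUnit k K P) :
    (translate u).comp (translate u') = AlgHom.id k _ := by
  apply Algebra.TensorProduct.ext
  · rw [AlgHom.comp_assoc, translate_comp_left, translate_comp_left, AlgHom.id_comp]
  · change ((translate u).comp (translate u')).comp Algebra.TensorProduct.includeRight =
      (AlgHom.id k _).comp Algebra.TensorProduct.includeRight
    rw [AlgHom.comp_assoc, translate_comp_right, comp_conv, translate_comp_right,
      ← AlgHom.comp_assoc, translate_comp_left, ← conv_assoc, ← comp_conv, h, comp_convUnit,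
      convUnit_conv, AlgHom.id_comp]

lemma translate_bijective (u : K →ₐ[k] P) : Function.Bijective (translate u) := by
  refine Function.bijective_iff_has_inverse.mpr ⟨translate (u.comp (antipodeAlgHom k K)), ?_, ?_⟩
  · exact fun x ↦ DFunLike.congr_fun (translate_comp_translate _ _ (conv_inv u)) x
  · exact fun x ↦ DFunLike.congr_fun (translate_comp_translate _ _ (inv_conv u)) x

lemma flat_includeRight :
    (Algebra.TensorProduct.includeRight : K →ₐ[k] P ⊗[k] K).toRingHom.Flat := by
  have h1 : (Algebra.ofId k P).toRingHom.Flat := .of_isField (Field.toIsField k) _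
  have h2 : (AlgHom.id k K).toRingHom.Flat := .id K
  have h3 : (Algebra.TensorProduct.map (Algebra.ofId k P) (AlgHom.id k K)).toRingHom.Flat :=
    RingHom.Flat.tensorProductMap h1 h2
  have h4 : ((Algebra.TensorProduct.lid k K).symm : K →ₐ[k] k ⊗[k] K).toRingHom.Flat :=
    .of_bijective (Algebra.TensorProduct.lid k K).symm.bijective
  have h5 := h4.comp h3
  convert h5 using 1
  ext x
  simp

/-- If `v` is flat, so is the product `u v`, for the two points taken in `P ⊗ F`: it is `v`
base changed and composed with a translation, which is an automorphism. -/
lemma flat_conv {F : Type*} [CommRing F] [Algebra k F] (u : K →ₐ[k] P) (v : K →ₐ[k] F)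
    (hv : v.toRingHom.Flat) :
    (conv ((Algebra.TensorProduct.includeLeft : P →ₐ[k] P ⊗[k] F).comp u)
      (Algebra.TensorProduct.includeRight.comp v)).toRingHom.Flat := by
  have h1 : (translate u).toRingHom.Flat := .of_bijective (translate_bijective u)
  have h2 : (Algebra.TensorProduct.map (AlgHom.id k P) v).toRingHom.Flat :=
    RingHom.Flat.tensorProductMap (RingHom.Flat.id P) hv
  have h3 := (flat_includeRight (k := k) (K := K) (P := P)).comp (h1.comp h2)
  have h4 : conv ((Algebra.TensorProduct.includeLeft : P →ₐ[k] P ⊗[k] F).comp u)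
      (Algebra.TensorProduct.includeRight.comp v) =
      (Algebra.TensorProduct.map (AlgHom.id k P) v).comp
        ((translate u).comp Algebra.TensorProduct.includeRight) := by
    rw [translate_comp_right, comp_conv]
    congr 1
    ext x
    simp
  rw [h4]
  exact h3

end Conv

/-! ### Ring epimorphisms at a minimal prime -/

section Epi

variable {R A : Type*} [CommRing R] [CommRing A] [Algebra R A]

/-- For a ring epimorphism `R → A`, a linear functional on `A` with values in an `R`-field which
kills `1` is zero, since `a ⊗ a = 1 ⊗ a²` in `A ⊗[R] A`. -/
lemma functional_eq_zero [Algebra.IsEpi R A] {κ : Type*} [Field κ] [Algebra R κ]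
    (φ : A →ₗ[R] κ) (h1 : φ 1 = 0) : φ = 0 := by
  ext a
  have h : a ⊗ₜ[R] a = 1 ⊗ₜ[R] (a * a) := by
    have := (Algebra.isEpi_iff_forall_one_tmul_eq R A).mp ‹_› a
    calc a ⊗ₜ[R] a = (a ⊗ₜ[R] 1) * (1 ⊗ₜ[R] a) := by simp
      _ = 1 ⊗ₜ[R] (a * a) := by rw [← this]; simp
  have h' := congrArg (LinearMap.mul' R κ ∘ₗ TensorProduct.map φ φ) h
  simp only [LinearMap.comp_apply, TensorProduct.map_tmul, LinearMap.mul'_apply, h1,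
    zero_mul] at h'
  simpa using h'

lemma subsingleton_of_nilpotent_smul_eq_top {F M : Type*} [CommRing F] [AddCommGroup M] [Module F M]
    {I : Ideal F} (hI : IsNilpotent I) (h : I • (⊤ : Submodule F M) = ⊤) :
    Subsingleton M := by
  obtain ⟨n, hn⟩ := hI
  have h' : ∀ n : ℕ, I ^ n • (⊤ : Submodule F M) = ⊤ := by
    intro n
    induction n with
    | zero => simp
    | succ n ih => rw [pow_succ, Submodule.mul_smul, h, ih]
  have := h' n
  rw [hn, Ideal.zero_eq_bot, Submodule.bot_smul] at this
  exact (Submodule.subsingleton_iff F).mp (subsingleton_of_bot_eq_top this)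

/-- A ring epimorphism out of a Noetherian ring becomes surjective after localizing at a minimal
prime: the cokernel has no nonzero functional to the residue field, and the maximal ideal of the
localization is nilpotent. -/
lemma surjective_of_isEpi [IsNoetherianRing R] [Algebra.IsEpi R A] (p : Ideal R) [p.IsPrime]
    (hp : p ∈ minimalPrimes R) :
    Function.Surjective
      (algebraMap (Localization.AtPrime p) (Localization.AtPrime p ⊗[R] A)) := by
  set F := Localization.AtPrime p
  have : Ring.KrullDimLE 0 F := .of_isLocalization _ hp _
  have : IsNoetherianRing F := IsLocalization.isNoetherianRing p.primeCompl F inferInstance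
  have hA : IsArtinianRing F := isArtinianRing_iff_krullDimLE_zero.mpr inferInstance
  have hnil : IsNilpotent (IsLocalRing.maximalIdeal F) :=
    (isArtinianRing_iff_isNilpotent_maximalIdeal F).mp hA
  let N : Submodule F (F ⊗[R] A) := LinearMap.range (Algebra.linearMap F (F ⊗[R] A))
  let M := (F ⊗[R] A) ⧸ N
  let m := IsLocalRing.maximalIdeal F
  have key : m • (⊤ : Submodule F M) = ⊤ := by
    by_contra hne
    let Q := M ⧸ (m • (⊤ : Submodule F M))
    have : Nontrivial Q := Submodule.Quotient.nontrivial_iff.mpr hne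
    let : Field (F ⧸ m) := Ideal.Quotient.field m
    obtain ⟨q, hq⟩ := exists_ne (0 : Q)
    obtain ⟨φ, hφ⟩ : ∃ φ : Q →ₗ[F ⧸ m] (F ⧸ m), φ q ≠ 0 := by
      by_contra! h
      exact hq ((Module.forall_dual_apply_eq_zero_iff (F ⧸ m) q).mp h)
    let ψ : (F ⊗[R] A) →ₗ[F] (F ⧸ m) :=
      (φ.restrictScalars F) ∘ₗ (m • (⊤ : Submodule F M)).mkQ ∘ₗ N.mkQ
    have hψ1 : ψ 1 = 0 := by
      have : N.mkQ 1 = 0 := (Submodule.Quotient.mk_eq_zero N).mpr ⟨1, map_one (algebraMap F (F ⊗[R] A))⟩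
      simp only [ψ, LinearMap.comp_apply, this, map_zero]
    let ψ' : A →ₗ[R] (F ⧸ m) :=
      (ψ.restrictScalars R) ∘ₗ (Algebra.TensorProduct.includeRight : A →ₐ[R] F ⊗[R] A).toLinearMap
    have hψ' : ψ' = 0 := functional_eq_zero ψ'
      (by simpa [ψ', Algebra.TensorProduct.one_def] using hψ1)
    have hψ : ψ = 0 := by
      ext a
      simpa [ψ'] using DFunLike.congr_fun hψ' a
    obtain ⟨x, rfl⟩ := Submodule.Quotient.mk_surjective _ q
    obtain ⟨y, rfl⟩ := Submodule.Quotient.mk_surjective _ x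
    exact hφ (DFunLike.congr_fun hψ y)
  have hM : Subsingleton M := subsingleton_of_nilpotent_smul_eq_top hnil key
  have hN : N = ⊤ := Submodule.Quotient.subsingleton_iff.mp hM
  exact LinearMap.range_eq_top.mp hN

lemma mem_range_of_isEpi [IsNoetherianRing R] [Algebra.IsEpi R A] (p : Ideal R) [p.IsPrime]
    (hp : p ∈ minimalPrimes R) {D : Type*} [CommRing D] (i : Localization.AtPrime p →+* D)
    (j : A →+* D)
    (hij : i.comp (algebraMap R (Localization.AtPrime p)) = j.comp (algebraMap R A)) (a : A) :
    j a ∈ i.range := by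
  let : Algebra R D := (j.comp (algebraMap R A)).toAlgebra
  let i' : Localization.AtPrime p →ₐ[R] D := ⟨i, fun r ↦ DFunLike.congr_fun hij r⟩
  let j' : A →ₐ[R] D := ⟨j, fun r ↦ rfl⟩
  obtain ⟨f, hf⟩ := surjective_of_isEpi (A := A) p hp (1 ⊗ₜ a)
  refine ⟨f, ?_⟩
  have := congrArg (Algebra.TensorProduct.lift i' j' (fun _ _ ↦ .all ..)) hf
  simpa [i', j', Algebra.TensorProduct.algebraMap_apply] using this

end Epi

/-! ### Hopf subalgebras containing generators of the augmentation ideal -/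

section Core

variable {k : Type*} [Field k] {K H : Type*} [CommRing K] [HopfAlgebra k K] [CommRing H]
  [HopfAlgebra k H]

/-- If the augmentation ideal of `H` is generated by that of `K`, then `K → H` is an epimorphism:
if `f` and `g` agree on `K`, then `f⁻¹ g` kills the augmentation ideal of `K`, hence that
of `H`. -/
lemma algHom_ext_of_augmentation {B : Type*} [CommRing B] [Algebra k B] (ι : K →ₐc[k] H)
    (hgen : ∀ x : H, counit (R := k) x = 0 →
      x ∈ Ideal.span (ι '' {y | counit (R := k) y = 0}))
    (f g : H →ₐ[k] B) (hfg : f.comp (ι : K →ₐ[k] H) = g.comp (ι : K →ₐ[k] H)) : f = g := by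
  set d := conv (f.comp (antipodeAlgHom k H)) g with hd
  have h1 : d.comp (ι : K →ₐ[k] H) = convUnit k K B := by
    rw [hd, conv_comp, ← hfg, ← conv_comp, inv_conv, convUnit_comp]
  have h2 : ∀ x : H, counit (R := k) x = 0 → d x = 0 := by
    intro x hx
    have : Ideal.span (ι '' {y | counit (R := k) y = 0}) ≤ RingHom.ker d := by
      rw [Ideal.span_le]
      rintro _ ⟨y, hy, rfl⟩
      have := DFunLike.congr_fun h1 y
      rw [convUnit_apply, show counit (R := k) y = 0 from hy, map_zero] at this
      exact this
    exact this (hgen x hx)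
  have h3 : d = convUnit k H B := by
    ext x
    have := h2 (x - algebraMap k H (counit x)) (by simp)
    rw [map_sub, sub_eq_zero, AlgHom.commutes] at this
    exact this
  rw [← conv_convUnit f, ← h3, hd, ← conv_assoc, conv_inv, convUnit_conv]

/-- The pushout of a flat homomorphism `f` along an injective one: the base change of an injection
along `f` is again injective. -/
lemma exists_pushout.{u, v, w, z} {k : Type u} [Field k] {R : Type v} {P : Type w} {A : Type z}
    [CommRing R] [Algebra k R] [CommRing P] [Algebra k P]
    [CommRing A] [Algebra k A] (f : R →ₐ[k] P) (g : R →ₐ[k] A) (hf : f.toRingHom.Flat)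
    (hg : Function.Injective g) :
    ∃ (C : Type max w z) (_ : CommRing C) (_ : Algebra k C) (i : P →ₐ[k] C) (j : A →ₐ[k] C),
      i.comp f = j.comp g ∧ Function.Injective i := by
  algebraize [f.toRingHom, g.toRingHom]
  have : IsScalarTower k R P := .of_algebraMap_eq' f.comp_algebraMap.symm
  have : IsScalarTower k R A := .of_algebraMap_eq' g.comp_algebraMap.symm
  refine ⟨P ⊗[R] A, inferInstance, inferInstance, Algebra.TensorProduct.includeLeft,
    (Algebra.TensorProduct.includeRight : A →ₐ[R] P ⊗[R] A).restrictScalars k, ?_, ?_⟩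
  · ext x
    have h1 := (Algebra.TensorProduct.includeLeft : P →ₐ[R] P ⊗[R] A).commutes x
    have h2 := (Algebra.TensorProduct.includeRight : A →ₐ[R] P ⊗[R] A).commutes x
    exact h1.trans h2.symm
  · exact Algebra.TensorProduct.includeLeft_injective (S := R) hg

/-- Let `ι : K → H` be an injection of commutative Hopf algebras and `v : K → F` a flat
homomorphism to a nonzero algebra. The product `ι v : K → H ⊗ F` is faithfully flat. For a closed
point `g` of `Spec K`, the point `g v⁻¹` is flat, hence lifts along `ι` to some point of `Spec H`
over a nonzero ring; so `g = (g v⁻¹) v` is in the image. -/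
lemma faithfullyFlat_conv (ι : K →ₐc[k] H) (hι : Function.Injective ι) {F : Type*} [CommRing F]
    [Algebra k F] [Nontrivial F] (v : K →ₐ[k] F) (hv : v.toRingHom.Flat) [Algebra K (H ⊗[k] F)]
    (halg : ∀ x, algebraMap K (H ⊗[k] F) x =
      conv ((Algebra.TensorProduct.includeLeft : H →ₐ[k] H ⊗[k] F).comp (ι : K →ₐ[k] H))
        (Algebra.TensorProduct.includeRight.comp v) x) :
    Module.FaithfullyFlat K (H ⊗[k] F) := by
  set β := conv ((Algebra.TensorProduct.includeLeft : H →ₐ[k] H ⊗[k] F).comp (ι : K →ₐ[k] H))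
        (Algebra.TensorProduct.includeRight.comp v) with hβ
  have halg' : algebraMap K (H ⊗[k] F) = β.toRingHom := RingHom.ext halg
  have hflat : Module.Flat K (H ⊗[k] F) := by
    rw [← RingHom.flat_algebraMap_iff, halg']
    exact flat_conv _ v hv
  refine ⟨fun m hm htop ↦ ?_⟩
  let g : K →ₐ[k] K ⧸ m := Ideal.Quotient.mkₐ k m
  let α := conv ((Algebra.TensorProduct.includeLeft : (K ⧸ m) →ₐ[k] (K ⧸ m) ⊗[k] F).comp g)
    (Algebra.TensorProduct.includeRight.comp (v.comp (antipodeAlgHom k K)))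
  have hS : (antipodeAlgHom k K).toRingHom.Flat := .of_bijective antipode_bijective
  have hα : α.toRingHom.Flat := flat_conv g (v.comp (antipodeAlgHom k K)) (hS.comp hv)
  obtain ⟨C, _, _, i, j, hij, hi⟩ := exists_pushout α (ι : K →ₐ[k] H) hα hι
  have : Nontrivial (K ⧸ m) := Ideal.Quotient.nontrivial_iff.mpr hm.ne_top
  have hC : Nontrivial C := hi.nontrivial
  let j3 : F →ₐ[k] C := i.comp Algebra.TensorProduct.includeRight
  let θ : H ⊗[k] F →ₐ[k] C := Algebra.TensorProduct.lift j j3 (fun _ _ ↦ .all ..)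
  have hθ : θ.comp β = (i.comp Algebra.TensorProduct.includeLeft).comp g := by
    have e1 : θ.comp β = conv (j.comp (ι : K →ₐ[k] H)) (j3.comp v) := by
      rw [hβ, comp_conv, ← AlgHom.comp_assoc, ← AlgHom.comp_assoc]
      congr 2 <;> ext <;> simp [θ]
    have e2 : i.comp α = conv ((i.comp Algebra.TensorProduct.includeLeft).comp g)
        ((j3.comp v).comp (antipodeAlgHom k K)) := by
      simp only [α, comp_conv]
      rfl
    rw [e1, ← hij, e2, conv_assoc, inv_conv, conv_convUnit]
  -- `θ` kills `m`, which contradicts `m (H ⊗ F) = H ⊗ F`.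
  have hker : ∀ z ∈ m • (⊤ : Submodule K (H ⊗[k] F)), θ z = 0 := by
    intro z hz
    refine Submodule.smul_induction_on hz ?_ ?_
    · intro r hr n _
      have hr0 : θ (β r) = 0 := by
        have := DFunLike.congr_fun hθ r
        have hg : g r = 0 := Ideal.Quotient.eq_zero_iff_mem.mpr hr
        simpa [hg] using this
      rw [Algebra.smul_def, halg, map_mul, hr0, zero_mul]
    · intro x y hx hy
      rw [map_add, hx, hy, add_zero]
  have := hker 1 (by rw [htop]; exact Submodule.mem_top)
  simp at this

/-- Descent of surjectivity along the base change `K → B`, the product of a point of `Spec H` and of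
the generic point of a component of `Spec K`: over `B` the point of `Spec H` can be divided out,
which leaves the localization of `K → H` at a minimal prime, where it is surjective. -/
lemma surjective_of_faithfullyFlat [IsNoetherianRing K] (ι : K →ₐc[k] H)
    (hgen : ∀ x : H, counit (R := k) x = 0 →
      x ∈ Ideal.span (ι '' {y | counit (R := k) y = 0}))
    (p : Ideal K) [p.IsPrime] (hp : p ∈ minimalPrimes K)
    {B : Type*} [CommRing B] [Algebra k B] [Algebra K B] [IsScalarTower k K B]
    [Module.FaithfullyFlat K B] (iL : H →ₐ[k] B) (iR : Localization.AtPrime p →ₐ[k] B)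
    (hB : IsScalarTower.toAlgHom k K B = conv (iL.comp (ι : K →ₐ[k] H))
      (iR.comp (IsScalarTower.toAlgHom k K (Localization.AtPrime p)))) :
    Function.Surjective ι := by
  let : Algebra K H := (ι : K →ₐ[k] H).toRingHom.toAlgebra
  have : IsScalarTower k K H := .of_algebraMap_eq' (ι : K →ₐ[k] H).comp_algebraMap.symm
  have hepi : Algebra.IsEpi K H := by
    rw [Algebra.isEpi_iff_forall_one_tmul_eq]
    intro a
    have := algHom_ext_of_augmentation ι hgen
      ((Algebra.TensorProduct.includeRight : H →ₐ[K] H ⊗[K] H).restrictScalars k)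
      ((Algebra.TensorProduct.includeLeft : H →ₐ[K] H ⊗[K] H).restrictScalars k) (by
        ext x
        exact ((Algebra.TensorProduct.includeRight : H →ₐ[K] H ⊗[K] H).commutes x).trans
          ((Algebra.TensorProduct.includeLeft : H →ₐ[K] H ⊗[K] H).commutes x).symm)
    exact DFunLike.congr_fun this a
  let F := Localization.AtPrime p
  let v : K →ₐ[k] F := IsScalarTower.toAlgHom k K F
  let β : K →ₐ[k] B := IsScalarTower.toAlgHom k K B
  let i : B →ₐ[k] B ⊗[K] H := Algebra.TensorProduct.includeLeft
  let j : H →ₐ[k] B ⊗[K] H :=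
    (Algebra.TensorProduct.includeRight : H →ₐ[K] B ⊗[K] H).restrictScalars k
  have hij : i.comp β = j.comp (ι : K →ₐ[k] H) := by
    ext x
    exact ((Algebra.TensorProduct.includeLeft : B →ₐ[K] B ⊗[K] H).commutes x).trans
      ((Algebra.TensorProduct.includeRight : H →ₐ[K] B ⊗[K] H).commutes x).symm
  let i2 : H →ₐ[k] B ⊗[K] H := i.comp iL
  let i3 : F →ₐ[k] B ⊗[K] H := i.comp iR
  have hβ : i.comp β = conv (i2.comp (ι : K →ₐ[k] H)) (i3.comp v) := by
    simp only [β, hB, comp_conv]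
    rfl
  -- The two points `i2` and `j` of `Spec H` differ by a point extending `i3 ∘ v` to `H`.
  let d := conv (i2.comp (antipodeAlgHom k H)) j
  have hd : d.comp (ι : K →ₐ[k] H) = i3.comp v := by
    simp only [d]
    rw [conv_comp, ← hij, hβ, ← conv_assoc, ← conv_comp, inv_conv, convUnit_comp, convUnit_conv]
  have hj : j = conv i2 d := by
    simp only [d]
    rw [← conv_assoc, conv_inv, convUnit_conv]
  have hdr : ∀ x, d x ∈ i3.range := fun x ↦
    mem_range_of_isEpi p hp i3.toRingHom d.toRingHom
      (congrArg AlgHom.toRingHom hd.symm) x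
  have hjr : ∀ x, j x ∈ i.range := by
    intro x
    rw [hj, conv_apply]
    induction comul (R := k) x using TensorProduct.induction_on with
    | zero => simp
    | tmul a b =>
      rw [Algebra.TensorProduct.lift_tmul]
      refine mul_mem ⟨_, rfl⟩ ?_
      obtain ⟨y, hy⟩ := hdr b
      exact ⟨_, hy⟩
    | add a b ha hb => rw [map_add]; exact add_mem ha hb
  have hsurj : Function.Surjective ((Algebra.linearMap K H).lTensor B) := by
    rw [← LinearMap.range_eq_top, eq_top_iff]
    rintro z -
    induction z using TensorProduct.induction_on with
    | zero => simp
    | tmul b x =>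
      obtain ⟨y, hy⟩ := hjr x
      refine ⟨(b * y) ⊗ₜ 1, ?_⟩
      have hy' : y ⊗ₜ[K] (1 : H) = (1 : B) ⊗ₜ[K] x := hy
      calc (b * y) ⊗ₜ[K] (algebraMap K H 1) = (b ⊗ₜ[K] (1 : H)) * (y ⊗ₜ[K] (1 : H)) := by simp
        _ = b ⊗ₜ[K] x := by rw [hy']; simp
    | add a b ha hb => exact add_mem ha hb
  exact (Module.FaithfullyFlat.lTensor_surjective_iff_surjective K B _).mp hsurj

/-- An injection `K → H` of commutative Hopf algebras with `K` Noetherian is surjective as soon as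
the augmentation ideal of `K` generates that of `H`. -/
theorem surjective_of_augmentation [IsNoetherianRing K] (ι : K →ₐc[k] H)
    (hι : Function.Injective ι)
    (hgen : ∀ x : H, counit (R := k) x = 0 →
      x ∈ Ideal.span (ι '' {y | counit (R := k) y = 0})) :
    Function.Surjective ι := by
  have : Nontrivial K := (counitAlgHom k K).toRingHom.domain_nontrivial
  obtain ⟨p, hp⟩ : (minimalPrimes K).Nonempty :=
    Set.nonempty_coe_sort.mp (Ideal.nonempty_minimalPrimes bot_ne_top)
  have : p.IsPrime := hp.1.1
  let F := Localization.AtPrime p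
  let v : K →ₐ[k] F := IsScalarTower.toAlgHom k K F
  have hv : v.toRingHom.Flat := by
    change (algebraMap K F).Flat
    rw [RingHom.flat_algebraMap_iff]
    exact IsLocalization.flat F p.primeCompl
  let β := conv ((Algebra.TensorProduct.includeLeft : H →ₐ[k] H ⊗[k] F).comp (ι : K →ₐ[k] H))
        (Algebra.TensorProduct.includeRight.comp v)
  let : Algebra K (H ⊗[k] F) := β.toRingHom.toAlgebra
  have : IsScalarTower k K (H ⊗[k] F) := .of_algebraMap_eq' β.comp_algebraMap.symm
  have hff : Module.FaithfullyFlat K (H ⊗[k] F) :=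
    faithfullyFlat_conv ι hι v hv (fun _ ↦ rfl)
  exact surjective_of_faithfullyFlat (B := H ⊗[k] F) ι hgen p hp
    Algebra.TensorProduct.includeLeft Algebra.TensorProduct.includeRight
    (AlgHom.ext fun _ ↦ rfl)

end Core

/-! ### The Hopf algebra structure on a stable subalgebra -/

section Sub

variable {k : Type*} [Field k] {H : Type*} [CommRing H] [HopfAlgebra k H]

/-- The map `A ⊗ A → H ⊗ H` induced by the inclusion of a subalgebra. -/
noncomputable def subTensor (A : Subalgebra k H) : A ⊗[k] A →ₐ[k] H ⊗[k] H :=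
  Algebra.TensorProduct.map A.val A.val

lemma subTensor_injective (A : Subalgebra k H) : Function.Injective (subTensor A) :=
  TensorProduct.map_injective_of_flat_flat A.val.toLinearMap A.val.toLinearMap
    Subtype.val_injective Subtype.val_injective

/-- A subalgebra stable under comultiplication and antipode. -/
structure IsHopfSub (A : Subalgebra k H) : Prop where
  comul_mem : ∀ x ∈ A, comulAlgHom k H x ∈ (subTensor A).range
  antipode_mem : ∀ x ∈ A, antipodeAlgHom k H x ∈ A

variable {A : Subalgebra k H} (hA : IsHopfSub A)

/-- The restricted comultiplication. -/
noncomputable def subComul : A →ₐ[k] A ⊗[k] A :=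
  (AlgEquiv.ofInjective (subTensor A) (subTensor_injective A)).symm.toAlgHom.comp
    (((comulAlgHom k H).comp A.val).codRestrict (subTensor A).range
      fun x ↦ hA.comul_mem x x.2)

lemma subTensor_subComul (x : A) : subTensor A (subComul hA x) = comul (R := k) (x : H) := by
  have := (AlgEquiv.ofInjective (subTensor A) (subTensor_injective A)).apply_symm_apply
    ((((comulAlgHom k H).comp A.val).codRestrict (subTensor A).range
      fun x ↦ hA.comul_mem x x.2) x)
  exact congrArg Subtype.val this

lemma subTensor_comp_subComul :
    (subTensor A).comp (subComul hA) = (comulAlgHom k H).comp A.val :=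
  AlgHom.ext (subTensor_subComul hA)

/-- The restricted antipode. -/
noncomputable def subAntipode : A →ₐ[k] A :=
  ((antipodeAlgHom k H).comp A.val).codRestrict A fun x ↦ hA.antipode_mem x x.2

/-- The bialgebra structure on a stable subalgebra. -/
@[reducible] noncomputable def subBialgebra : Bialgebra k A :=
  Bialgebra.ofAlgHom (subComul hA) ((counitAlgHom k H).comp A.val)
    (by
      have hinj : Function.Injective (Algebra.TensorProduct.map A.val (subTensor A)) :=
        TensorProduct.map_injective_of_flat_flat A.val.toLinearMap (subTensor A).toLinearMap
          Subtype.val_injective (subTensor_injective A)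
      apply AlgHom.ext
      intro x
      apply hinj
      have e1 : (Algebra.TensorProduct.map A.val (subTensor A)).comp
          ((Algebra.TensorProduct.assoc k k k A A A).toAlgHom.comp
            (Algebra.TensorProduct.map (subComul hA) (.id k A))) =
          ((Algebra.TensorProduct.assoc k k k H H H).toAlgHom.comp
            (Algebra.TensorProduct.map (comulAlgHom k H) (.id k H))).comp (subTensor A) := by
        have e0 : (Algebra.TensorProduct.map A.val (subTensor A)).comp
            (Algebra.TensorProduct.assoc k k k A A A).toAlgHom =
            (Algebra.TensorProduct.assoc k k k H H H).toAlgHom.comp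
              (Algebra.TensorProduct.map (subTensor A) A.val) := by
          ext <;> simp [subTensor, Algebra.TensorProduct.one_def]
        rw [← AlgHom.comp_assoc, e0, AlgHom.comp_assoc, ← Algebra.TensorProduct.map_comp,
          subTensor_comp_subComul, AlgHom.comp_assoc, subTensor, ← Algebra.TensorProduct.map_comp]
        rfl
      have e2 : (Algebra.TensorProduct.map A.val (subTensor A)).comp
          (Algebra.TensorProduct.map (.id k A) (subComul hA)) =
          (Algebra.TensorProduct.map (.id k H) (comulAlgHom k H)).comp (subTensor A) := by
        rw [← Algebra.TensorProduct.map_comp, subTensor_comp_subComul, subTensor,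
          ← Algebra.TensorProduct.map_comp]
        rfl
      have e1' := DFunLike.congr_fun e1 (subComul hA x)
      have e2' := DFunLike.congr_fun e2 (subComul hA x)
      simp only [AlgHom.comp_apply, subTensor_subComul] at e1' e2' ⊢
      refine e1'.trans (Eq.trans ?_ e2'.symm)
      exact Coalgebra.coassoc_apply (R := k) (x : H))
    (by
      have hinj : Function.Injective (Algebra.TensorProduct.map (AlgHom.id k k) A.val) :=
        TensorProduct.map_injective_of_flat_flat LinearMap.id A.val.toLinearMap
          Function.injective_id Subtype.val_injective
      apply AlgHom.ext
      intro x
      apply hinj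
      have e1 : (Algebra.TensorProduct.map (AlgHom.id k k) A.val).comp
          (Algebra.TensorProduct.map ((counitAlgHom k H).comp A.val) (.id k A)) =
          (Algebra.TensorProduct.map (counitAlgHom k H) (.id k H)).comp (subTensor A) := by
        ext <;> simp [subTensor]
      have e1' := DFunLike.congr_fun e1 (subComul hA x)
      simp only [AlgHom.comp_apply, subTensor_subComul] at e1' ⊢
      refine e1'.trans (Eq.trans (Coalgebra.rTensor_counit_comul (R := k) (x : H)) ?_)
      simp)
    (by
      have hinj : Function.Injective (Algebra.TensorProduct.map A.val (AlgHom.id k k)) :=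
        TensorProduct.map_injective_of_flat_flat A.val.toLinearMap LinearMap.id
          Subtype.val_injective Function.injective_id
      apply AlgHom.ext
      intro x
      apply hinj
      have e1 : (Algebra.TensorProduct.map A.val (AlgHom.id k k)).comp
          (Algebra.TensorProduct.map (.id k A) ((counitAlgHom k H).comp A.val)) =
          (Algebra.TensorProduct.map (.id k H) (counitAlgHom k H)).comp (subTensor A) := by
        ext <;> simp [subTensor]
      have e1' := DFunLike.congr_fun e1 (subComul hA x)
      simp only [AlgHom.comp_apply, subTensor_subComul] at e1' ⊢
      refine e1'.trans (Eq.trans (Coalgebra.lTensor_counit_comul (R := k) (x : H)) ?_)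
      simp)

/-- The Hopf algebra structure on a stable subalgebra. -/
@[reducible] noncomputable def subHopfAlgebra : HopfAlgebra k A where
  __ := subBialgebra hA
  antipode := (subAntipode hA).toLinearMap
  mul_antipode_rTensor_comul := by
    ext x
    have e1 : A.val.comp ((Algebra.TensorProduct.lmul' k).comp
          (Algebra.TensorProduct.map (subAntipode hA) (.id k A))) =
        ((Algebra.TensorProduct.lmul' k).comp
          (Algebra.TensorProduct.map (antipodeAlgHom k H) (.id k H))).comp (subTensor A) := by
      ext <;> simp [subTensor, subAntipode]
      rfl
    have e1' := DFunLike.congr_fun e1 (subComul hA x)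
    simp only [AlgHom.comp_apply, subTensor_subComul] at e1'
    exact e1'.trans (mul_antipode_rTensor_comul_apply (R := k) (x : H))
  mul_antipode_lTensor_comul := by
    ext x
    have e1 : A.val.comp ((Algebra.TensorProduct.lmul' k).comp
          (Algebra.TensorProduct.map (.id k A) (subAntipode hA))) =
        ((Algebra.TensorProduct.lmul' k).comp
          (Algebra.TensorProduct.map (.id k H) (antipodeAlgHom k H))).comp (subTensor A) := by
      ext <;> simp [subTensor, subAntipode]
      rfl
    have e1' := DFunLike.congr_fun e1 (subComul hA x)
    simp only [AlgHom.comp_apply, subTensor_subComul] at e1'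
    exact e1'.trans (mul_antipode_lTensor_comul_apply (R := k) (x : H))

/-- A Noetherian Hopf subalgebra containing generators of the augmentation ideal is everything. -/
lemma eq_top_of_isHopfSub (hA : IsHopfSub A) [IsNoetherianRing A]
    (hgen : ∀ x : H, counit (R := k) x = 0 →
      x ∈ Ideal.span {y : H | y ∈ A ∧ counit (R := k) y = 0}) : A = ⊤ := by
  let : HopfAlgebra k A := subHopfAlgebra hA
  let ι : A →ₐc[k] H := BialgHom.ofAlgHom A.val rfl (subTensor_comp_subComul hA)
  have hsurj : Function.Surjective ι := by
    refine surjective_of_augmentation ι Subtype.val_injective fun x hx ↦ ?_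
    convert hgen x hx using 2
    ext y
    constructor
    · rintro ⟨z, hz, rfl⟩
      exact ⟨z.2, hz⟩
    · rintro ⟨hy, hy0⟩
      exact ⟨⟨y, hy⟩, hy0, rfl⟩
  refine eq_top_iff.mpr fun x _ ↦ ?_
  obtain ⟨y, rfl⟩ := hsurj x
  exact y.2

end Sub

/-! ### Local finiteness -/

section Finite

/-- Every element of a coalgebra over a field lies in a finite-dimensional right subcomodule. -/
lemma exists_subcomodule {k H : Type*} [Field k] [AddCommGroup H] [Module k H] [Coalgebra k H]
    (x : H) :
    ∃ V : Submodule k H, FiniteDimensional k V ∧ x ∈ V ∧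
      ∀ w ∈ V, comul (R := k) w ∈ LinearMap.range (V.subtype.rTensor H) := by
  classical
  let b := Module.Basis.ofVectorSpace k H
  let a := TensorProduct.equivFinsuppOfBasisRight (M := H) b (comul (R := k) x)
  have ha : comul (R := k) x = ∑ i ∈ a.support, a i ⊗ₜ[k] b i := by
    have := (TensorProduct.equivFinsuppOfBasisRight (M := H) b).symm_apply_apply
      (comul (R := k) x)
    rw [TensorProduct.equivFinsuppOfBasisRight_symm_apply] at this
    exact this.symm
  let V := Submodule.span k (a '' (a.support : Set _))
  have haV : ∀ i ∈ a.support, a i ∈ V := fun i hi ↦ Submodule.subset_span ⟨i, hi, rfl⟩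
  refine ⟨V, ?_, ?_, ?_⟩
  · exact FiniteDimensional.span_of_finite k (a.support.finite_toSet.image a)
  · have h := congrArg (TensorProduct.rid k H) (Coalgebra.lTensor_counit_comul (R := k) x)
    rw [ha] at h
    simp only [map_sum, LinearMap.lTensor_tmul, TensorProduct.rid_tmul, one_smul] at h
    rw [← h]
    exact Submodule.sum_mem _ fun i hi ↦ V.smul_mem _ (haV i hi)
  · intro w hw
    suffices V ≤ (LinearMap.range (V.subtype.rTensor H)).comap (comul (R := k)) from this hw
    rw [Submodule.span_le]
    rintro _ ⟨i, hi, rfl⟩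
    -- Contract the last factor of the coassociativity identity with the dual basis vector of `b i`.
    have h := Coalgebra.coassoc_symm_apply (R := k) x
    rw [ha] at h
    simp only [map_sum, LinearMap.lTensor_tmul, LinearMap.rTensor_tmul] at h
    have h' := congrArg ((TensorProduct.rid k (H ⊗[k] H)).toLinearMap ∘ₗ (b.coord i).lTensor (H ⊗[k] H)) h
    simp only [map_sum, LinearMap.comp_apply, LinearMap.lTensor_tmul, LinearEquiv.coe_coe,
      TensorProduct.rid_tmul, Module.Basis.coord_apply, Module.Basis.repr_self,
      Finsupp.single_apply, ite_smul, one_smul, zero_smul, Finset.sum_ite_eq'] at h'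
    rw [if_pos (Finset.mem_coe.mp hi)] at h'
    change comul (R := k) (a i) ∈ LinearMap.range (V.subtype.rTensor H)
    rw [← h']
    refine Submodule.sum_mem _ fun j hj ↦ ?_
    induction comul (R := k) (b j) using TensorProduct.induction_on with
    | zero => simp
    | tmul y z =>
      refine ⟨(⟨a j, haV j hj⟩ : V) ⊗ₜ (b.coord i z • y), ?_⟩
      simp
    | add y z hy hz =>
      rw [tmul_add, map_add, map_add, map_add]
      exact add_mem hy hz

/-- Every element of a coalgebra over a field lies in the span of the entries of a multiplicative
matrix, namely the matrix of coefficients of a finite-dimensional subcomodule. -/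
lemma exists_matrix {k H : Type*} [Field k] [AddCommGroup H] [Module k H] [Coalgebra k H]
    (x : H) :
    ∃ (n : ℕ) (c : Matrix (Fin n) (Fin n) H),
      (∀ i j, comul (R := k) (c i j) = ∑ l, c i l ⊗ₜ[k] c l j) ∧
      (∀ i j, counit (R := k) (c i j) = if i = j then 1 else 0) ∧
      x ∈ Submodule.span k (Set.range fun q : Fin n × Fin n ↦ c q.1 q.2) := by
  obtain ⟨V, hV, hx, hcom⟩ := exists_subcomodule (k := k) x
  let v := Module.finBasis k V
  have hv : ∀ j, ∃ c : Fin _ → H, comul (R := k) (v j : H) = ∑ i, (v i : H) ⊗ₜ[k] c i := by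
    intro j
    obtain ⟨t, ht⟩ := hcom (v j) (v j).2
    let d := TensorProduct.equivFinsuppOfBasisLeft (N := H) v t
    refine ⟨d, ?_⟩
    have := (TensorProduct.equivFinsuppOfBasisLeft (N := H) v).symm_apply_apply t
    rw [TensorProduct.equivFinsuppOfBasisLeft_symm_apply, Finsupp.sum_fintype _ _ (by simp)] at this
    rw [← ht, ← this]
    simp [d]
  choose c hc using hv
  have hφ : ∀ i, ∃ φ : H →ₗ[k] k, ∀ j, φ (v j) = if j = i then 1 else 0 := by
    intro i
    obtain ⟨φ, hφ⟩ := (v.coord i).exists_extend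
    refine ⟨φ, fun j ↦ ?_⟩
    have := DFunLike.congr_fun hφ (v j)
    simpa [Finsupp.single_apply] using this
  choose φ hφ using hφ
  refine ⟨_, fun i j ↦ c j i, ?_, ?_, ?_⟩
  · intro i j
    have h := Coalgebra.coassoc_apply (R := k) (v j : H)
    rw [hc] at h
    simp only [map_sum, LinearMap.lTensor_tmul, LinearMap.rTensor_tmul, hc, sum_tmul,
      TensorProduct.assoc_tmul] at h
    have h' := congrArg ((TensorProduct.lid k (H ⊗[k] H)).toLinearMap ∘ₗ (φ i).rTensor (H ⊗[k] H)) h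
    simpa [hφ] using h'.symm
  · intro i j
    have h := congrArg (φ i ∘ₗ TensorProduct.rid k H)
      (Coalgebra.lTensor_counit_comul (R := k) (v j : H))
    rw [hc] at h
    simpa [hφ, eq_comm] using h
  · let W := Submodule.span k (Set.range fun q : Fin _ × Fin _ ↦ c q.2 q.1)
    have hvW : ∀ j, (v j : H) ∈ W := by
      intro j
      have h := congrArg (TensorProduct.lid k H)
        (Coalgebra.rTensor_counit_comul (R := k) (v j : H))
      rw [hc] at h
      simp only [map_sum, LinearMap.rTensor_tmul, TensorProduct.lid_tmul, one_smul] at h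
      rw [← h]
      exact Submodule.sum_mem _ fun i _ ↦ W.smul_mem _ (Submodule.subset_span ⟨(i, j), rfl⟩)
    have h := congrArg V.subtype (v.sum_repr ⟨x, hx⟩)
    simp only [map_sum, map_smul, Submodule.subtype_apply] at h
    rw [← h]
    exact Submodule.sum_mem _ fun i _ ↦ W.smul_mem _ (hvW i)

variable {k : Type*} [Field k] {H : Type*} [CommRing H] [HopfAlgebra k H]

lemma subTensor_range_mono {A A' : Subalgebra k H} (h : A ≤ A') :
    (subTensor A).range ≤ (subTensor A').range := by
  have : subTensor A = (subTensor A').comp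
      (Algebra.TensorProduct.map (Subalgebra.inclusion h) (Subalgebra.inclusion h)) := by
    ext <;> simp [subTensor]
  rw [this]
  exact AlgHom.range_comp_le_range _ _

/-- A subalgebra generated by a set closed under the antipode, whose comultiplication lands in the
tensor square of the subalgebra, is a Hopf subalgebra. -/
lemma isHopfSub_adjoin (s : Set H)
    (hΔ : ∀ x ∈ s, comul (R := k) x ∈ (subTensor (Algebra.adjoin k s)).range)
    (hS : ∀ x ∈ s, antipode k x ∈ s) : IsHopfSub (Algebra.adjoin k s) where
  comul_mem := by
    have : Algebra.adjoin k s ≤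
        (subTensor (Algebra.adjoin k s)).range.comap (comulAlgHom k H) :=
      Algebra.adjoin_le hΔ
    exact this
  antipode_mem := by
    have : Algebra.adjoin k s ≤ (Algebra.adjoin k s).comap (antipodeAlgHom k H) :=
      Algebra.adjoin_le fun x hx ↦ Algebra.subset_adjoin (hS x hx)
    exact this

/-- The antipode sends a multiplicative matrix `c` to its inverse, so that
`Δ (S c) = (Δ c)⁻¹ = (1 ⊗ S c) (S c ⊗ 1)`. -/
lemma comul_antipode_matrix {n : ℕ} (c : Matrix (Fin n) (Fin n) H)
    (hc : ∀ i j, comul (R := k) (c i j) = ∑ l, c i l ⊗ₜ[k] c l j)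
    (hε : ∀ i j, counit (R := k) (c i j) = if i = j then 1 else 0) (i j : Fin n) :
    comul (R := k) (antipode k (c i j)) = ∑ l, antipode k (c l j) ⊗ₜ[k] antipode k (c i l) := by
  let S := antipodeAlgHom k H
  let d : Matrix (Fin n) (Fin n) H := c.map S
  have hdc : d * c = 1 := by
    ext i j
    have h := mul_antipode_rTensor_comul_apply (R := k) (c i j)
    rw [hc, hε] at h
    simp only [map_sum, LinearMap.rTensor_tmul, LinearMap.mul'_apply] at h
    rw [Matrix.mul_apply, Matrix.one_apply]
    refine Eq.trans h ?_
    split_ifs <;> simp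
  let Δ := comulAlgHom k H
  let L : H →ₐ[k] H ⊗[k] H := Algebra.TensorProduct.includeLeft
  let R : H →ₐ[k] H ⊗[k] H := Algebra.TensorProduct.includeRight
  have hmap : ∀ f : H →ₐ[k] H ⊗[k] H, d.map f * c.map f = 1 := by
    intro f
    rw [← Matrix.map_mul, hdc, Matrix.map_one _ (map_zero f) (map_one f)]
  have hΔc : c.map Δ = c.map L * c.map R := by
    ext i j
    rw [Matrix.mul_apply]
    exact (hc i j).trans (Finset.sum_congr rfl fun l _ ↦ by simp [L, R])
  have h1 : (d.map R * d.map L) * c.map Δ = 1 := by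
    rw [hΔc, Matrix.mul_assoc, ← Matrix.mul_assoc (d.map L), hmap, Matrix.one_mul, hmap]
  have h2 : d.map Δ = d.map R * d.map L := by
    have h3 : c.map Δ * d.map Δ = 1 := mul_eq_one_comm.mp (hmap Δ)
    calc d.map Δ = ((d.map R * d.map L) * c.map Δ) * d.map Δ := by rw [h1, Matrix.one_mul]
      _ = d.map R * d.map L := by rw [Matrix.mul_assoc, h3, Matrix.mul_one]
  have h4 := congrFun (congrFun h2 i) j
  rw [Matrix.mul_apply] at h4
  refine Eq.trans h4 (Finset.sum_congr rfl fun l _ ↦ ?_)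
  simp [d, L, R, S]

lemma tmul_mem_subTensor_range {A : Subalgebra k H} {x y : H} (hx : x ∈ A) (hy : y ∈ A) :
    x ⊗ₜ[k] y ∈ (subTensor A).range :=
  ⟨(⟨x, hx⟩ : A) ⊗ₜ (⟨y, hy⟩ : A), by simp [subTensor]⟩

/-- Every element of a commutative Hopf algebra lies in a finitely generated Hopf subalgebra. The
Hopf subalgebra is given by a finite set of generators satisfying the conditions of
`isHopfSub_adjoin`, so that finite unions of such sets can be formed. -/
lemma exists_isHopfSub (x : H) :
    ∃ s : Set H, s.Finite ∧ x ∈ Algebra.adjoin k s ∧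
      (∀ y ∈ s, comul (R := k) y ∈ (subTensor (Algebra.adjoin k s)).range) ∧
      ∀ y ∈ s, antipode k y ∈ s := by
  obtain ⟨n, c, hc, hε, hx⟩ := exists_matrix (k := k) x
  let s1 : Set H := Set.range fun q : Fin n × Fin n ↦ c q.1 q.2
  let s2 : Set H := Set.range fun q : Fin n × Fin n ↦ antipode k (c q.1 q.2)
  have m1 : ∀ i j, c i j ∈ Algebra.adjoin k (s1 ∪ s2) := fun i j ↦
    Algebra.subset_adjoin (Or.inl ⟨(i, j), rfl⟩)
  have m2 : ∀ i j, antipode k (c i j) ∈ Algebra.adjoin k (s1 ∪ s2) := fun i j ↦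
    Algebra.subset_adjoin (Or.inr ⟨(i, j), rfl⟩)
  refine ⟨s1 ∪ s2, (Set.finite_range _).union (Set.finite_range _), ?_, ?_, ?_⟩
  · exact Algebra.adjoin_mono Set.subset_union_left (Algebra.span_le_adjoin k _ hx)
  · rintro _ (⟨⟨i, j⟩, rfl⟩ | ⟨⟨i, j⟩, rfl⟩)
    · rw [hc]
      exact sum_mem fun l _ ↦ tmul_mem_subTensor_range (m1 _ _) (m1 _ _)
    · rw [comul_antipode_matrix c hc hε]
      exact sum_mem fun l _ ↦ tmul_mem_subTensor_range (m2 _ _) (m2 _ _)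
  · rintro _ (⟨⟨i, j⟩, rfl⟩ | ⟨⟨i, j⟩, rfl⟩)
    · exact Or.inr ⟨(i, j), rfl⟩
    · exact Or.inl ⟨(i, j), (DFunLike.congr_fun (antipode_comp_antipode (k := k)) (c i j)).symm⟩

lemma finiteType_of_isNoetherianRing [IsNoetherianRing H] : Algebra.FiniteType k H := by
  let I : Ideal H := RingHom.ker (counitAlgHom k H)
  obtain ⟨t, ht⟩ : I.FG := IsNoetherian.noetherian I
  choose s hfin hmem hΔ hS using exists_isHopfSub (k := k) (H := H)
  let T : Set H := ⋃ x ∈ t, s x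
  have hT : T.Finite := t.finite_toSet.biUnion fun x _ ↦ hfin x
  have hle : ∀ x ∈ t, Algebra.adjoin k (s x) ≤ Algebra.adjoin k T := fun x hx ↦
    Algebra.adjoin_mono (Set.subset_biUnion_of_mem (u := s) (show x ∈ (t : Set H) from hx))
  have hHopf : IsHopfSub (Algebra.adjoin k T) := by
    refine isHopfSub_adjoin T ?_ ?_
    · intro y hy
      obtain ⟨x, hx, hyx⟩ := Set.mem_iUnion₂.mp hy
      exact subTensor_range_mono (hle x hx) (hΔ x y hyx)
    · intro y hy
      obtain ⟨x, hx, hyx⟩ := Set.mem_iUnion₂.mp hy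
      exact Set.mem_iUnion₂.mpr ⟨x, hx, hS x y hyx⟩
  have hFG : (Algebra.adjoin k T).FG := Subalgebra.fg_def.mpr ⟨T, hT, rfl⟩
  have : Algebra.FiniteType k (Algebra.adjoin k T) := (Algebra.adjoin k T).fg_iff_finiteType.mp hFG
  have : IsNoetherianRing (Algebra.adjoin k T) := Algebra.FiniteType.isNoetherianRing k _
  have htop : Algebra.adjoin k T = ⊤ := by
    refine eq_top_of_isHopfSub hHopf fun x hx ↦ ?_
    have hxI : x ∈ Ideal.span (t : Set H) := by rw [ht]; exact hx
    refine Ideal.span_mono ?_ hxI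
    intro y hy
    have hyI : y ∈ I := by rw [← ht]; exact Ideal.subset_span hy
    exact ⟨hle y hy (hmem y), hyI⟩
  exact ⟨htop ▸ hFG⟩

end Finite

end MolnarHopf

/-- (Molnar) A commutative Hopf algebra over a field of characteristic 0 is
Noetherian iff it is affine (finitely generated as an algebra). -/
theorem commutative_hopfAlgebra_noetherian_iff_affine (k : Type*) [Field k] [CharZero k]
    (H : Type*) [CommRing H] [HopfAlgebra k H] :
    IsNoetherianRing H ↔ Algebra.FiniteType k H :=
  ⟨fun _ ↦ MolnarHopf.finiteType_of_isNoetherianRing,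
    fun _ ↦ Algebra.FiniteType.isNoetherianRing k H⟩
end

section
/- (Cartier) Let H be a commutative Hopf algebra over a field k of characteristic 0. Then H is reduced, i.e., H has no nonzero nilpotent elements. -/
/-!
The proof has a local part at the identity and a translation argument.

*At the identity.* Let `A` be a commutative `k`-algebra with an augmentation `ε` and an algebra map
`δ : A → A ⊗ A` for which `ε` is a two-sided counit, and put `I = ker ε`. A linear map `q` with
`q (b c) = ε b • q c + ε c • q b` gives the derivation `a ↦ ∑ a₁ q(a₂)` of `A`. Taking for `q` a
linear lift `A → I` of the projection `A → I / I²` yields an Euler operator `E`, which acts on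
`I ^ n` as multiplication by `n` modulo `I ^ (n + 1)`. Expanding the lift in a basis of `I / I²`
gives `E = ∑ tᵢ Dᵢ` with `tᵢ ∈ I` and derivations `Dᵢ`. In characteristic `0` derivations preserve
the nilradical, so if every nilpotent element lies in `I ^ n` with `n ≥ 1`, then for `x` nilpotent
`n x ≡ E x = ∑ tᵢ Dᵢ x ≡ 0` modulo `I ^ (n + 1)`. Hence nilpotent elements lie in every power of
`I` (`isNilpotent_mem_pow`).

*Krull's intersection theorem.* In a commutative bialgebra, `x` lies in a finitely generated
subalgebra stable under comultiplication, generated by the matrix coefficients of a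
finite-dimensional comodule containing `x` (`exists_matrix_coefficients`). There Krull's theorem
gives `r * x = x` for some `r ∈ ker ε` (`exists_mul_eq_self`): `x` vanishes near the identity.

*Translation.* If `x ≠ 0` is nilpotent in the Hopf algebra `H`, choose a maximal ideal `P`
containing the annihilator of `x` and let `K = H ⧸ P`. Translating by the tautological `K`-point and
applying the previous step to `K ⊗ H` gives an element of `K ⊗ H` that kills `1 ⊗ x` and takes the
value `1` at this point. But the annihilator of `1 ⊗ x` is `K ⊗ Ann x`, whose elements vanish there.
-/

open TensorProduct Coalgebra

namespace CartierReduced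

/-! ### Nilpotent elements at the augmentation ideal -/

/-- Over `ℚ`, derivations preserve the nilradical: from `x ^ n = 0` one gets
`x ^ (n - j) * (D x) ^ (2 * j) = 0` by induction on `j`. -/
theorem isNilpotent_of_leibniz {A : Type*} [CommRing A] [Algebra ℚ A] (D : A → A)
    (hD0 : D 0 = 0) (hD : ∀ a b, D (a * b) = a * D b + b * D a) {x : A} (hx : IsNilpotent x) :
    IsNilpotent (D x) := by
  have hD1 : D 1 = 0 := by simpa using hD 1 1
  have hpow : ∀ (a : A) (m : ℕ), D (a ^ (m + 1)) = (m + 1 : ℕ) * (a ^ m * D a) := by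
    intro a m
    induction m with
    | zero => simp
    | succ m ih => rw [pow_succ, hD, ih]; push_cast; ring
  obtain ⟨n, hn⟩ := hx
  have key : ∀ j m : ℕ, j + m = n → x ^ m * D x ^ (2 * j) = 0 := by
    intro j
    induction j with
    | zero => intro m hm; obtain rfl : m = n := by omega
              simpa using hn
    | succ j ih =>
      intro m hm
      have h := ih (m + 1) (by omega)
      have h1 : D (x ^ (m + 1) * D x ^ (2 * j)) * D x = 0 := by rw [h, hD0, zero_mul]
      -- the second Leibniz term, times `D x`, contains the product that already vanishes
      have h2 : x ^ (m + 1) * D (D x ^ (2 * j)) * D x = 0 := by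
        rcases j with _ | j
        · simp [hD1]
        · have : 2 * (j + 1) = (2 * j + 1) + 1 := by ring
          rw [this, hpow]
          rw [this] at h
          calc _ = ((2 * j + 1 + 1 : ℕ) : A) * D (D x) * (x ^ (m + 1) * D x ^ (2 * j + 1 + 1)) := by
                ring
            _ = 0 := by rw [h, mul_zero]
      rw [hD, add_mul, h2, zero_add, hpow] at h1
      have h3 : ((m + 1 : ℕ) : ℚ) • (x ^ m * D x ^ (2 * (j + 1))) = 0 := by
        rw [Algebra.smul_def, map_natCast, ← h1]; ring
      exact (smul_eq_zero_iff_right (by positivity)).1 h3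
  exact ⟨2 * n, by simpa using key n 0 (by omega)⟩

variable {k A : Type*} [Field k] [CommRing A] [Algebra k A]

/-- The linear map `a ⊗ b ↦ a * q b`. When `q` satisfies the Leibniz rule along an augmentation,
composing it with the comultiplication gives an invariant derivation. -/
noncomputable def contr (q : A →ₗ[k] A) : A ⊗[k] A →ₗ[k] A :=
  LinearMap.mul' k A ∘ₗ q.lTensor A

@[simp]
theorem contr_tmul (q : A →ₗ[k] A) (a b : A) : contr q (a ⊗ₜ[k] b) = a * q b := by
  simp [contr]

theorem contr_mul (ε : A →ₐ[k] k) (q : A →ₗ[k] A)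
    (hq : ∀ b c, q (b * c) = ε b • q c + ε c • q b) (z w : A ⊗[k] A) :
    contr q (z * w) =
      contr (Algebra.linearMap k A ∘ₗ ε.toLinearMap) z * contr q w +
      contr (Algebra.linearMap k A ∘ₗ ε.toLinearMap) w * contr q z := by
  induction z with
  | zero => simp
  | add z₁ z₂ h₁ h₂ => rw [add_mul, map_add, h₁, h₂, map_add, map_add]; ring
  | tmul a b =>
    induction w with
    | zero => simp
    | add z₁ z₂ h₁ h₂ => rw [mul_add, map_add, h₁, h₂, map_add, map_add]; ring
    | tmul c d =>
      simp [hq, Algebra.smul_def]; ring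

theorem contr_leibniz {ε : A →ₐ[k] k} {δ : A →ₐ[k] A ⊗[k] A}
    (hr : ∀ a, contr (Algebra.linearMap k A ∘ₗ ε.toLinearMap) (δ a) = a) (q : A →ₗ[k] A)
    (hq : ∀ b c, q (b * c) = ε b • q c + ε c • q b) (a b : A) :
    contr q (δ (a * b)) = a * contr q (δ b) + b * contr q (δ a) := by
  rw [map_mul, contr_mul ε q hq, hr, hr]

/-- A linear lift `p'` of the projection of `A` onto the cotangent space `I / I²`, `I = ker ε`.
The cotangent space appears as `A ⧸ V` with `V = k · 1 + I²`, so that the projection is defined on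
all of `A` and satisfies the Leibniz rule along `ε`. -/
theorem exists_projection (ε : A →ₐ[k] k) :
    ∃ (V : Submodule k A) (p' : (A ⧸ V) →ₗ[k] A),
      (∀ b c, V.mkQ (b * c) = ε b • V.mkQ c + ε c • V.mkQ b) ∧
      (∀ v, p' v ∈ RingHom.ker ε) ∧
      ∀ b ∈ RingHom.ker ε, p' (V.mkQ b) - b ∈ RingHom.ker ε ^ 2 := by
  set I := RingHom.ker ε with hI
  let V : Submodule k A := (I ^ 2).restrictScalars k ⊔ Submodule.span k {1}
  have hεI : ∀ a, a - algebraMap k A (ε a) ∈ I := fun a => by simp [hI, RingHom.mem_ker]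
  have h1V : ∀ c : k, algebraMap k A c ∈ V := fun c => by
    rw [Algebra.algebraMap_eq_smul_one]
    exact V.smul_mem _ (Submodule.mem_sup_right (Submodule.subset_span rfl))
  have h2V : ∀ a ∈ I ^ 2, a ∈ V := fun a ha => Submodule.mem_sup_left ha
  have hVI : ∀ a ∈ V, a ∈ I → a ∈ I ^ 2 := by
    intro a ha haI
    obtain ⟨y, hy, w, hw, rfl⟩ := Submodule.mem_sup.1 ha
    obtain ⟨c, rfl⟩ := Submodule.mem_span_singleton.1 hw
    have hy' : y ∈ I ^ 2 := hy
    have h1 : ε y = 0 := Ideal.pow_le_self two_ne_zero hy'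
    have h2 : ε (y + c • 1) = 0 := haI
    have h3 : c = 0 := by simpa [h1] using h2
    simpa [h3] using hy'
  obtain ⟨σ, hσ⟩ := V.mkQ.exists_rightInverse_of_surjective V.range_mkQ
  have hσ' : ∀ v, V.mkQ (σ v) = v := fun v => LinearMap.congr_fun hσ v
  refine ⟨V, σ - Algebra.linearMap k A ∘ₗ ε.toLinearMap ∘ₗ σ, ?_, ?_, ?_⟩
  · intro b c
    rw [← map_smul, ← map_smul, ← map_add, ← sub_eq_zero, ← map_sub, Submodule.mkQ_apply,
      Submodule.Quotient.mk_eq_zero]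
    have h := V.sub_mem (h2V _ (by rw [pow_two]; exact Ideal.mul_mem_mul (hεI b) (hεI c)))
      (h1V (ε b * ε c))
    convert h using 1
    simp only [Algebra.smul_def, map_mul]; ring
  · intro v; exact hεI _
  · intro b hb
    refine hVI _ ?_ (I.sub_mem (hεI _) hb)
    have h : σ (V.mkQ b) - b ∈ V := by
      rw [← Submodule.Quotient.mk_eq_zero, ← Submodule.mkQ_apply, map_sub, hσ', sub_self]
    convert V.sub_mem h (h1V (ε (σ (V.mkQ b)))) using 1
    simp only [LinearMap.sub_apply, LinearMap.comp_apply, Algebra.linearMap_apply,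
      AlgHom.toLinearMap_apply]
    ring

/-- If `q` takes values in `I = ker ε`, then `∑ a * q b ≡ q (∑ ε a • b)` modulo `I²`. -/
theorem contr_sub_mem (ε : A →ₐ[k] k) (q : A →ₗ[k] A) (hq : ∀ a, q a ∈ RingHom.ker ε)
    (z : A ⊗[k] A) :
    contr q z - q (TensorProduct.lid k A (ε.toLinearMap.rTensor A z)) ∈ RingHom.ker ε ^ 2 := by
  induction z with
  | zero => simp
  | add z₁ z₂ h₁ h₂ =>
    simp only [map_add]
    convert Ideal.add_mem _ h₁ h₂ using 1; ring
  | tmul a b =>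
    have : a - algebraMap k A (ε a) ∈ RingHom.ker ε := by simp [RingHom.mem_ker]
    have h := Ideal.mul_mem_mul this (hq b)
    rw [← pow_two] at h
    convert h using 1
    simp only [contr_tmul, LinearMap.rTensor_tmul, TensorProduct.lid_tmul, map_smul,
      AlgHom.toLinearMap_apply]
    rw [Algebra.smul_def]; ring

/-- Nilpotent elements lie in all powers of the augmentation ideal. The hypotheses `hl` and `hr` say
that `ε` is a left and a right counit for `δ`; coassociativity plays no role. -/
theorem isNilpotent_mem_pow [CharZero k] {ε : A →ₐ[k] k} {δ : A →ₐ[k] A ⊗[k] A}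
    (hl : ∀ a, TensorProduct.lid k A (ε.toLinearMap.rTensor A (δ a)) = a)
    (hr : ∀ a, contr (Algebra.linearMap k A ∘ₗ ε.toLinearMap) (δ a) = a) (n : ℕ) :
    ∀ x : A, IsNilpotent x → x ∈ RingHom.ker ε ^ n := by
  let : Algebra ℚ A := ((algebraMap k A).comp (algebraMap ℚ k)).toAlgebra
  obtain ⟨V, p', hder, hpI, hpb⟩ := exists_projection ε
  set I := RingHom.ker ε with hI
  let p : A →ₗ[k] A := p' ∘ₗ V.mkQ
  have hp : ∀ b c, p (b * c) = ε b • p c + ε c • p b := fun b c => by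
    simp only [p, LinearMap.comp_apply, hder, map_add, map_smul]
  -- the Euler operator: `E y ≡ n y` modulo `I ^ (n + 1)` for `y ∈ I ^ n`
  let E : A → A := fun a => contr p (δ a)
  have hE : ∀ a b, E (a * b) = a * E b + b * E a := contr_leibniz hr p hp
  have hEadd : ∀ a b, E (a + b) = E a + E b := fun a b => by simp [E]
  have hE1 : ∀ y ∈ I, E y - y ∈ I ^ 2 := fun y hy => by
    have h := contr_sub_mem ε p (fun a => hpI _) (δ y)
    rw [hl] at h
    convert Ideal.add_mem _ h (hpb y hy) using 1
    simp only [p, E, LinearMap.comp_apply]; ring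
  have hE0 : ∀ y, E y ∈ I := fun y => by
    have h := contr_sub_mem ε p (fun a => hpI _) (δ y)
    have h' := Ideal.add_mem _ (Ideal.pow_le_self two_ne_zero h) (hpI (V.mkQ
      (TensorProduct.lid k A (ε.toLinearMap.rTensor A (δ y)))))
    simpa only [p, E, LinearMap.comp_apply, sub_add_cancel] using h'
  have hEn : ∀ n : ℕ, ∀ y ∈ I ^ n, E y - n * y ∈ I ^ (n + 1) := by
    intro n
    induction n with
    | zero => intro y _; simpa using hE0 y
    | succ n ih =>
      intro y hy
      rw [pow_succ] at hy
      refine Submodule.mul_induction_on hy (fun a ha b hb => ?_) (fun a b ha hb => ?_)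
      · have h1 := Ideal.mul_mem_mul ha (hE1 b hb)
        have h2 := Ideal.mul_mem_mul (ih a ha) hb
        rw [← pow_add] at h1
        rw [← pow_succ] at h2
        convert Ideal.add_mem _ h1 h2 using 1
        rw [hE]; push_cast; ring
      · convert Ideal.add_mem _ ha hb using 1
        rw [hEadd]; ring
  have hD : ∀ f : (A ⧸ V) →ₗ[k] k, ∀ x, IsNilpotent x →
      IsNilpotent (contr (Algebra.linearMap k A ∘ₗ f ∘ₗ V.mkQ) (δ x)) := by
    intro f x hx
    refine isNilpotent_of_leibniz
      (fun x => contr (Algebra.linearMap k A ∘ₗ f ∘ₗ V.mkQ) (δ x)) (by simp)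
      (contr_leibniz hr _ fun b c => ?_) hx
    simp only [LinearMap.comp_apply, hder, map_add, map_smul]
  induction n with
  | zero => simp
  | succ n ih =>
    intro x hx
    rcases n with _ | n
    · simpa [hI, RingHom.mem_ker] using (hx.map ε).eq_zero
    have hEx : E x ∈ I ^ (n + 1 + 1) := by
      -- write `E x = ∑ (Dᵢ x) * tᵢ` along a basis `v` of the cotangent space, with `tᵢ = p' (v i)`
      classical
      let v := Module.Basis.ofVectorSpace k (A ⧸ V)
      let z := V.mkQ.lTensor A (δ x)
      let m := TensorProduct.equivFinsuppOfBasisRight v z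
      have hm : ∀ i, m i ∈ I ^ (n + 1) := fun i => by
        have h := ih _ (hD (v.coord i) x hx)
        have h' : ∀ w : A ⊗[k] A, contr (Algebra.linearMap k A ∘ₗ v.coord i ∘ₗ V.mkQ) w =
            TensorProduct.rid k A ((v.coord i).lTensor A (V.mkQ.lTensor A w)) := by
          intro w
          induction w with
          | zero => simp
          | add a b ha hb => simp only [map_add, ha, hb]
          | tmul a b => simp [Algebra.smul_def, mul_comm]
        rw [h'] at h
        rwa [TensorProduct.equivFinsuppOfBasisRight_apply]
      have hz : (m.sum fun i a => a ⊗ₜ[k] v i) = z := by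
        rw [← TensorProduct.equivFinsuppOfBasisRight_symm_apply, LinearEquiv.symm_apply_apply]
      have hEz : E x = LinearMap.mul' k A (p'.lTensor A z) := by
        simp only [E, z, contr, p, LinearMap.lTensor_comp, LinearMap.comp_apply]
      rw [hEz, ← hz, Finsupp.sum, map_sum, map_sum]
      refine Ideal.sum_mem _ fun i _ => ?_
      rw [pow_succ]
      simpa using Ideal.mul_mem_mul (hm i) (hpI (v i))
    have h := Ideal.sub_mem _ hEx (hEn (n + 1) x (ih x hx))
    rw [sub_sub_cancel] at h
    have h' := Ideal.mul_mem_left _ (algebraMap ℚ A ((n + 1 : ℕ) : ℚ)⁻¹) h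
    rwa [← mul_assoc, ← map_natCast (algebraMap ℚ A) (n + 1), ← map_mul, inv_mul_cancel₀
      (by positivity), map_one, one_mul] at h'


/-! ### Local finiteness of coalgebras -/

/-- Every element of a coalgebra over a field lies in the span of the coefficients of a finite
matrix `c` which is comultiplicative in the sense `Δ (c i j) = ∑ l, c l j ⊗ c i l`. -/
theorem exists_matrix_coefficients {k C : Type*} [Field k] [AddCommGroup C] [Module k C]
    [Coalgebra k C] (x : C) :
    ∃ (n : ℕ) (c : Fin n → Fin n → C),
      (∀ i j, comul (R := k) (c i j) = ∑ l, c l j ⊗ₜ[k] c i l) ∧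
      x ∈ Submodule.span k (Set.range fun ij : Fin n × Fin n => c ij.1 ij.2) := by
  classical
  let ev : (C →ₗ[k] k) → (C ⊗[k] C →ₗ[k] C) := fun φ =>
    (TensorProduct.lid k C).toLinearMap ∘ₗ φ.rTensor C
  have ev_tmul : ∀ φ a b, ev φ (a ⊗ₜ b) = φ a • b := fun φ a b => by simp [ev]
  -- `V` is the left coideal generated by `x`.
  let V : Submodule k C := Submodule.span k (Set.range fun φ => ev φ (comul (R := k) x))
  have hfin : Module.Finite k V := by
    obtain ⟨S, hS⟩ := TensorProduct.exists_finset (comul (R := k) x)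
    have hle : V ≤ Submodule.span k (S.image Prod.snd : Set C) := by
      refine Submodule.span_le.2 ?_
      rintro _ ⟨φ, rfl⟩
      simp only [hS, map_sum, ev_tmul]
      exact Submodule.sum_mem _ fun i hi => Submodule.smul_mem _ _
        (Submodule.subset_span (Finset.mem_coe.2 (Finset.mem_image_of_mem _ hi)))
    exact Submodule.finiteDimensional_of_le hle
  have hxV : x ∈ V := Submodule.subset_span ⟨counit, by simp [ev]⟩
  have hstab : ∀ y ∈ V, ∀ ψ, ev ψ (comul (R := k) y) ∈ V := by
    intro y hy ψ
    have : V ≤ V.comap (ev ψ ∘ₗ comul) := by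
      refine Submodule.span_le.2 ?_
      rintro _ ⟨φ, rfl⟩
      let χ : C →ₗ[k] k := LinearMap.mul' k k ∘ₗ TensorProduct.map φ ψ ∘ₗ comul
      refine Submodule.subset_span ⟨χ, ?_⟩
      let G : C ⊗[k] (C ⊗[k] C) →ₗ[k] C :=
        ev ψ ∘ₗ (TensorProduct.lid k (C ⊗[k] C)).toLinearMap ∘ₗ φ.rTensor (C ⊗[k] C)
      have h1 : ev ψ ∘ₗ comul ∘ₗ ev φ = G ∘ₗ comul.lTensor C := by
        ext a b; simp [G, ev_tmul]
      have h2 : ev χ = G ∘ₗ (TensorProduct.assoc k C C C).toLinearMap ∘ₗ comul.rTensor C := by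
        have h3 : ∀ (u : C ⊗[k] C) (b : C), LinearMap.mul' k k (TensorProduct.map φ ψ u) • b =
            G (TensorProduct.assoc k C C C (u ⊗ₜ b)) := by
          intro u b
          induction u with
          | zero => simp
          | add u₁ u₂ h₁ h₂ => simp only [map_add, add_smul, h₁, h₂, TensorProduct.add_tmul]
          | tmul a c => simp [G, ev_tmul, mul_smul]
        ext a b
        simpa [ev_tmul, χ] using h3 (comul a) b
      have h4 := LinearMap.congr_fun h1 (comul x)
      have h5 := LinearMap.congr_fun h2 (comul x)
      simp only [LinearMap.comp_apply, LinearEquiv.coe_coe, coassoc_apply] at h4 h5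
      simp only [LinearMap.comp_apply]
      rw [h5, h4]
    exact this hy
  let v := Module.finBasis k V
  have hrep : ∀ y ∈ V, ∃ c : Fin (Module.finrank k V) → C,
      comul (R := k) y = ∑ i, c i ⊗ₜ[k] (v i : C) := by
    intro y hy
    let b := Module.Basis.ofVectorSpace k C
    let w := TensorProduct.equivFinsuppOfBasisLeft b (comul (R := k) y)
    have hw : ∀ i, w i ∈ V := fun i => by
      have h := hstab y hy (b.coord i)
      rwa [TensorProduct.equivFinsuppOfBasisLeft_apply]
    have hsum : (w.sum fun i a => b i ⊗ₜ[k] a) = comul (R := k) y := by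
      rw [← TensorProduct.equivFinsuppOfBasisLeft_symm_apply, LinearEquiv.symm_apply_apply]
    refine ⟨fun j => ∑ i ∈ w.support, v.repr ⟨w i, hw i⟩ j • b i, ?_⟩
    rw [← hsum, Finsupp.sum]
    simp only [TensorProduct.sum_tmul]
    rw [Finset.sum_comm]
    refine Finset.sum_congr rfl fun i _ => ?_
    have h := congrArg Subtype.val (v.sum_repr ⟨w i, hw i⟩)
    simp only [Submodule.coe_sum, Submodule.coe_smul] at h
    conv_lhs => rw [← h]
    simp only [TensorProduct.tmul_sum, TensorProduct.tmul_smul, TensorProduct.smul_tmul']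
  choose c hc using fun j => hrep (v j) (v j).2
  refine ⟨Module.finrank k V, fun i j => c j i, fun i j => ?_, ?_⟩
  · have h1 := coassoc_apply (R := k) (v j : C)
    rw [hc j] at h1
    simp only [map_sum, LinearMap.rTensor_tmul, LinearMap.lTensor_tmul, hc] at h1
    -- `V.subtype` tensored with `C ⊗ C` stays injective, so coefficients of the `v i` agree.
    let d : Fin (Module.finrank k V) →₀ C ⊗[k] C :=
      Finsupp.equivFunOnFinite.symm fun i => comul (c j i) - ∑ l, c j l ⊗ₜ[k] c l i
    have hd : (d.sum fun i a => a ⊗ₜ[k] v i) = 0 := by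
      have hinj : Function.Injective (V.subtype.lTensor (C ⊗[k] C)) :=
        Module.Flat.lTensor_preserves_injective_linearMap _ V.injective_subtype
      apply hinj
      rw [map_zero, Finsupp.sum_fintype _ _ (by simp)]
      apply (TensorProduct.assoc k C C C).injective
      simp only [map_sum, map_zero, LinearMap.lTensor_tmul, d,
        Finsupp.equivFunOnFinite_symm_apply_apply, TensorProduct.sub_tmul, map_sub,
        Finset.sum_sub_distrib, TensorProduct.sum_tmul, Submodule.subtype_apply,
        TensorProduct.assoc_tmul, h1, TensorProduct.tmul_sum]
      rw [Finset.sum_comm, sub_self]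
    have h0 := TensorProduct.sum_tmul_basis_right_eq_zero v d hd
    have := DFunLike.congr_fun h0 i
    simpa [d, sub_eq_zero] using this
  · suffices h : ∀ j, (v j : C) ∈ Submodule.span k
        (Set.range fun ij : Fin (Module.finrank k V) × Fin (Module.finrank k V) => c ij.2 ij.1) by
      have hx := congrArg Subtype.val (v.sum_repr ⟨x, hxV⟩)
      simp only [Submodule.coe_sum, Submodule.coe_smul] at hx
      rw [← hx]
      exact Submodule.sum_mem _ fun j _ => Submodule.smul_mem _ _ (h j)
    intro j
    have h := congrArg (TensorProduct.rid k C) (lTensor_counit_comul (R := k) (v j : C))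
    rw [hc j] at h
    simp only [map_sum, LinearMap.lTensor_tmul, TensorProduct.rid_tmul, one_smul] at h
    rw [← h]
    exact Submodule.sum_mem _ fun i _ => Submodule.smul_mem _ _
      (Submodule.subset_span ⟨(i, j), rfl⟩)


/-! ### Vanishing near the identity -/

/-- A nilpotent element of a commutative bialgebra in characteristic `0` vanishes in a neighbourhood
of the identity: it is killed by `1 - r` for some `r` in the augmentation ideal. -/
theorem exists_mul_eq_self {k H : Type*} [Field k] [CharZero k] [CommRing H] [Bialgebra k H]
    {x : H} (hx : IsNilpotent x) : ∃ r : H, counit (R := k) r = 0 ∧ r * x = x := by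
  obtain ⟨n, c, hc, hxc⟩ := exists_matrix_coefficients (k := k) x
  let s : Set H := Set.range fun ij : Fin n × Fin n => c ij.1 ij.2
  let A : Subalgebra k H := Algebra.adjoin k s
  have hxA : x ∈ A := Algebra.span_le_adjoin k s hxc
  have hcA : ∀ i j, c i j ∈ A := fun i j => Algebra.subset_adjoin ⟨(i, j), rfl⟩
  have : Algebra.FiniteType k A :=
    A.fg_iff_finiteType.1 (Subalgebra.fg_def.2 ⟨s, Set.finite_range _, rfl⟩)
  have : IsNoetherianRing A := Algebra.FiniteType.isNoetherianRing k A
  let J : A ⊗[k] A →ₐ[k] H ⊗[k] H := Algebra.TensorProduct.map A.val A.val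
  have hJ : Function.Injective J := by
    have := Module.Flat.lTensor_preserves_injective_linearMap (M := H) A.val.toLinearMap
      Subtype.val_injective
    have h2 := Module.Flat.rTensor_preserves_injective_linearMap (M := A) A.val.toLinearMap
      Subtype.val_injective
    have h3 : (J : A ⊗[k] A → H ⊗[k] H) =
        A.val.toLinearMap.lTensor H ∘ A.val.toLinearMap.rTensor A := by
      rw [← LinearMap.coe_comp, LinearMap.lTensor_comp_rTensor]; rfl
    rw [h3]
    exact this.comp h2
  have hrange : ∀ a : A, Bialgebra.comulAlgHom k H a ∈ J.range := by
    have : A ≤ J.range.comap (Bialgebra.comulAlgHom k H) := by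
      refine Algebra.adjoin_le ?_
      rintro _ ⟨⟨i, j⟩, rfl⟩
      refine ⟨∑ l, (⟨c l j, hcA l j⟩ : A) ⊗ₜ[k] (⟨c i l, hcA i l⟩ : A), ?_⟩
      simp [J, hc]
    exact fun a => this a.2
  -- the comultiplication restricted to `A`
  let δ : A →ₐ[k] A ⊗[k] A := (AlgEquiv.ofInjective J hJ).symm.toAlgHom.comp
    (((Bialgebra.comulAlgHom k H).comp A.val).codRestrict J.range hrange)
  have hδ : ∀ a : A, J (δ a) = comul (R := k) (a : H) := fun a =>
    congrArg Subtype.val ((AlgEquiv.ofInjective J hJ).apply_symm_apply _)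
  let ε : A →ₐ[k] k := (Bialgebra.counitAlgHom k H).comp A.val
  have hl : ∀ a, TensorProduct.lid k A (ε.toLinearMap.rTensor A (δ a)) = a := fun a => by
    apply Subtype.val_injective
    have h1 : ∀ z : A ⊗[k] A, (TensorProduct.lid k A (ε.toLinearMap.rTensor A z) : H) =
        TensorProduct.lid k H ((counit (R := k)).rTensor H (J z)) := by
      intro z
      induction z with
      | zero => simp
      | add z₁ z₂ h₁ h₂ => simp only [map_add, Subalgebra.coe_add, h₁, h₂]
      | tmul a b => simp [J, ε]
    rw [h1, hδ]; simp
  have hr : ∀ a, contr (Algebra.linearMap k A ∘ₗ ε.toLinearMap) (δ a) = a := fun a => by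
    apply Subtype.val_injective
    have h1 : ∀ z : A ⊗[k] A, (contr (Algebra.linearMap k A ∘ₗ ε.toLinearMap) z : H) =
        TensorProduct.rid k H ((counit (R := k)).lTensor H (J z)) := by
      intro z
      induction z with
      | zero => simp
      | add z₁ z₂ h₁ h₂ => simp only [map_add, Subalgebra.coe_add, h₁, h₂]
      | tmul a b => simp [J, ε, Algebra.smul_def, mul_comm]
    rw [h1, hδ]; simp
  have hxA' : IsNilpotent (⟨x, hxA⟩ : A) :=
    (IsNilpotent.map_iff (f := A.val) Subtype.val_injective).1 hx
  obtain ⟨r, hr⟩ := ((RingHom.ker ε).mem_iInf_smul_pow_eq_bot_iff (⟨x, hxA⟩ : A)).1 <| by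
    simpa [Submodule.mem_iInf] using fun i => isNilpotent_mem_pow hl hr i _ hxA'
  exact ⟨(r : A), r.2, congrArg Subtype.val hr⟩

end CartierReduced

/-! ### Translation to an arbitrary point -/

/-- (Cartier) A commutative Hopf algebra over a field of characteristic 0 is reduced. -/
theorem commutative_hopfAlgebra_isReduced (k : Type*) [Field k] [CharZero k]
    (H : Type*) [CommRing H] [HopfAlgebra k H] :
    IsReduced H := by
  classical
  refine ⟨fun x hx => ?_⟩
  by_contra hx0
  let N : Ideal H := Ideal.span {x} |>.annihilator
  have hN : ∀ h, h ∈ N ↔ h * x = 0 := fun h => by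
    simp [N]
  obtain ⟨P, hP, hNP⟩ := N.exists_le_maximal fun h => hx0 <| by
    simpa using (hN 1).1 (h ▸ Submodule.mem_top)
  let K := H ⧸ P
  let : Field K := Ideal.Quotient.field P
  have : CharZero K := charZero_of_injective_algebraMap (algebraMap k K).injective
  let g : H →ₐ[k] K := Ideal.Quotient.mkₐ k P
  let gS : H →ₐ[k] K := g.comp (HopfAlgebra.antipodeAlgHom k H)
  let Δ : H →ₐ[k] H ⊗[k] H := Bialgebra.comulAlgHom k H
  -- translation by the `K`-point `g`, and by its inverse `g ∘ S`
  let τ : H →ₐ[k] K ⊗[k] H := (Algebra.TensorProduct.map g (AlgHom.id k H)).comp Δ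
  let τ' : K ⊗[k] H →ₐ[K] K ⊗[k] H := Algebra.TensorProduct.lift
    (Algebra.ofId K (K ⊗[k] H)) ((Algebra.TensorProduct.map gS (AlgHom.id k H)).comp Δ)
    (fun _ _ => Commute.all _ _)
  -- evaluation at the point `g`
  let ev : K ⊗[k] H →ₐ[K] K := Algebra.TensorProduct.lift (AlgHom.id K K) g
    (fun _ _ => Commute.all _ _)
  have hττ : ∀ h, τ' (τ h) = 1 ⊗ₜ h := by
    intro h
    -- `a ⊗ b ⊗ c ↦ g a * g (S b) ⊗ c`, through which coassociativity enters
    let M : H ⊗[k] (H ⊗[k] H) →ₗ[k] K ⊗[k] H :=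
      TensorProduct.map (LinearMap.mul' k K ∘ₗ TensorProduct.map g.toLinearMap gS.toLinearMap)
        LinearMap.id ∘ₗ (TensorProduct.assoc k H H H).symm.toLinearMap
    have h1 : ∀ z : H ⊗[k] H, τ' (Algebra.TensorProduct.map g (AlgHom.id k H) z) =
        M ((comul (R := k)).lTensor H z) := by
      intro z
      induction z with
      | zero => simp
      | add z₁ z₂ h₁ h₂ => simp only [map_add, h₁, h₂]
      | tmul a b =>
        have h2 : ∀ w : H ⊗[k] H,
            (g a ⊗ₜ[k] (1 : H)) * Algebra.TensorProduct.map gS (AlgHom.id k H) w =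
              M (a ⊗ₜ w) := by
          intro w
          induction w with
          | zero => simp
          | add z₁ z₂ h₁ h₂ => simp only [map_add, mul_add, TensorProduct.tmul_add, h₁, h₂]
          | tmul b c => simp [M]
        simpa [τ', Δ, Algebra.ofId_apply, Algebra.TensorProduct.algebraMap_apply]
          using h2 (comul b)
    have h3 : ∀ a : H, LinearMap.mul' k K (TensorProduct.map g.toLinearMap gS.toLinearMap
        (comul (R := k) a)) = algebraMap k K (counit (R := k) a) := by
      intro a
      have h4 : ∀ w : H ⊗[k] H,
          LinearMap.mul' k K (TensorProduct.map g.toLinearMap gS.toLinearMap w) =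
          g (LinearMap.mul' k H ((HopfAlgebra.antipode k).lTensor H w)) := by
        intro w
        induction w with
        | zero => simp
        | add z₁ z₂ h₁ h₂ => simp only [map_add, h₁, h₂]
        | tmul b c => simp [gS]
      rw [h4, HopfAlgebra.mul_antipode_lTensor_comul_apply, AlgHom.commutes]
    have h5 : ∀ z : H ⊗[k] H, M (TensorProduct.assoc k H H H ((comul (R := k)).rTensor H z)) =
        TensorProduct.map (Algebra.linearMap k K) LinearMap.id
          ((counit (R := k)).rTensor H z) := by
      intro z
      induction z with
      | zero => simp
      | add z₁ z₂ h₁ h₂ => simp only [map_add, h₁, h₂]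
      | tmul a b => simp [M, h3]
    have h6 := h1 (comul (R := k) h)
    rw [← coassoc_apply, h5, rTensor_counit_comul] at h6
    simpa [τ, Δ] using h6
  have hev : ∀ z, ev (τ' z) = counit (R := K) z := by
    have h1 : ∀ w : H ⊗[k] H, ev (Algebra.TensorProduct.map gS (AlgHom.id k H) w) =
        g (LinearMap.mul' k H ((HopfAlgebra.antipode k).rTensor H w)) := by
      intro w
      induction w with
      | zero => simp
      | add z₁ z₂ h₁ h₂ => simp only [map_add, h₁, h₂]
      | tmul b c => simp [ev, gS]
    suffices h : ev.comp τ' = Bialgebra.counitAlgHom K (K ⊗[k] H) from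
      fun z => AlgHom.congr_fun h z
    ext h
    have h2 := h1 (comul h)
    rw [HopfAlgebra.mul_antipode_rTensor_comul_apply, AlgHom.commutes] at h2
    simpa [τ', Δ, Algebra.algebraMap_eq_smul_one] using h2
  obtain ⟨r, hr0, hr⟩ := CartierReduced.exists_mul_eq_self (k := K) (hx.map τ)
  let u := τ' (1 - r)
  have hu : u * (1 ⊗ₜ x) = 0 := by
    rw [← hττ, ← map_mul, sub_mul, hr, one_mul, sub_self, map_zero]
  have hevu : ev u = 1 := by
    rw [hev, map_sub, hr0, sub_zero]; exact Bialgebra.counit_one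
  let b := Module.Basis.ofVectorSpace k K
  obtain ⟨w, hw⟩ := TensorProduct.eq_repr_basis_left b u
  have hwN : ∀ i, w i ∈ N := fun i => by
    rw [hN]
    have h0 : ((w.mapRange (· * x) (zero_mul x)).sum fun i a => b i ⊗ₜ[k] a) = 0 := by
      rw [← hu, ← hw, Finsupp.sum_mapRange_index (by simp), Finsupp.sum, Finsupp.sum,
        Finset.sum_mul]
      simp
    simpa using DFunLike.congr_fun (TensorProduct.sum_tmul_basis_left_eq_zero b _ h0) i
  apply one_ne_zero (α := K)
  rw [← hevu, ← hw, Finsupp.sum, map_sum]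
  refine Finset.sum_eq_zero fun i _ => ?_
  have : g (w i) = 0 := Ideal.Quotient.eq_zero_iff_mem.2 (hNP (hwN i))
  simp [ev, this]
end
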